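/- arXiv:2311.12609 — 4 statements merged into one kernel-verified Lean document; each statement's English description precedes it below -/
import Mathlib

section
/- There exists a stationary Walrand–Varaiya type encoder policy γ* ∈ Γ_WS that is optimal for the average cost zero-delay coding problem: J(π₀, γ*) = J*(π₀) for every initial distribution π₀ ∈ P(𝕏). -/
/-!
The problem is a Markov decision process whose state is the predictor. It is convenient to let the
state be an unnormalised measure `μ` on the source alphabet, the joint law of `X_t` with a fixed
channel history. The dynamic programming operator then reads
`V ↦ min_Q ∑_q (min_x̂ ∑_x μ_q(x) d(x, x̂) + V (μ_q K))` with `μ_q` the restriction of `μ` to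
`Q⁻¹(q)`, and the `n`-stage values `val n` are positively homogeneous and superadditive.

* Superadditivity shows that splitting `μ` by a randomised quantizer is no better than by a
  deterministic one (`dp_le_split`). Encoders using the whole source past act as randomised
  quantizers, so any encoder and decoder pay at least `val T π₀` over `T` stages (`val_le_cost`).
* A randomised quantizer can also imitate, from one initial law, the optimal policy of another.
  Since `K` is primitive, the two laws merge geometrically fast, and `val n` varies over
  probability vectors by at most a constant independent of `n` (`val_coupling`, `exists_span`).
* Hence `n ↦ val n π` is additive up to a bounded error, and Fekete's lemma gives a constant `ρ`
  with `val n π = n ρ + O(1)` uniformly in `π` (`exists_gain`). So every policy has average cost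
  at least `ρ`.
* The function `g = liminf (val n - n ρ)` is bounded and satisfies the optimality inequality
  `min_Q ∑_q (…) ≤ ρ + g` (`exists_relative_value`). The equality is not needed: the stationary
  policy choosing a minimising `Q`, with the decoder that is optimal at each time, has cost at most
  `T ρ + O(1)` over `T` stages by telescoping (`exists_dec_cost_le`), hence average cost at most `ρ`.

Both bounds give `ρ`, for every initial distribution.
-/

open Filter MeasureTheory Finset Set Topology

section FiniteCore

variable {X M Xhat : Type*}

/-- An encoder (quantization) policy: at time `t` it maps past channel symbols and the
source samples up to time `t` to a channel symbol. -/
def EncPolicy (X M : Type*) :=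
  (t : ℕ) → (Fin t → M) → (Fin (t + 1) → X) → M

/-- A decoder policy: at time `t` it maps the channel symbols up to time `t` to a
reproduction symbol. -/
def DecPolicy (M Xhat : Type*) :=
  (t : ℕ) → (Fin (t + 1) → M) → Xhat

/-- The channel symbols produced by an encoder policy along a source path. -/
def qSeq (γ : EncPolicy X M) (x : ℕ → X) : ℕ → M
  | t => γ t (fun i => qSeq γ x i.val) (fun i => x i.val)
termination_by t => t
decreasing_by exact i.isLt

/-- Extension of a finite source path to an infinite one (by an arbitrary constant). -/
noncomputable def extPath [Nonempty X] (t : ℕ) (x : Fin (t + 1) → X) : ℕ → X :=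
  fun s => if h : s < t + 1 then x ⟨s, h⟩ else Classical.arbitrary X

/-- Probability of a finite source path under initial distribution `π₀` and
transition matrix `K`. -/
def pathProb [Fintype X] (K : X → X → ℝ) (π₀ : X → ℝ) (t : ℕ) (x : Fin (t + 1) → X) : ℝ :=
  π₀ (x 0) * ∏ i : Fin t, K (x i.castSucc) (x i.succ)

/-- Expected distortion `E[d(X_t, X̂_t)]` at time `t`. -/
noncomputable def expDist [Fintype X] [Nonempty X] (K : X → X → ℝ) (π₀ : X → ℝ)
    (d : X → Xhat → ℝ) (γ : EncPolicy X M) (δ : DecPolicy M Xhat) (t : ℕ) : ℝ :=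
  ∑ x : Fin (t + 1) → X, pathProb K π₀ t x *
    d (x (Fin.last t)) (δ t (fun i => qSeq γ (extPath t x) i.val))

/-- Long-run average distortion of an encoder/decoder pair. -/
noncomputable def avgCost [Fintype X] [Nonempty X] (K : X → X → ℝ) (π₀ : X → ℝ)
    (d : X → Xhat → ℝ) (γ : EncPolicy X M) (δ : DecPolicy M Xhat) : ℝ :=
  Filter.limsup (fun T : ℕ => (∑ t ∈ Finset.range T, expDist K π₀ d γ δ t) / (T : ℝ))
    Filter.atTop

/-- Discounted distortion of an encoder/decoder pair. -/
noncomputable def discCost [Fintype X] [Nonempty X] (β : ℝ) (K : X → X → ℝ) (π₀ : X → ℝ)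
    (d : X → Xhat → ℝ) (γ : EncPolicy X M) (δ : DecPolicy M Xhat) : ℝ :=
  ∑' t : ℕ, β ^ t * expDist K π₀ d γ δ t

/-- Average distortion of an encoder policy, under optimal decoding. -/
noncomputable def avgJ [Fintype X] [Nonempty X] (K : X → X → ℝ) (π₀ : X → ℝ)
    (d : X → Xhat → ℝ) (γ : EncPolicy X M) : ℝ :=
  ⨅ δ : DecPolicy M Xhat, avgCost K π₀ d γ δ

/-- Optimal average distortion over all encoder policies. -/
noncomputable def avgJstar (M : Type*) [Fintype X] [Nonempty X] (K : X → X → ℝ) (π₀ : X → ℝ)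
    (d : X → Xhat → ℝ) : ℝ :=
  ⨅ γ : EncPolicy X M, avgJ K π₀ d γ

/-- Discounted distortion of an encoder policy, under optimal decoding. -/
noncomputable def discJ [Fintype X] [Nonempty X] (β : ℝ) (K : X → X → ℝ) (π₀ : X → ℝ)
    (d : X → Xhat → ℝ) (γ : EncPolicy X M) : ℝ :=
  ⨅ δ : DecPolicy M Xhat, discCost β K π₀ d γ δ

/-- Optimal discounted distortion over all encoder policies. -/
noncomputable def discJstar (M : Type*) [Fintype X] [Nonempty X] (β : ℝ) (K : X → X → ℝ)
    (π₀ : X → ℝ) (d : X → Xhat → ℝ) : ℝ :=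
  ⨅ γ : EncPolicy X M, discJ β K π₀ d γ

/-- `t`-step transition probabilities of the source. -/
def Kpow [Fintype X] [DecidableEq X] (K : X → X → ℝ) : ℕ → X → X → ℝ
  | 0 => fun x y => if x = y then 1 else 0
  | t + 1 => fun x y => ∑ z, K x z * Kpow K t z y

/-- `K` is a stochastic (Markov transition) matrix. -/
def IsMarkovMatrix [Fintype X] (K : X → X → ℝ) : Prop :=
  ∀ x, (∀ y, 0 ≤ K x y) ∧ ∑ y, K x y = 1

/-- Primitivity of a transition matrix; for finite chains this is equivalent to
irreducibility together with aperiodicity. -/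
def IsPrimitiveMat [Fintype X] [DecidableEq X] (K : X → X → ℝ) : Prop :=
  ∃ t : ℕ, ∀ x y, 0 < Kpow K t x y

/-- `ζ` is an invariant distribution of the source. -/
def IsInvariantDist [Fintype X] (K : X → X → ℝ) (ζ : X → ℝ) : Prop :=
  ζ ∈ stdSimplex ℝ X ∧ ∀ y, ∑ x, ζ x * K x y = ζ y

/-- Predictor update `π_{t+1}` from `π_t`, the quantizer `Q_t` and symbol `q_t`
(Bayesian update followed by one-step prediction). -/
noncomputable def nextPred [Fintype X] [DecidableEq M] (K : X → X → ℝ) (π : X → ℝ)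
    (Q : X → M) (q : M) : X → ℝ :=
  fun x' => (∑ x ∈ Finset.univ.filter (fun x => Q x = q), K x x' * π x) /
    (∑ x ∈ Finset.univ.filter (fun x => Q x = q), π x)

/-- The predictor as a function of the past channel symbols, under the stationary
Walrand–Varaiya policy `γws` with initial distribution `π₀`. -/
noncomputable def predOfHist [Fintype X] [DecidableEq M] (K : X → X → ℝ)
    (γws : (X → ℝ) → X → M) (π₀ : X → ℝ) : (t : ℕ) → (Fin t → M) → X → ℝ
  | 0, _ => π₀
  | t + 1, qs =>
      nextPred K (predOfHist K γws π₀ t fun i => qs i.castSucc)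
        (γws (predOfHist K γws π₀ t fun i => qs i.castSucc)) (qs (Fin.last t))

/-- The encoder policy induced by a stationary Walrand–Varaiya policy `γws`. -/
noncomputable def wsEncoder [Fintype X] [DecidableEq M] (K : X → X → ℝ)
    (γws : (X → ℝ) → X → M) (π₀ : X → ℝ) : EncPolicy X M :=
  fun t qs xs => γws (predOfHist K γws π₀ t qs) (xs (Fin.last t))

/-- The per-stage cost `c(π,Q)` (expected distortion under optimal decoding). -/
noncomputable def costC [Fintype X] [Fintype M] [DecidableEq M] [Fintype Xhat] [Nonempty Xhat]
    (d : X → Xhat → ℝ) (π : X → ℝ) (Q : X → M) : ℝ :=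
  ∑ q : M, Finset.univ.inf' Finset.univ_nonempty
    (fun xh : Xhat => ∑ x ∈ Finset.univ.filter (fun x => Q x = q), π x * d x xh)

/-- The uniform grid `P_n(𝕏)` in the probability simplex. -/
def Pgrid [Fintype X] (n : ℕ) : Set (X → ℝ) :=
  {p | p ∈ stdSimplex ℝ X ∧ ∀ x, ∃ k : ℕ, p x = (k : ℝ) / n}

/-- Euclidean distance on distributions. -/
noncomputable def eudist [Fintype X] (p q : X → ℝ) : ℝ :=
  Real.sqrt (∑ x, (p x - q x) ^ 2)

/-- `nn` is a Euclidean nearest-neighbor map onto `P_n(𝕏)`. -/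
def IsNN [Fintype X] (n : ℕ) (nn : (X → ℝ) → X → ℝ) : Prop :=
  ∀ π ∈ stdSimplex ℝ X, nn π ∈ Pgrid n ∧ ∀ p ∈ Pgrid n, eudist π (nn π) ≤ eudist π p

/-- Total variation distance (in its `ℓ¹` form) on a finite alphabet. -/
def tvDist [Fintype X] (p q : X → ℝ) : ℝ := ∑ x, |p x - q x|

end FiniteCore

namespace ZeroDelay

set_option linter.unusedSectionVars false

section DynamicProgram

variable {X M Xhat : Type*} [Fintype X] [Nonempty X] [DecidableEq X]
  [Fintype M] [Nonempty M] [DecidableEq M] [Fintype Xhat] [Nonempty Xhat]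

/-! ### Operations on unnormalised measures -/

/-- Total mass of an unnormalised measure on the source alphabet. -/
def mass (μ : X → ℝ) : ℝ := ∑ x, μ x

/-- The measure `μ K`, i.e. one step of the source started from `μ`. -/
def push (K : X → X → ℝ) (μ : X → ℝ) : X → ℝ := fun y => ∑ x, K x y * μ x

/-- The restriction of `μ` to the quantizer cell `Q⁻¹(q)`. -/
def restr (Q : X → M) (q : M) (μ : X → ℝ) : X → ℝ := fun x => if Q x = q then μ x else 0

/-- Smallest expected distortion when the decoder only knows that the source symbol has
(unnormalised) law `μ`. -/
noncomputable def stage (d : X → Xhat → ℝ) (μ : X → ℝ) : ℝ :=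
  Finset.univ.inf' Finset.univ_nonempty (fun xh : Xhat => ∑ x, μ x * d x xh)

/-- Cost of a branch on which the posterior is `μ`: the distortion now, plus the
continuation cost `V` at the next predictor. -/
noncomputable def branch (K : X → X → ℝ) (d : X → Xhat → ℝ) (V : (X → ℝ) → ℝ) (μ : X → ℝ) : ℝ :=
  stage d μ + V (push K μ)

variable (M) in
/-- Dynamic programming operator of the zero-delay coding problem on unnormalised measures:
the best quantizer for the predictor `μ` when the continuation cost is `V`. -/
noncomputable def dp (K : X → X → ℝ) (d : X → Xhat → ℝ) (V : (X → ℝ) → ℝ) (μ : X → ℝ) : ℝ :=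
  Finset.univ.inf' Finset.univ_nonempty
    (fun Q : X → M => ∑ q, branch K d V (restr Q q μ))

variable (M) in
/-- Value function of the `n`-stage problem. -/
noncomputable def val (K : X → X → ℝ) (d : X → Xhat → ℝ) : ℕ → (X → ℝ) → ℝ
  | 0 => fun _ => 0
  | n + 1 => dp M K d (val K d n)

variable {K : X → X → ℝ} {d : X → Xhat → ℝ}

lemma mass_add (μ ν : X → ℝ) : mass (μ + ν) = mass μ + mass ν := by
  simp [mass, Finset.sum_add_distrib]

lemma mass_smul (c : ℝ) (μ : X → ℝ) : mass (c • μ) = c * mass μ := by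
  simp [mass, Finset.mul_sum]

lemma mass_nonneg {μ : X → ℝ} (h : 0 ≤ μ) : 0 ≤ mass μ :=
  Finset.sum_nonneg fun x _ => h x

lemma eq_zero_of_mass {μ : X → ℝ} (h : 0 ≤ μ) (h0 : mass μ = 0) : μ = 0 := by
  funext x
  exact (Finset.sum_eq_zero_iff_of_nonneg (fun x _ => h x)).1 h0 x (Finset.mem_univ x)

lemma push_add (μ ν : X → ℝ) : push K (μ + ν) = push K μ + push K ν := by
  funext y; simp [push, mul_add, Finset.sum_add_distrib]

lemma push_smul (c : ℝ) (μ : X → ℝ) : push K (c • μ) = c • push K μ := by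
  funext y; simp only [push, Pi.smul_apply, smul_eq_mul, Finset.mul_sum]
  exact Finset.sum_congr rfl fun x _ => by ring

lemma push_nonneg (hK : IsMarkovMatrix K) {μ : X → ℝ} (h : 0 ≤ μ) : 0 ≤ push K μ :=
  fun y => Finset.sum_nonneg fun x _ => mul_nonneg ((hK x).1 y) (h x)

lemma mass_push (hK : IsMarkovMatrix K) (μ : X → ℝ) : mass (push K μ) = mass μ := by
  simp only [mass, push]
  rw [Finset.sum_comm]
  refine Finset.sum_congr rfl fun x _ => ?_
  rw [← Finset.sum_mul, (hK x).2, one_mul]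

lemma restr_add (Q : X → M) (q : M) (μ ν : X → ℝ) :
    restr Q q (μ + ν) = restr Q q μ + restr Q q ν := by
  funext x; simp only [restr, Pi.add_apply]; split_ifs <;> simp

lemma restr_smul (Q : X → M) (q : M) (c : ℝ) (μ : X → ℝ) :
    restr Q q (c • μ) = c • restr Q q μ := by
  funext x; simp [restr]

lemma restr_nonneg (Q : X → M) (q : M) {μ : X → ℝ} (h : 0 ≤ μ) : 0 ≤ restr Q q μ := by
  intro x; simp only [restr]; split_ifs
  · exact h x
  · exact le_rfl

lemma sum_restr (Q : X → M) (μ : X → ℝ) : ∑ q, restr Q q μ = μ := by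
  funext x; simp [restr, Finset.sum_apply]

lemma sum_mass_restr (Q : X → M) (μ : X → ℝ) : ∑ q, mass (restr Q q μ) = mass μ := by
  simp only [mass]
  rw [Finset.sum_comm]
  refine Finset.sum_congr rfl fun x _ => ?_
  simp [restr]

lemma iter_smul (j : ℕ) (c : ℝ) (μ : X → ℝ) :
    (push K)^[j] (c • μ) = c • (push K)^[j] μ := by
  induction j generalizing μ with
  | zero => rfl
  | succ j ih => simp only [Function.iterate_succ_apply, push_smul, ih]

lemma iter_nonneg (hK : IsMarkovMatrix K) (j : ℕ) {μ : X → ℝ} (h : 0 ≤ μ) :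
    0 ≤ (push K)^[j] μ := by
  induction j generalizing μ with
  | zero => exact h
  | succ j ih => exact ih (push_nonneg hK h)

lemma mass_iter (hK : IsMarkovMatrix K) (j : ℕ) (μ : X → ℝ) :
    mass ((push K)^[j] μ) = mass μ := by
  induction j generalizing μ with
  | zero => rfl
  | succ j ih => rw [Function.iterate_succ_apply, ih, mass_push hK]

lemma iter_eq_Kpow (j : ℕ) (μ : X → ℝ) (y : X) :
    (push K)^[j] μ y = ∑ x, Kpow K j x y * μ x := by
  induction j generalizing μ with
  | zero => simp [Kpow]
  | succ j ih =>
    rw [Function.iterate_succ_apply, ih]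
    simp only [push, Kpow, Finset.mul_sum, Finset.sum_mul]
    rw [Finset.sum_comm]
    exact Finset.sum_congr rfl fun x _ => Finset.sum_congr rfl fun z _ => by ring

/-! ### Concavity and randomised quantizers -/

/-- Positively homogeneous and superadditive, hence concave, functionals of measures. -/
structure Conc (V : (X → ℝ) → ℝ) : Prop where
  hom : ∀ c : ℝ, 0 ≤ c → ∀ μ, V (c • μ) = c * V μ
  sup : ∀ μ ν, V μ + V ν ≤ V (μ + ν)

lemma Conc.zero {V : (X → ℝ) → ℝ} (h : Conc V) : V 0 = 0 := by
  simpa using h.hom 0 le_rfl 0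

lemma Conc.sum_le {V : (X → ℝ) → ℝ} (h : Conc V) {ι : Type*} (s : Finset ι)
    (w : ι → ℝ) (hw : ∀ i, 0 ≤ w i) (μ : ι → X → ℝ) :
    ∑ i ∈ s, w i * V (μ i) ≤ V (∑ i ∈ s, w i • μ i) := by
  classical
  induction s using Finset.induction_on with
  | empty => simp [h.zero]
  | insert a s ha ih =>
    rw [Finset.sum_insert ha, Finset.sum_insert ha]
    refine le_trans ?_ (h.sup _ _)
    rw [h.hom _ (hw a)]
    linarith

/-- Minima of finitely many concave homogeneous functionals are again such. -/
lemma conc_inf' {X ι : Type*} [Fintype ι] [Nonempty ι] {f : ι → (X → ℝ) → ℝ}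
    (hf : ∀ i, Conc (f i)) :
    Conc (fun μ => Finset.univ.inf' Finset.univ_nonempty (fun i => f i μ)) where
  hom c hc μ := by
    apply le_antisymm
    · obtain ⟨i, -, hi⟩ := Finset.exists_mem_eq_inf' Finset.univ_nonempty (fun i => f i μ)
      rw [hi, ← (hf i).hom c hc]
      exact Finset.inf'_le _ (Finset.mem_univ i)
    · refine Finset.le_inf' _ _ fun i _ => ?_
      rw [(hf i).hom c hc]
      exact mul_le_mul_of_nonneg_left (Finset.inf'_le _ (Finset.mem_univ i)) hc
  sup μ ν := by
    refine Finset.le_inf' _ _ fun i _ => le_trans ?_ ((hf i).sup μ ν)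
    exact add_le_add (Finset.inf'_le _ (Finset.mem_univ i)) (Finset.inf'_le _ (Finset.mem_univ i))

lemma conc_stage (d : X → Xhat → ℝ) : Conc (stage d) := by
  refine conc_inf' (f := fun xh μ => ∑ x, μ x * d x xh) fun xh => ⟨fun c _ μ => ?_, fun μ ν => ?_⟩
  · simp [Finset.mul_sum, mul_assoc]
  · simp [add_mul, Finset.sum_add_distrib]

lemma conc_branch {V : (X → ℝ) → ℝ} (h : Conc V) : Conc (branch K d V) where
  hom c hc μ := by
    simp only [branch, push_smul, (conc_stage d).hom c hc, h.hom c hc]; ring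
  sup μ ν := by
    simp only [branch, push_add]
    linarith [(conc_stage d).sup μ ν, h.sup (push K μ) (push K ν)]

lemma conc_dp {V : (X → ℝ) → ℝ} (h : Conc V) : Conc (dp M K d V) := by
  refine conc_inf' (f := fun Q μ => ∑ q, branch K d V (restr Q q μ))
    fun Q => ⟨fun c hc μ => ?_, fun μ ν => ?_⟩
  · simp only [restr_smul, (conc_branch h).hom c hc, Finset.mul_sum]
  · simp only [restr_add, ← Finset.sum_add_distrib]
    exact Finset.sum_le_sum fun q _ => (conc_branch h).sup _ _

lemma conc_val (n : ℕ) : Conc (val M K d n) := by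
  induction n with
  | zero => exact ⟨fun c _ μ => by simp [val], fun μ ν => by simp [val]⟩
  | succ n ih => exact conc_dp ih

/-- Randomised quantizers do not beat deterministic ones: any splitting of `∑ q, l q` into
nonnegative pieces `l q` costs at least the dynamic programming value. The splitting is the
mean of the deterministic splittings under the random quantizer whose values `Q x` are
drawn independently with probabilities `l q x / ∑ q', l q' x`. -/
lemma dp_le_split {V : (X → ℝ) → ℝ} (h : Conc V) (l : M → X → ℝ) (hl : ∀ q, 0 ≤ l q) :
    dp M K d V (∑ q, l q) ≤ ∑ q, branch K d V (l q) := by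
  set μ : X → ℝ := ∑ q, l q with hμ
  have hμx : ∀ x, μ x = ∑ q, l q x := fun x => by simp [hμ, Finset.sum_apply]
  obtain ⟨r, hr0, hr1, hrl⟩ : ∃ r : X → M → ℝ, (∀ x q, 0 ≤ r x q) ∧ (∀ x, ∑ q, r x q = 1) ∧
      ∀ x q, l q x = r x q * μ x := by
    refine ⟨fun x q => if μ x = 0 then (Fintype.card M : ℝ)⁻¹ else l q x / μ x, ?_, ?_, ?_⟩
    · intro x q
      dsimp only
      split_ifs with h0
      · positivity
      · exact div_nonneg (hl q x) (by rw [hμx]; exact Finset.sum_nonneg fun q _ => hl q x)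
    · intro x
      dsimp only
      split_ifs with h0
      · simp
      · rw [← Finset.sum_div, ← hμx, div_self h0]
    · intro x q
      dsimp only
      split_ifs with h0
      · rw [h0, mul_zero]
        rw [hμx] at h0
        exact (Finset.sum_eq_zero_iff_of_nonneg (fun q _ => hl q x)).1 h0 q (Finset.mem_univ q)
      · rw [div_mul_cancel₀ _ h0]
  set w : (X → M) → ℝ := fun Q => ∏ x, r x (Q x) with hw
  have hw0 : ∀ Q, 0 ≤ w Q := fun Q => Finset.prod_nonneg fun x _ => hr0 x _
  have hw1 : ∑ Q, w Q = 1 := by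
    rw [hw, ← Fintype.prod_sum]; simp [hr1]
  have hmarg : ∀ x₀ q, ∑ Q : X → M, (if Q x₀ = q then w Q else 0) = r x₀ q := by
    intro x₀ q
    have e : ∀ Q : X → M, (if Q x₀ = q then w Q else 0) =
        ∏ x, (r x (Q x) * if x = x₀ then (if Q x = q then 1 else 0) else 1) := by
      intro Q
      rw [Finset.prod_mul_distrib, Finset.prod_ite_eq']
      simp [hw]
    simp only [e]
    rw [← Fintype.prod_sum (fun x q' => r x q' * if x = x₀ then (if q' = q then 1 else 0) else 1)]
    rw [Finset.prod_eq_single x₀]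
    · simp
    · intro x _ hx; simp [hx, hr1]
    · simp
  have hmean : ∀ q, l q = ∑ Q : X → M, w Q • restr Q q μ := by
    intro q; funext x
    rw [hrl, ← hmarg x q, Finset.sum_apply, Finset.sum_mul]
    refine Finset.sum_congr rfl fun Q _ => ?_
    simp only [restr, Pi.smul_apply, smul_eq_mul]
    split_ifs <;> simp
  calc dp M K d V μ = ∑ Q : X → M, w Q * dp M K d V μ := by rw [← Finset.sum_mul, hw1, one_mul]
    _ ≤ ∑ Q : X → M, w Q * ∑ q, branch K d V (restr Q q μ) :=
        Finset.sum_le_sum fun Q _ => mul_le_mul_of_nonneg_left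
          (Finset.inf'_le _ (Finset.mem_univ Q)) (hw0 Q)
    _ = ∑ q, ∑ Q : X → M, w Q * branch K d V (restr Q q μ) := by
        simp only [Finset.mul_sum]; rw [Finset.sum_comm]
    _ ≤ ∑ q, branch K d V (l q) := Finset.sum_le_sum fun q _ => by
        conv_rhs => rw [hmean q]
        exact (conc_branch h).sum_le _ w hw0 _

/-! ### Value functions have bounded span -/

lemma stage_le {D : ℝ} (hd : ∀ x xh, 0 ≤ d x xh) (hD : ∀ x xh, d x xh ≤ D) {m a a' : X → ℝ}
    (ha : 0 ≤ a) (ha' : 0 ≤ a') : stage d (m + a) ≤ stage d (m + a') + D * mass a := by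
  obtain ⟨xh, -, hxh⟩ := Finset.exists_mem_eq_inf' (Finset.univ_nonempty (α := Xhat))
    (fun xh => ∑ x, (m + a') x * d x xh)
  have h1 : stage d (m + a') = _ := hxh
  have h2 : stage d (m + a) ≤ ∑ x, (m + a) x * d x xh := Finset.inf'_le _ (Finset.mem_univ xh)
  rw [h1]
  refine h2.trans ?_
  rw [mass, Finset.mul_sum, ← Finset.sum_add_distrib]
  refine Finset.sum_le_sum fun x _ => ?_
  have := mul_nonneg (ha' x) (hd x xh)
  have := mul_le_mul_of_nonneg_left (hD x xh) (ha x)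
  simp only [Pi.add_apply, add_mul]
  linarith

/-- Minorisation: by primitivity there are `t ≥ 1` and `e > 0` such that, for any two measures
`b` and `a'` of equal mass, `b Kᵗ` and `a'` overlap in at least a fraction `e` of that mass.
Indeed `b Kᵗ` charges every point, and some point carries a fair share of `a'`. -/
lemma exists_overlap (hK : IsMarkovMatrix K) (hprim : IsPrimitiveMat K) :
    ∃ t : ℕ, 0 < t ∧ ∃ e : ℝ, 0 < e ∧ ∀ b a' : X → ℝ, 0 ≤ b → 0 ≤ a' → mass b = mass a' →
      e * mass a' ≤ mass (fun x => min ((push K)^[t] b x) (a' x)) := by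
  obtain ⟨t, ht⟩ := hprim
  -- One more step preserves positivity, so the number of steps may be taken positive.
  have ht1 : ∀ x y, 0 < Kpow K (t + 1) x y := by
    intro x y
    have hne : ∃ z ∈ Finset.univ, (0 : ℝ) < K x z := by
      by_contra! hcon
      have := Finset.sum_nonpos hcon
      linarith [(hK x).2]
    obtain ⟨z, hz, hpos⟩ := hne
    refine Finset.sum_pos' (fun z _ => mul_nonneg ((hK x).1 z) (ht z y).le) ⟨z, hz, ?_⟩
    exact mul_pos hpos (ht z y)
  obtain ⟨p, hp⟩ := Finite.exists_min (fun p : X × X => Kpow K (t + 1) p.1 p.2)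
  set e₀ := Kpow K (t + 1) p.1 p.2 with he₀
  have hN : (0 : ℝ) < Fintype.card X := by exact_mod_cast Fintype.card_pos
  refine ⟨t + 1, Nat.succ_pos t, min e₀ (Fintype.card X : ℝ)⁻¹,
    lt_min (ht1 _ _) (inv_pos.2 hN), fun b a' hb ha' hm => ?_⟩
  have hlow : ∀ y, e₀ * mass a' ≤ (push K)^[t + 1] b y := by
    intro y
    rw [iter_eq_Kpow, ← hm, mass, Finset.mul_sum]
    exact Finset.sum_le_sum fun x _ => mul_le_mul_of_nonneg_right (hp (x, y)) (hb x)
  -- Some atom of `a'` carries at least the average mass.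
  obtain ⟨x, -, hx⟩ : ∃ x ∈ (Finset.univ : Finset X), (Fintype.card X : ℝ)⁻¹ * mass a' ≤ a' x := by
    refine Finset.exists_le_of_sum_le Finset.univ_nonempty ?_
    simp only [Finset.sum_const, Finset.card_univ, nsmul_eq_mul]
    rw [← mul_assoc, mul_inv_cancel₀ hN.ne', one_mul, mass]
  have hma := mass_nonneg ha'
  refine le_trans ?_ (Finset.single_le_sum
    (f := fun x => min ((push K)^[t + 1] b x) (a' x)) (fun y _ => ?_) (Finset.mem_univ x))
  · refine le_min ?_ ?_
    · exact (mul_le_mul_of_nonneg_right (min_le_left _ _) hma).trans (hlow x)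
    · exact (mul_le_mul_of_nonneg_right (min_le_right _ _) hma).trans hx
  · exact le_min (iter_nonneg hK _ hb y) (ha' y)

/-- Simulation argument: from the measure `m + b Kʲ` the encoder can imitate the optimal
quantizers for `m + a'`, on the part `b Kʲ` by drawing symbols with the probabilities they have
under `a'`. The extra cost per step is at most `D` times the mass of the
differing part, and every `t` steps a fraction `e` of that part merges into the common
part, so the total extra cost is bounded uniformly in the horizon. -/
lemma val_coupling (hK : IsMarkovMatrix K) {D : ℝ} (hD0 : 0 ≤ D)
    (hd : ∀ x xh, 0 ≤ d x xh) (hD : ∀ x xh, d x xh ≤ D) {t : ℕ} (ht : 0 < t) {e : ℝ} (he : 0 < e)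
    (hov : ∀ b a' : X → ℝ, 0 ≤ b → 0 ≤ a' → mass b = mass a' →
      e * mass a' ≤ mass (fun x => min ((push K)^[t] b x) (a' x))) (n : ℕ) :
    ∀ j ≤ t, ∀ m b a' : X → ℝ, 0 ≤ m → 0 ≤ b → 0 ≤ a' → mass b = mass a' →
      val M K d n (m + (push K)^[j] b) ≤ val M K d n (m + a') + D * (t / e - j) * mass a' := by
  have he1 : e ≤ 1 := by
    have h := hov (fun _ => 1) (fun _ => 1) (fun _ => zero_le_one) (fun _ => zero_le_one) rfl
    have h2 : mass (fun x : X => min ((push K)^[t] (fun _ => 1) x) (1 : ℝ))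
        ≤ mass (fun _ : X => (1 : ℝ)) := Finset.sum_le_sum fun x _ => min_le_right _ _
    have h3 : (0 : ℝ) < mass (fun _ : X => (1 : ℝ)) := by
      simp [mass, Fintype.card_pos]
    have := h.trans h2
    by_contra! hcon
    nlinarith
  have hte : (t : ℝ) ≤ t / e := by
    rw [le_div_iff₀ he]
    have : (0 : ℝ) ≤ t := Nat.cast_nonneg t
    nlinarith
  -- Once `t` steps have elapsed the overlap is moved into the common part, and the count restarts.
  have restart : ∀ n, (∀ m b a' : X → ℝ, 0 ≤ m → 0 ≤ b → 0 ≤ a' → mass b = mass a' →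
      val M K d n (m + b) ≤ val M K d n (m + a') + D * (t / e) * mass a') →
      ∀ m b a' : X → ℝ, 0 ≤ m → 0 ≤ b → 0 ≤ a' → mass b = mass a' →
      val M K d n (m + (push K)^[t] b) ≤ val M K d n (m + a') + D * (t / e - t) * mass a' := by
    intro n h0 m b a' hm hb ha' hma
    set a := (push K)^[t] b with ha
    set κ : X → ℝ := fun x => min (a x) (a' x) with hκ
    have hκm : e * mass a' ≤ mass κ := hov b a' hb ha' hma
    have ha0 : 0 ≤ a := iter_nonneg hK t hb
    have hκ0 : 0 ≤ κ := fun x => le_min (ha0 x) (ha' x)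
    have s1 : a = κ + (a - κ) := by abel
    have s2 : a' = κ + (a' - κ) := by abel
    have mm1 : mass a = mass κ + mass (a - κ) := by rw [← mass_add, ← s1]
    have mm2 : mass a' = mass κ + mass (a' - κ) := by rw [← mass_add, ← s2]
    have mma : mass a = mass b := mass_iter hK t b
    have key := h0 (m + κ) (a - κ) (a' - κ) (add_nonneg hm hκ0)
      (sub_nonneg.2 fun x => min_le_left _ _) (sub_nonneg.2 fun x => min_le_right _ _)
      (by linarith)
    rw [add_assoc, add_assoc, ← s1, ← s2] at key
    have hDt : 0 ≤ D * (t / e) := by positivity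
    have hle : mass (a' - κ) ≤ (1 - e) * mass a' := by linarith
    have := mul_le_mul_of_nonneg_left hle hDt
    have heq : D * (t / e) * ((1 - e) * mass a') = D * (t / e - t) * mass a' := by
      field_simp
    linarith
  induction n with
  | zero =>
    intro j hj m b a' hm hb ha' hma
    have hjt : (j : ℝ) ≤ t := by exact_mod_cast hj
    have := mul_nonneg (mul_nonneg hD0 (by linarith : 0 ≤ (t : ℝ) / e - j)) (mass_nonneg ha')
    simpa [val] using this
  | succ n ih =>
    have step : ∀ j < t, ∀ m b a' : X → ℝ, 0 ≤ m → 0 ≤ b → 0 ≤ a' → mass b = mass a' →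
        val M K d (n + 1) (m + (push K)^[j] b) ≤
          val M K d (n + 1) (m + a') + D * (t / e - j) * mass a' := by
      intro j hj m b a' hm hb ha' hma
      set a := (push K)^[j] b with ha
      have ha0 : 0 ≤ a := iter_nonneg hK j hb
      have hmab : mass a = mass b := mass_iter hK j b
      obtain ⟨Q, -, hQ⟩ := Finset.exists_mem_eq_inf' (Finset.univ_nonempty (α := X → M))
        (fun Q => ∑ q, branch K d (val M K d n) (restr Q q (m + a')))
      have hQ' : val M K d (n + 1) (m + a') = _ := hQ
      -- Probability of symbol `q` under `a'`; if `a'` has no mass then `b = 0` too and the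
      -- value `0 / 0 = 0` is harmless.
      set s : M → ℝ := fun q => mass (restr Q q a') / mass a' with hs
      have hs0 : ∀ q, 0 ≤ s q := fun q =>
        div_nonneg (mass_nonneg (restr_nonneg Q q ha')) (mass_nonneg ha')
      have hsm : ∀ q, s q * mass a' = mass (restr Q q a') := by
        intro q
        by_cases h0 : mass a' = 0
        · have : a' = 0 := eq_zero_of_mass ha' h0
          subst this
          simp [restr, mass]
        · exact div_mul_cancel₀ _ h0
      have hsum : ∑ q, (restr Q q m + s q • a) = m + a := by
        rw [Finset.sum_add_distrib, sum_restr, ← Finset.sum_smul]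
        congr 1
        by_cases h0 : mass a' = 0
        · rw [eq_zero_of_mass ha0 (by rw [hmab, hma, h0]), smul_zero]
        · rw [hs, ← Finset.sum_div, sum_mass_restr, div_self h0, one_smul]
      have h1 := dp_le_split (K := K) (d := d) (conc_val (M := M) (K := K) (d := d) n)
        (fun q => restr Q q m + s q • a)
        (fun q => add_nonneg (restr_nonneg Q q hm) (smul_nonneg (hs0 q) ha0))
      rw [hsum] at h1
      have h2 : ∀ q, branch K d (val M K d n) (restr Q q m + s q • a) ≤
          branch K d (val M K d n) (restr Q q (m + a'))
            + D * (t / e - j) * mass (restr Q q a') := by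
        intro q
        have i1 := stage_le (m := restr Q q m) hd hD (smul_nonneg (hs0 q) ha0)
          (restr_nonneg Q q ha')
        rw [mass_smul, hmab, hma, hsm, ← restr_add] at i1
        have i2 := ih (j + 1) hj (push K (restr Q q m)) (s q • b) (push K (restr Q q a'))
          (push_nonneg hK (restr_nonneg Q q hm)) (smul_nonneg (hs0 q) hb)
          (push_nonneg hK (restr_nonneg Q q ha'))
          (by rw [mass_smul, mass_push hK, hma, hsm])
        rw [Function.iterate_succ_apply', iter_smul, ← ha, ← push_add, ← push_add, mass_push hK,
          ← restr_add] at i2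
        simp only [branch]
        push_cast at i2
        linarith
      have h3 := Finset.sum_le_sum fun q (_ : q ∈ Finset.univ) => h2 q
      rw [Finset.sum_add_distrib, ← Finset.mul_sum, sum_mass_restr] at h3
      rw [hQ']
      exact h1.trans h3
    intro j hj m b a' hm hb ha' hma
    rcases hj.lt_or_eq with hlt | rfl
    · exact step j hlt m b a' hm hb ha' hma
    · refine restart (n + 1) (fun m b a' hm hb ha' hma => ?_) m b a' hm hb ha' hma
      simpa using step 0 ht m b a' hm hb ha' hma

/-- Value functions at measures of equal mass differ by a bounded amount, whatever the horizon. -/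
lemma exists_span (hK : IsMarkovMatrix K) (hprim : IsPrimitiveMat K)
    (hd : ∀ x xh, 0 ≤ d x xh) : ∃ C : ℝ, 0 ≤ C ∧ ∀ n, ∀ μ ν : X → ℝ, 0 ≤ μ → 0 ≤ ν →
      mass μ = mass ν → val M K d n μ ≤ val M K d n ν + C * mass ν := by
  obtain ⟨t, ht, e, he, hov⟩ := exists_overlap hK hprim
  obtain ⟨p, hp⟩ := Finite.exists_max (fun p : X × Xhat => d p.1 p.2)
  have hD0 := hd p.1 p.2
  refine ⟨d p.1 p.2 * (t / e), by positivity, fun n μ ν hμ hν hm => ?_⟩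
  have := val_coupling (M := M) hK hD0 hd (fun x xh => hp (x, xh)) ht he hov n 0 (Nat.zero_le _)
    0 μ ν le_rfl hμ hν hm
  simpa using this

/-! ### The optimal gain and a subsolution of the average cost equation -/

lemma dp_mono (hK : IsMarkovMatrix K) {V W : (X → ℝ) → ℝ} {k : ℝ}
    (h : ∀ μ : X → ℝ, 0 ≤ μ → V μ ≤ W μ + k * mass μ) (μ : X → ℝ) (hμ : 0 ≤ μ) :
    dp M K d V μ ≤ dp M K d W μ + k * mass μ := by
  obtain ⟨Q, -, hQ⟩ := Finset.exists_mem_eq_inf' (Finset.univ_nonempty (α := X → M))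
    (fun Q => ∑ q, branch K d W (restr Q q μ))
  have hQ' : dp M K d W μ = _ := hQ
  rw [hQ']
  refine (Finset.inf'_le _ (Finset.mem_univ Q)).trans ?_
  rw [← sum_mass_restr Q μ, Finset.mul_sum, ← Finset.sum_add_distrib]
  refine Finset.sum_le_sum fun q _ => ?_
  have := h _ (push_nonneg hK (restr_nonneg Q q hμ))
  rw [mass_push hK] at this
  simp only [branch]
  linarith

/-- The value functions grow linearly with a common slope `ρ`, up to a bounded error. -/
lemma exists_gain (hK : IsMarkovMatrix K) (hprim : IsPrimitiveMat K)
    (hd : ∀ x xh, 0 ≤ d x xh) : ∃ ρ B : ℝ, ∀ n, ∀ μ : X → ℝ, 0 ≤ μ →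
      |val M K d n μ - n * ρ * mass μ| ≤ B * mass μ := by
  obtain ⟨C, hC, hspan⟩ := exists_span (M := M) hK hprim hd
  obtain ⟨x₀⟩ := ‹Nonempty X›
  set π₁ : X → ℝ := Pi.single x₀ 1 with hπ
  have hπ0 : 0 ≤ π₁ := by rw [hπ]; simp
  have hπ1 : mass π₁ = 1 := by simp [mass, hπ]
  set a : ℕ → ℝ := fun n => val M K d n π₁ with ha
  have hup : ∀ n, ∀ μ : X → ℝ, 0 ≤ μ → val M K d n μ ≤ (a n + C) * mass μ := by
    intro n μ hμ
    have := hspan n μ (mass μ • π₁) hμ (smul_nonneg (mass_nonneg hμ) hπ0)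
      (by rw [mass_smul, hπ1, mul_one])
    rw [mass_smul, hπ1, (conc_val n).hom _ (mass_nonneg hμ)] at this
    simp only [ha]; linarith
  have hlo : ∀ n, ∀ μ : X → ℝ, 0 ≤ μ → (a n - C) * mass μ ≤ val M K d n μ := by
    intro n μ hμ
    have := hspan n (mass μ • π₁) μ (smul_nonneg (mass_nonneg hμ) hπ0) hμ
      (by rw [mass_smul, hπ1, mul_one])
    rw [(conc_val n).hom _ (mass_nonneg hμ)] at this
    simp only [ha]; linarith
  have hadd_up : ∀ m n, ∀ μ : X → ℝ, 0 ≤ μ →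
      val M K d (n + m) μ ≤ val M K d n μ + (a m + C) * mass μ := by
    intro m n
    induction n with
    | zero => intro μ hμ; simpa [val] using hup m μ hμ
    | succ n ih =>
      intro μ hμ
      rw [Nat.add_right_comm]
      exact dp_mono hK ih μ hμ
  have hadd_lo : ∀ m n, ∀ μ : X → ℝ, 0 ≤ μ →
      val M K d n μ ≤ val M K d (n + m) μ + -(a m - C) * mass μ := by
    intro m n
    induction n with
    | zero => intro μ hμ; have := hlo m μ hμ; simp only [val, Nat.zero_add]; linarith
    | succ n ih =>
      intro μ hμ
      rw [Nat.add_right_comm]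
      exact dp_mono hK ih μ hμ
  have hsub : Subadditive (fun n => a n + C) := by
    intro m n
    have := hadd_up n m π₁ hπ0
    rw [hπ1] at this
    simp only [ha] at this ⊢; linarith
  have hsup : Subadditive (fun n => C - a n) := by
    intro m n
    have := hadd_lo n m π₁ hπ0
    rw [hπ1] at this
    simp only [ha] at this ⊢; linarith
  -- Crude linear bounds, which make the two Fekete limits meaningful.
  obtain ⟨E, hE⟩ : ∃ E : ℝ, ∀ n, |a n| ≤ E * n := by
    refine ⟨|a 1| + C, fun n => ?_⟩
    induction n with
    | zero => simp [ha, val]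
    | succ n ih =>
      have h1 := hadd_up 1 n π₁ hπ0
      have h2 := hadd_lo 1 n π₁ hπ0
      rw [hπ1] at h1 h2
      have h3 : |a (n + 1) - a n| ≤ |a 1| + C := by
        have := le_abs_self (a 1)
        have := neg_abs_le (a 1)
        simp only [ha] at *
        rw [abs_le]; constructor <;> linarith
      have h4 : a (n + 1) = (a (n + 1) - a n) + a n := by ring
      rw [h4]
      refine (abs_add_le _ _).trans ?_
      push_cast; linarith
  have hE0 : 0 ≤ E := by have := hE 1; simp at this; exact (abs_nonneg _).trans this
  have hb1 : BddBelow (Set.range fun n : ℕ => (a n + C) / n) := by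
    refine ⟨-E, ?_⟩
    rintro _ ⟨n, rfl⟩
    rcases Nat.eq_zero_or_pos n with rfl | hn
    · simp [hE0]
    · have hn' : (0 : ℝ) < n := by exact_mod_cast hn
      dsimp only
      rw [le_div_iff₀ hn']
      have := (abs_le.1 (hE n)).1
      linarith
  have hb2 : BddBelow (Set.range fun n : ℕ => (C - a n) / n) := by
    refine ⟨-E, ?_⟩
    rintro _ ⟨n, rfl⟩
    rcases Nat.eq_zero_or_pos n with rfl | hn
    · simp [hE0]
    · have hn' : (0 : ℝ) < n := by exact_mod_cast hn
      dsimp only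
      rw [le_div_iff₀ hn']
      have := (abs_le.1 (hE n)).2
      linarith
  have hl1 := hsub.tendsto_lim hb1
  have hl2 := hsup.tendsto_lim hb2
  have hlim : hsub.lim + hsup.lim = 0 := by
    have h3 : Tendsto (fun n : ℕ => (2 * C) / (n : ℝ)) atTop (𝓝 0) :=
      tendsto_const_div_atTop_nhds_zero_nat _
    refine tendsto_nhds_unique (hl1.add hl2) (h3.congr fun n => ?_)
    rw [← add_div]; congr 1; ring
  refine ⟨hsub.lim, C + C, fun n μ hμ => ?_⟩
  have hga : |a n - n * hsub.lim| ≤ C := by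
    rcases Nat.eq_zero_or_pos n with rfl | hn
    · simp [ha, val, hC]
    · have hn' : (0 : ℝ) < n := by exact_mod_cast hn
      have h1 := hsub.lim_le_div hb1 hn.ne'
      have h2 := hsup.lim_le_div hb2 hn.ne'
      rw [le_div_iff₀ hn'] at h1 h2
      have h3 : hsup.lim = -hsub.lim := by linarith
      rw [h3] at h2
      rw [abs_le]; constructor <;> linarith
  have hma := mass_nonneg hμ
  have h1 := hup n μ hμ
  have h2 := hlo n μ hμ
  have h3 := mul_le_mul_of_nonneg_right (abs_le.1 hga).1 hma
  have h4 := mul_le_mul_of_nonneg_right (abs_le.1 hga).2 hma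
  rw [abs_le]; constructor <;> linarith

/-- A bounded relative value function `g` solving the average cost optimality inequality; it is
the pointwise `liminf` of `val n - n ρ`, and the minimising quantizer survives the
limit because there are only finitely many quantizers. -/
lemma exists_relative_value (hK : IsMarkovMatrix K) {ρ B : ℝ}
    (hB : ∀ n, ∀ μ : X → ℝ, 0 ≤ μ → |val M K d n μ - n * ρ * mass μ| ≤ B * mass μ) :
    ∃ g : (X → ℝ) → ℝ, (∀ c : ℝ, 0 ≤ c → ∀ μ, g (c • μ) = c * g μ) ∧
      (∀ μ : X → ℝ, 0 ≤ μ → |g μ| ≤ B * mass μ) ∧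
      ∀ μ : X → ℝ, 0 ≤ μ → ∃ Q : X → M,
        ∑ q, branch K d g (restr Q q μ) ≤ ρ * mass μ + g μ := by
  set u : ℕ → (X → ℝ) → ℝ := fun n μ => val M K d n μ - n * ρ * mass μ with hu
  set G : ℕ → (X → ℝ) → ℝ := fun N μ => ⨅ n, u (N + n) μ with hG
  have hbdd : ∀ N, ∀ μ : X → ℝ, 0 ≤ μ → BddBelow (Set.range fun n => u (N + n) μ) := by
    rintro N μ hμ
    refine ⟨-(B * mass μ), ?_⟩
    rintro _ ⟨n, rfl⟩
    exact (abs_le.1 (hB (N + n) μ hμ)).1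
  have hGu : ∀ N n, N ≤ n → ∀ μ : X → ℝ, 0 ≤ μ → G N μ ≤ u n μ := by
    intro N n hn μ hμ
    obtain ⟨k, rfl⟩ := Nat.exists_eq_add_of_le hn
    exact ciInf_le (hbdd N μ hμ) k
  have hGlo : ∀ N, ∀ μ : X → ℝ, 0 ≤ μ → -(B * mass μ) ≤ G N μ := fun N μ hμ =>
    le_ciInf fun n => (abs_le.1 (hB (N + n) μ hμ)).1
  have hGup : ∀ N, ∀ μ : X → ℝ, 0 ≤ μ → G N μ ≤ B * mass μ := fun N μ hμ =>
    (hGu N N le_rfl μ hμ).trans (abs_le.1 (hB N μ hμ)).2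
  have hGmono : ∀ μ : X → ℝ, 0 ≤ μ → Monotone fun N => G N μ := by
    intro μ hμ N N' hN
    exact le_ciInf fun n => hGu N (N' + n) (by omega) μ hμ
  have hGbdd : ∀ μ : X → ℝ, 0 ≤ μ → BddAbove (Set.range fun N => G N μ) := by
    intro μ hμ
    refine ⟨B * mass μ, ?_⟩
    rintro _ ⟨n, rfl⟩
    exact hGup n μ hμ
  set g : (X → ℝ) → ℝ := fun μ => ⨆ N, G N μ with hg
  have hGg : ∀ N, ∀ μ : X → ℝ, 0 ≤ μ → G N μ ≤ g μ := fun N μ hμ => le_ciSup (hGbdd μ hμ) N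
  refine ⟨g, ?_, ?_, ?_⟩
  · intro c hc μ
    simp only [hg, hG]
    rw [Real.mul_iSup_of_nonneg hc]
    refine iSup_congr fun N => ?_
    rw [Real.mul_iInf_of_nonneg hc]
    refine iInf_congr fun n => ?_
    simp only [hu, (conc_val _).hom c hc, mass_smul]; ring
  · intro μ hμ
    rw [abs_le]
    exact ⟨(hGlo 0 μ hμ).trans (hGg 0 μ hμ), ciSup_le fun N => hGup N μ hμ⟩
  · intro μ hμ
    by_contra! hcon
    have hlim : ∀ Q : X → M, Tendsto (fun N => ∑ q, branch K d (G N) (restr Q q μ)) atTop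
        (𝓝 (∑ q, branch K d g (restr Q q μ))) := by
      intro Q
      refine tendsto_finsetSum _ fun q _ => tendsto_const_nhds.add ?_
      have h0 := push_nonneg hK (restr_nonneg Q q hμ)
      exact tendsto_atTop_ciSup (hGmono _ h0) (hGbdd _ h0)
    have hev : ∀ᶠ N in atTop, ∀ Q : X → M,
        ρ * mass μ + g μ < ∑ q, branch K d (G N) (restr Q q μ) :=
      eventually_all.2 fun Q => (hlim Q).eventually_const_lt (hcon Q)
    obtain ⟨N, hN⟩ := hev.exists
    have h1 : ρ * mass μ + g μ < dp M K d (G N) μ := by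
      rw [dp, Finset.lt_inf'_iff]
      exact fun Q _ => hN Q
    have h2 : dp M K d (G N) μ ≤ ρ * mass μ + G (N + 1) μ := by
      have : dp M K d (G N) μ - ρ * mass μ ≤ G (N + 1) μ := by
        refine le_ciInf fun n => ?_
        have h3 := dp_mono (M := M) (d := d) (V := G N) (W := val M K d (N + n))
          (k := -((N + n : ℕ) * ρ)) hK
          (fun ν hν => by
            have := hGu N (N + n) (Nat.le_add_right _ _) ν hν
            simp only [hu] at this; linarith) μ hμ
        have h4 : u (N + 1 + n) μ = dp M K d (val M K d (N + n)) μ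
            - ((N + n : ℕ) + 1) * ρ * mass μ := by
          have : N + 1 + n = N + n + 1 := by omega
          rw [this]; simp only [hu, val]; push_cast; rfl
        rw [h4]; linarith
      linarith
    linarith [hGg (N + 1) μ hμ]

end DynamicProgram

section Paths

variable {X M Xhat : Type*} [Fintype X] [Nonempty X] [DecidableEq X]
  [Fintype M] [Nonempty M] [DecidableEq M] [Fintype Xhat] [Nonempty Xhat]
variable {K : X → X → ℝ} {π₀ : X → ℝ} {d : X → Xhat → ℝ} {γ : EncPolicy X M}

/-! ### Joint laws of channel history and source state -/

/-- Channel symbols up to time `t` along a source path of length `t + 1`. -/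
noncomputable def hist (γ : EncPolicy X M) (t : ℕ) (p : Fin (t + 1) → X) : Fin (t + 1) → M :=
  fun i => qSeq γ (extPath t p) i.val

/-- Unnormalised posterior: `post K π₀ γ t qs x = P(q_{[0,t]} = qs, X_t = x)`. -/
noncomputable def post (K : X → X → ℝ) (π₀ : X → ℝ) (γ : EncPolicy X M) (t : ℕ)
    (qs : Fin (t + 1) → M) : X → ℝ :=
  fun x => ∑ p : Fin (t + 1) → X,
    if p (Fin.last t) = x ∧ hist γ t p = qs then pathProb K π₀ t p else 0

/-- Unnormalised predictor `P(q_{[0,t-1]} = qs, X_t = x)`, obtained from the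
posterior one time step earlier. -/
noncomputable def pred (K : X → X → ℝ) (π₀ : X → ℝ) (γ : EncPolicy X M) :
    (t : ℕ) → (Fin t → M) → X → ℝ
  | 0, _ => π₀
  | t + 1, qs => push K (post K π₀ γ t qs)

lemma qSeq_congr (γ : EncPolicy X M) {x y : ℕ → X} (t : ℕ) (h : ∀ s ≤ t, x s = y s) :
    qSeq γ x t = qSeq γ y t := by
  induction t using Nat.strong_induction_on with
  | _ t ih =>
    rw [qSeq, qSeq]
    congr 1
    · funext i
      exact ih i.val i.isLt fun s hs => h s (hs.trans i.isLt.le)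
    · funext i
      exact h i.val (Nat.lt_succ_iff.1 i.isLt)

lemma extPath_snoc (t : ℕ) (p : Fin (t + 1) → X) (y : X) {s : ℕ} (hs : s ≤ t) :
    extPath (t + 1) (Fin.snoc p y : Fin (t + 2) → X) s = extPath t p s := by
  have h1 : s < t + 1 := by omega
  have h2 : s < t + 1 + 1 := by omega
  simp only [extPath, h1, h2, dif_pos]
  exact Fin.snoc_castSucc (α := fun _ => X) y p ⟨s, h1⟩

lemma init_hist_snoc (γ : EncPolicy X M) (t : ℕ) (p : Fin (t + 1) → X) (y : X) :
    (Fin.init (hist γ (t + 1) (Fin.snoc p y : Fin (t + 2) → X)) : Fin (t + 1) → M)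
      = hist γ t p := by
  funext i
  simp only [Fin.init, hist, Fin.val_castSucc]
  exact qSeq_congr γ _ fun s hs => extPath_snoc t p y (hs.trans (Nat.lt_succ_iff.1 i.isLt))

lemma hist_last (γ : EncPolicy X M) (t : ℕ) (p : Fin (t + 1) → X) :
    hist γ t p (Fin.last t) = γ t (Fin.init (hist γ t p)) p := by
  rw [hist, qSeq]
  congr 1
  funext i
  exact dif_pos i.isLt

lemma pathProb_snoc (K : X → X → ℝ) (π₀ : X → ℝ) (t : ℕ) (p : Fin (t + 1) → X) (y : X) :
    pathProb K π₀ (t + 1) (Fin.snoc p y : Fin (t + 2) → X) =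
      pathProb K π₀ t p * K (p (Fin.last t)) y := by
  have h0 : (Fin.snoc p y : Fin (t + 2) → X) 0 = p 0 :=
    Fin.snoc_castSucc (α := fun _ => X) y p 0
  have h1 : ∀ i : Fin (t + 1), (Fin.snoc p y : Fin (t + 2) → X) i.castSucc = p i := fun i =>
    Fin.snoc_castSucc (α := fun _ => X) y p i
  have h2 : (Fin.snoc p y : Fin (t + 2) → X) (Fin.last t).succ = y := by
    rw [Fin.succ_last]; exact Fin.snoc_last (α := fun _ => X) y p
  rw [pathProb, pathProb, Fin.prod_univ_castSucc, h0, h1, h2, mul_assoc]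
  congr 2
  refine Finset.prod_congr rfl fun i _ => ?_
  rw [h1, Fin.succ_castSucc, h1]

lemma pathProb_nonneg (hK : IsMarkovMatrix K) (hπ : 0 ≤ π₀) (t : ℕ) (p : Fin (t + 1) → X) :
    0 ≤ pathProb K π₀ t p :=
  mul_nonneg (hπ _) (Finset.prod_nonneg fun _ _ => (hK _).1 _)

lemma sum_snoc {A : Type*} [Fintype A] (t : ℕ) (f : (Fin (t + 1) → A) → ℝ) :
    ∑ p, f p = ∑ p : Fin t → A, ∑ y, f (Fin.snoc p y : Fin (t + 1) → A) := by
  rw [← (Fin.snocEquiv (fun _ : Fin (t + 1) => A)).sum_comp, Fintype.sum_prod_type,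
    Finset.sum_comm]
  rfl

lemma post_nonneg (hK : IsMarkovMatrix K) (hπ : 0 ≤ π₀) (t : ℕ) (qs : Fin (t + 1) → M) :
    0 ≤ post K π₀ γ t qs := by
  intro x
  refine Finset.sum_nonneg fun p _ => ?_
  split_ifs
  · exact pathProb_nonneg hK hπ t p
  · exact le_rfl

lemma pred_nonneg (hK : IsMarkovMatrix K) (hπ : 0 ≤ π₀) (t : ℕ) (qs : Fin t → M) :
    0 ≤ pred K π₀ γ t qs := by
  cases t with
  | zero => exact hπ
  | succ t => exact push_nonneg hK (post_nonneg hK hπ t qs)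

lemma eq_snoc_iff {A : Type*} {t : ℕ} (h : Fin (t + 1) → A) (qs : Fin t → A) (q : A) :
    h = (Fin.snoc qs q : Fin (t + 1) → A) ↔ h (Fin.last t) = q ∧ Fin.init h = qs := by
  constructor
  · rintro rfl
    exact ⟨Fin.snoc_last (α := fun _ => A) _ _, Fin.init_snoc (α := fun _ => A) _ _⟩
  · rintro ⟨rfl, rfl⟩
    exact (Fin.snoc_init_self (α := fun _ => A) h).symm

lemma pred_eq_sum_paths (t : ℕ) (qs : Fin t → M) (x : X) :
    pred K π₀ γ t qs x = ∑ p : Fin (t + 1) → X,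
      if p (Fin.last t) = x ∧ Fin.init (hist γ t p) = qs then pathProb K π₀ t p else 0 := by
  cases t with
  | zero =>
    rw [sum_snoc]
    have hx : ∀ y, (Fin.snoc (default : Fin 0 → X) y : Fin 1 → X) 0 = y := fun y =>
      Fin.snoc_last (α := fun _ => X) y default
    have : ∀ p : Fin (0 + 1) → X, Fin.init (hist γ 0 p) = qs := fun p => Subsingleton.elim _ _
    simp [pred, pathProb, this, hx]
  | succ t =>
    rw [sum_snoc]
    have hl : ∀ (p : Fin (t + 1) → X) (y : X),
        (Fin.snoc p y : Fin (t + 2) → X) (Fin.last (t + 1)) = y := fun p y =>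
      Fin.snoc_last (α := fun _ => X) y p
    simp only [init_hist_snoc, hl, pathProb_snoc, pred, push, post, Finset.mul_sum]
    rw [Finset.sum_comm]
    refine Finset.sum_congr rfl fun p _ => ?_
    simp only [ite_and, mul_ite, mul_zero]
    rw [Finset.sum_ite_eq, Finset.sum_ite_eq']
    simp only [Finset.mem_univ, if_true, mul_comm]

/-- The posteriors following a history refine the predictor at that history. -/
lemma sum_post (t : ℕ) (qs : Fin t → M) :
    ∑ q, post K π₀ γ t (Fin.snoc qs q : Fin (t + 1) → M) = pred K π₀ γ t qs := by
  funext x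
  rw [Finset.sum_apply, pred_eq_sum_paths]
  simp only [post]
  rw [Finset.sum_comm]
  refine Finset.sum_congr rfl fun p _ => ?_
  simp only [eq_snoc_iff, ite_and]
  by_cases hx : p (Fin.last t) = x
  · simp only [hx, if_true]
    rw [Finset.sum_ite_eq]; simp
  · simp [hx]

lemma expDist_eq (δ : DecPolicy M Xhat) (t : ℕ) :
    expDist K π₀ d γ δ t =
      ∑ qs : Fin (t + 1) → M, ∑ x, post K π₀ γ t qs x * d x (δ t qs) := by
  simp only [post, Finset.sum_mul]
  have : ∀ qs : Fin (t + 1) → M, (∑ x, ∑ p : Fin (t + 1) → X,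
      (if p (Fin.last t) = x ∧ hist γ t p = qs then pathProb K π₀ t p else 0) * d x (δ t qs))
      = ∑ p : Fin (t + 1) → X, if hist γ t p = qs then
          pathProb K π₀ t p * d (p (Fin.last t)) (δ t qs) else 0 := by
    intro qs
    rw [Finset.sum_comm]
    refine Finset.sum_congr rfl fun p _ => ?_
    simp only [ite_and, ite_mul, zero_mul]
    rw [Finset.sum_ite_eq]; simp
  simp only [this]
  rw [Finset.sum_comm]
  refine Finset.sum_congr rfl fun p _ => ?_
  rw [Finset.sum_ite_eq]; simp only [Finset.mem_univ, if_true]; rfl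

lemma sum_mass_pred (hK : IsMarkovMatrix K) (hπ1 : mass π₀ = 1) (t : ℕ) :
    ∑ qs : Fin t → M, mass (pred K π₀ γ t qs) = 1 := by
  induction t with
  | zero => simp [pred, hπ1]
  | succ t ih =>
    rw [← ih, sum_snoc]
    refine Finset.sum_congr rfl fun qs _ => ?_
    rw [← sum_post]
    simp only [pred, mass_push hK]
    simp only [mass, Finset.sum_apply]
    rw [Finset.sum_comm]

/-! ### Every policy costs at least the finite-horizon value -/

/-- The cost incurred during `[t, t + n)` by an arbitrary encoder and decoder. Given the channel
history, an encoder that looks at past source symbols acts as a randomised quantizer of the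
current one, so `dp_le_split` applies at each stage. -/
lemma le_cost_to_go (hK : IsMarkovMatrix K) (hπ : 0 ≤ π₀) (δ : DecPolicy M Xhat) (n : ℕ) :
    ∀ t, ∑ qs : Fin t → M, val M K d n (pred K π₀ γ t qs) ≤
      ∑ s ∈ Finset.range n, expDist K π₀ d γ δ (t + s) := by
  induction n with
  | zero => intro t; simp [val]
  | succ n ih =>
    intro t
    rw [Finset.sum_range_succ']
    have h1 := ih (t + 1)
    have h2 : ∑ s ∈ Finset.range n, expDist K π₀ d γ δ (t + (s + 1)) =
        ∑ s ∈ Finset.range n, expDist K π₀ d γ δ (t + 1 + s) :=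
      Finset.sum_congr rfl fun s _ => by rw [Nat.add_right_comm, Nat.add_assoc]
    rw [h2, add_zero]
    have h3 : ∑ qs : Fin (t + 1) → M, stage d (post K π₀ γ t qs) ≤ expDist K π₀ d γ δ t := by
      rw [expDist_eq]
      exact Finset.sum_le_sum fun qs _ => Finset.inf'_le _ (Finset.mem_univ _)
    have h4 : ∑ qs : Fin t → M, val M K d (n + 1) (pred K π₀ γ t qs) ≤
        ∑ qs : Fin (t + 1) → M, branch K d (val M K d n) (post K π₀ γ t qs) := by
      rw [sum_snoc]
      refine Finset.sum_le_sum fun qs _ => ?_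
      rw [← sum_post]
      exact dp_le_split (conc_val n) _ fun q => post_nonneg hK hπ t _
    simp only [branch, Finset.sum_add_distrib] at h4
    have h5 : ∑ qs : Fin (t + 1) → M, val M K d n (push K (post K π₀ γ t qs)) =
      ∑ qs : Fin (t + 1) → M, val M K d n (pred K π₀ γ (t + 1) qs) := rfl
    linarith

lemma val_le_cost (hK : IsMarkovMatrix K) (hπ : 0 ≤ π₀) (δ : DecPolicy M Xhat) (n : ℕ) :
    val M K d n π₀ ≤ ∑ s ∈ Finset.range n, expDist K π₀ d γ δ s := by
  simpa [pred] using le_cost_to_go (γ := γ) (d := d) hK hπ δ n 0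

/-! ### Stationary Walrand–Varaiya policies -/

lemma post_ws (γws : (X → ℝ) → X → M) (t : ℕ) (qs : Fin t → M) (q : M) :
    post K π₀ (wsEncoder K γws π₀) t (Fin.snoc qs q : Fin (t + 1) → M) =
      restr (γws (predOfHist K γws π₀ t qs)) q (pred K π₀ (wsEncoder K γws π₀) t qs) := by
  funext x
  simp only [post, restr, pred_eq_sum_paths, eq_snoc_iff]
  have key : ∀ p : Fin (t + 1) → X,
      (p (Fin.last t) = x ∧ hist (wsEncoder K γws π₀) t p (Fin.last t) = q ∧
        Fin.init (hist (wsEncoder K γws π₀) t p) = qs) ↔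
      (γws (predOfHist K γws π₀ t qs) x = q ∧ p (Fin.last t) = x ∧
        Fin.init (hist (wsEncoder K γws π₀) t p) = qs) := by
    intro p
    rw [hist_last]
    constructor
    · rintro ⟨rfl, h1, rfl⟩; exact ⟨h1, rfl, rfl⟩
    · rintro ⟨h1, rfl, rfl⟩; exact ⟨rfl, h1, rfl⟩
  simp only [key]
  by_cases hx : γws (predOfHist K γws π₀ t qs) x = q
  · simp [hx]
  · simp [hx]

lemma nextPred_nonneg (hK : IsMarkovMatrix K) {π : X → ℝ} (hπ : 0 ≤ π) (Q : X → M) (q : M) :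
    0 ≤ nextPred K π Q q := fun x' =>
  div_nonneg (Finset.sum_nonneg fun x _ => mul_nonneg ((hK x).1 x') (hπ x))
    (Finset.sum_nonneg fun x _ => hπ x)

/-- On a null cell both sides vanish, whatever value the division by zero gives. -/
lemma push_restr_eq {π : X → ℝ} (hπ : 0 ≤ π) (Q : X → M) (q : M) :
    push K (restr Q q π) = mass (restr Q q π) • nextPred K π Q q := by
  have hm : mass (restr Q q π) = ∑ x ∈ Finset.univ.filter (fun x => Q x = q), π x := by
    simp [mass, restr, Finset.sum_filter]
  by_cases h0 : mass (restr Q q π) = 0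
  · rw [h0, eq_zero_of_mass (restr_nonneg Q q hπ) h0]
    funext x; simp [push]
  · funext y
    simp only [Pi.smul_apply, smul_eq_mul, nextPred]
    rw [← hm, mul_div_cancel₀ _ h0]
    simp [push, restr, Finset.sum_filter]

lemma predOfHist_nonneg (hK : IsMarkovMatrix K) (hπ : 0 ≤ π₀) (γws : (X → ℝ) → X → M) (t : ℕ)
    (qs : Fin t → M) : 0 ≤ predOfHist K γws π₀ t qs := by
  induction t with
  | zero => exact hπ
  | succ t ih => exact nextPred_nonneg hK (ih _) _ _

/-- The predictor used by a Walrand–Varaiya policy is proportional to the true unnormalised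
predictor, also on histories of probability zero. -/
lemma exists_pred_eq_smul (hK : IsMarkovMatrix K) (hπ : 0 ≤ π₀) (γws : (X → ℝ) → X → M)
    (t : ℕ) (qs : Fin t → M) : ∃ c : ℝ, 0 ≤ c ∧
      pred K π₀ (wsEncoder K γws π₀) t qs = c • predOfHist K γws π₀ t qs := by
  induction t with
  | zero => exact ⟨1, zero_le_one, by simp [pred, predOfHist]⟩
  | succ t ih =>
    obtain ⟨c, hc, h⟩ := ih (Fin.init qs)
    have hq : qs = (Fin.snoc (Fin.init qs) (qs (Fin.last t)) : Fin (t + 1) → M) :=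
      (Fin.snoc_init_self (α := fun _ => M) qs).symm
    have hp := predOfHist_nonneg hK hπ γws t (Fin.init qs)
    refine ⟨c * mass (restr (γws (predOfHist K γws π₀ t (Fin.init qs))) (qs (Fin.last t))
      (predOfHist K γws π₀ t (Fin.init qs))),
      mul_nonneg hc (mass_nonneg (restr_nonneg _ _ hp)), ?_⟩
    have h1 : pred K π₀ (wsEncoder K γws π₀) (t + 1) qs =
        push K (restr (γws (predOfHist K γws π₀ t (Fin.init qs))) (qs (Fin.last t))
          (pred K π₀ (wsEncoder K γws π₀) t (Fin.init qs))) := by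
      rw [← post_ws, ← hq]; rfl
    rw [h1, h, restr_smul, push_smul, push_restr_eq hp, smul_smul]
    rfl

/-- If the quantizers of `γws` attain the average cost optimality inequality for `g`, then
decoding optimally at each time keeps the accumulated cost below `T ρ` up to a constant. -/
lemma exists_dec_cost_le (hK : IsMarkovMatrix K) (hπ : 0 ≤ π₀) (hπ1 : mass π₀ = 1)
    {ρ B : ℝ} {g : (X → ℝ) → ℝ} (hhom : ∀ c : ℝ, 0 ≤ c → ∀ μ, g (c • μ) = c * g μ)
    (hgB : ∀ μ : X → ℝ, 0 ≤ μ → |g μ| ≤ B * mass μ) {γws : (X → ℝ) → X → M}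
    (hγ : ∀ μ : X → ℝ, 0 ≤ μ → ∑ q, branch K d g (restr (γws μ) q μ) ≤ ρ * mass μ + g μ) :
    ∃ δ : DecPolicy M Xhat, ∀ T : ℕ,
      ∑ s ∈ Finset.range T, expDist K π₀ d (wsEncoder K γws π₀) δ s ≤ T * ρ + 2 * B := by
  set γ := wsEncoder K γws π₀ with hγdef
  have hex : ∀ t (qs : Fin (t + 1) → M), ∃ xh : Xhat,
      stage d (post K π₀ γ t qs) = ∑ x, post K π₀ γ t qs x * d x xh := fun t qs => by
    obtain ⟨xh, -, h⟩ := Finset.exists_mem_eq_inf' (Finset.univ_nonempty (α := Xhat))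
      (fun xh => ∑ x, post K π₀ γ t qs x * d x xh)
    exact ⟨xh, h⟩
  obtain ⟨δ, hδ⟩ : ∃ δ : DecPolicy M Xhat, ∀ t (qs : Fin (t + 1) → M),
      stage d (post K π₀ γ t qs) = ∑ x, post K π₀ γ t qs x * d x (δ t qs) :=
    ⟨fun t qs => (hex t qs).choose, fun t qs => (hex t qs).choose_spec⟩
  refine ⟨δ, fun T => ?_⟩
  set Ψ : ℕ → ℝ := fun t => ∑ qs : Fin t → M, g (pred K π₀ γ t qs) with hΨ
  have hstep : ∀ t, expDist K π₀ d γ δ t + Ψ (t + 1) ≤ ρ + Ψ t := by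
    intro t
    have h1 : expDist K π₀ d γ δ t + Ψ (t + 1) =
        ∑ qs : Fin (t + 1) → M, branch K d g (post K π₀ γ t qs) := by
      rw [expDist_eq, hΨ, ← Finset.sum_add_distrib]
      refine Finset.sum_congr rfl fun qs _ => ?_
      rw [branch, hδ]; rfl
    have h2 : ρ + Ψ t = ∑ qs : Fin t → M,
        (ρ * mass (pred K π₀ γ t qs) + g (pred K π₀ γ t qs)) := by
      rw [Finset.sum_add_distrib, ← Finset.mul_sum, sum_mass_pred hK hπ1, mul_one]
    rw [h1, h2, sum_snoc]
    refine Finset.sum_le_sum fun qs _ => ?_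
    obtain ⟨c, hc, h⟩ := exists_pred_eq_smul hK hπ γws t qs
    simp only [hγdef, post_ws]
    rw [h]
    have hp := hγ _ (predOfHist_nonneg hK hπ γws t qs)
    have h3 := mul_le_mul_of_nonneg_left hp hc
    have hb : ∀ μ : X → ℝ, branch K d g (c • μ) = c * branch K d g μ := fun μ => by
      simp only [branch, push_smul, (conc_stage d).hom c hc, hhom c hc]; ring
    simp only [restr_smul, hb, ← Finset.mul_sum, mass_smul, hhom c hc]
    linarith
  have hΨB : ∀ t, |Ψ t| ≤ B := by
    intro t
    refine (Finset.abs_sum_le_sum_abs _ _).trans ?_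
    refine (Finset.sum_le_sum fun qs _ => hgB _ (pred_nonneg hK hπ t qs)).trans ?_
    rw [← Finset.mul_sum, sum_mass_pred hK hπ1, mul_one]
  have htel : ∑ s ∈ Finset.range T, expDist K π₀ d γ δ s + Ψ T ≤ T * ρ + Ψ 0 := by
    induction T with
    | zero => simp
    | succ T ih =>
      rw [Finset.sum_range_succ]
      push_cast
      linarith [hstep T]
  linarith [(abs_le.1 (hΨB T)).1, (abs_le.1 (hΨB 0)).2]

/-! ### Long-run averages -/

lemma expDist_le (hK : IsMarkovMatrix K) (hπ : 0 ≤ π₀) (hπ1 : mass π₀ = 1) {D : ℝ}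
    (hD : ∀ x xh, d x xh ≤ D) (δ : DecPolicy M Xhat) (t : ℕ) :
    expDist K π₀ d γ δ t ≤ D := by
  have h1 := sum_mass_pred (γ := γ) hK hπ1 (t + 1)
  simp only [pred, mass_push hK] at h1
  rw [expDist_eq, ← mul_one D, ← h1, Finset.mul_sum]
  refine Finset.sum_le_sum fun qs _ => ?_
  rw [mass, Finset.mul_sum]
  refine Finset.sum_le_sum fun x _ => ?_
  rw [mul_comm]
  exact mul_le_mul_of_nonneg_right (hD _ _) (post_nonneg hK hπ t qs x)

lemma expDist_nonneg (hK : IsMarkovMatrix K) (hπ : 0 ≤ π₀) (hd : ∀ x xh, 0 ≤ d x xh)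
    (δ : DecPolicy M Xhat) (t : ℕ) : 0 ≤ expDist K π₀ d γ δ t :=
  Finset.sum_nonneg fun p _ => mul_nonneg (pathProb_nonneg hK hπ t p) (hd _ _)

lemma avg_bounds (hK : IsMarkovMatrix K) (hπ : 0 ≤ π₀) (hπ1 : mass π₀ = 1)
    (hd : ∀ x xh, 0 ≤ d x xh) (δ : DecPolicy M Xhat) : ∃ D : ℝ, ∀ T : ℕ,
      0 ≤ (∑ t ∈ Finset.range T, expDist K π₀ d γ δ t) / (T : ℝ) ∧
      (∑ t ∈ Finset.range T, expDist K π₀ d γ δ t) / (T : ℝ) ≤ D := by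
  obtain ⟨p, hp⟩ := Finite.exists_max (fun p : X × Xhat => d p.1 p.2)
  refine ⟨d p.1 p.2, fun T => ⟨div_nonneg (Finset.sum_nonneg fun t _ =>
    expDist_nonneg hK hπ hd δ t) (Nat.cast_nonneg T), ?_⟩⟩
  refine div_le_of_le_mul₀ (Nat.cast_nonneg T) (hd _ _) ?_
  refine (Finset.sum_le_sum fun t _ =>
    expDist_le hK hπ hπ1 (fun x xh => hp (x, xh)) δ t).trans ?_
  simp [mul_comm]

lemma tendsto_lin (ρ C : ℝ) :
    Tendsto (fun T : ℕ => (T * ρ + C) / (T : ℝ)) atTop (𝓝 ρ) := by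
  have h : Tendsto (fun T : ℕ => ρ + C / (T : ℝ)) atTop (𝓝 (ρ + 0)) :=
    tendsto_const_nhds.add (tendsto_const_div_atTop_nhds_zero_nat C)
  rw [add_zero] at h
  refine h.congr' ?_
  filter_upwards [eventually_gt_atTop 0] with T hT
  have : (T : ℝ) ≠ 0 := by exact_mod_cast hT.ne'
  field_simp

lemma le_avgCost (hK : IsMarkovMatrix K) (hπ : 0 ≤ π₀) (hπ1 : mass π₀ = 1)
    (hd : ∀ x xh, 0 ≤ d x xh) {ρ B : ℝ}
    (hB : ∀ n, ∀ μ : X → ℝ, 0 ≤ μ → |val M K d n μ - n * ρ * mass μ| ≤ B * mass μ)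
    (δ : DecPolicy M Xhat) : ρ ≤ avgCost K π₀ d γ δ := by
  obtain ⟨D, hD⟩ := avg_bounds (γ := γ) hK hπ hπ1 hd δ
  have hl := tendsto_lin ρ (-B)
  rw [← hl.limsup_eq]
  refine limsup_le_limsup (Eventually.of_forall fun T => ?_) hl.isCoboundedUnder_le
    (isBoundedUnder_of ⟨D, fun T => (hD T).2⟩)
  refine div_le_div_of_nonneg_right ?_ (Nat.cast_nonneg T)
  have h1 := val_le_cost (γ := γ) (d := d) hK hπ δ T
  have h2 := (abs_le.1 (hB T π₀ hπ)).1
  rw [hπ1] at h2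
  linarith

lemma avgCost_le (hK : IsMarkovMatrix K) (hπ : 0 ≤ π₀) (hπ1 : mass π₀ = 1)
    (hd : ∀ x xh, 0 ≤ d x xh) {ρ C : ℝ} {δ : DecPolicy M Xhat}
    (h : ∀ T : ℕ, ∑ s ∈ Finset.range T, expDist K π₀ d γ δ s ≤ T * ρ + C) :
    avgCost K π₀ d γ δ ≤ ρ := by
  obtain ⟨D, hD⟩ := avg_bounds (γ := γ) hK hπ hπ1 hd δ
  have hl := tendsto_lin ρ C
  rw [← hl.limsup_eq]
  refine limsup_le_limsup (Eventually.of_forall fun T => ?_)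
    (isBoundedUnder_of (r := (· ≥ ·)) ⟨0, fun T => (hD T).1⟩).isCoboundedUnder_le
    hl.isBoundedUnder_le
  exact div_le_div_of_nonneg_right (h T) (Nat.cast_nonneg T)

end Paths

end ZeroDelay

/-- There exists a stationary Walrand–Varaiya type encoder policy that is
optimal for the average cost zero-delay coding problem, simultaneously for every initial
distribution `π₀ ∈ P(𝕏)`. -/
theorem stmt0 {X M Xhat : Type*}
    [Fintype X] [Nonempty X] [DecidableEq X]
    [Fintype M] [Nonempty M] [DecidableEq M]
    [Fintype Xhat] [Nonempty Xhat]
    (K : X → X → ℝ) (hK : IsMarkovMatrix K) (hprim : IsPrimitiveMat K)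
    (d : X → Xhat → ℝ) (hd : ∀ x xh, 0 ≤ d x xh) :
    ∃ γws : (X → ℝ) → X → M,
      ∀ π₀ ∈ stdSimplex ℝ X,
        avgJ K π₀ d (wsEncoder K γws π₀) = avgJstar M K π₀ d := by
  obtain ⟨ρ, B, hB⟩ := ZeroDelay.exists_gain (M := M) hK hprim hd
  obtain ⟨g, hhom, hgB, hg⟩ := ZeroDelay.exists_relative_value hK hB
  choose! γws hγ using hg
  refine ⟨γws, fun π₀ hπ₀ => ?_⟩
  have hπ : 0 ≤ π₀ := hπ₀.1
  have hπ1 : ZeroDelay.mass π₀ = 1 := hπ₀.2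
  have hdec : Nonempty (DecPolicy M Xhat) := ⟨fun _ _ => Classical.arbitrary Xhat⟩
  have henc : Nonempty (EncPolicy X M) := ⟨fun _ _ _ => Classical.arbitrary M⟩
  have hlow : ∀ (γ : EncPolicy X M) (δ : DecPolicy M Xhat), ρ ≤ avgCost K π₀ d γ δ :=
    fun γ δ => ZeroDelay.le_avgCost hK hπ hπ1 hd hB δ
  have hlowJ : ∀ γ : EncPolicy X M, ρ ≤ avgJ K π₀ d γ := fun γ => le_ciInf (hlow γ)
  obtain ⟨δ, hδ⟩ := ZeroDelay.exists_dec_cost_le hK hπ hπ1 hhom hgB hγ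
  have hup : avgJ K π₀ d (wsEncoder K γws π₀) ≤ ρ :=
    (ciInf_le ⟨ρ, by rintro _ ⟨δ, rfl⟩; exact hlow _ δ⟩ δ).trans
      (ZeroDelay.avgCost_le hK hπ hπ1 hd hδ)
  apply le_antisymm
  · exact hup.trans (le_ciInf hlowJ)
  · exact ciInf_le ⟨ρ, by rintro _ ⟨γ, rfl⟩; exact hlowJ γ⟩ _
end

section
/- For every discount factor β ∈ (0,1) there exists a stationary Walrand–Varaiya type encoder policy γ*_β ∈ Γ_WS that is optimal for the discounted cost zero-delay coding problem: J_β(π₀, γ*_β) = J*_β(π₀) for every initial distribution π₀ ∈ P(𝕏). -/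
/-!
The proof is dynamic programming on unnormalized measures `μ : X → ℝ`, `0 ≤ μ`, where a measure
stands for the joint law of the current source sample and a fixed symbol history. Working without
normalization makes every update linear (`restr`, `push`) and every value function positively
homogeneous, so histories of probability zero need no special care.

Value iteration `vIter` from zero is increasing and bounded by a multiple of the mass; its limit
`V` solves the Bellman equation (`exists_value`), because the minimum over the finitely many
quantizers commutes with limits. Each iterate, hence `V`, is superadditive and positively
homogeneous (`Superlin`), that is, concave.

Lower bound (`value_le_discCost`): an encoder that uses past source samples splits the unnormalized
predictor of a symbol history into parts that need not come from a quantizer of the current sample.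
Such a splitting is a mixture of deterministic quantizers (`exists_mixture`), so by concavity it
does not beat the Bellman minimum (`bell_le_split`). Iterating the resulting inequality and letting
the horizon tend to infinity shows `V π₀ ≤ discCost` for all encoders and decoders.

Attainment (`exists_dec_discCost_le`): let the stationary policy pick a Bellman minimizer at every
measure. Along each history the unnormalized predictor is a multiple of the predictor
(`pred_prop`), so by homogeneity the minimizer chosen at the predictor is optimal there, and with
the symbolwise best decoder the Bellman inequality is an equality at every stage. The policy does
not depend on `π₀`.
-/

open Filter MeasureTheory Finset Set Topology

/-! ### The Bellman equation on unnormalized measures -/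

section Bellman

variable {X M Xhat : Type*}

/-- The part of the measure `μ` that the quantizer `Q` sends to the symbol `q`. -/
def restr [DecidableEq M] (μ : X → ℝ) (Q : X → M) (q : M) : X → ℝ :=
  fun x => if Q x = q then μ x else 0

/-- One step of the source chain applied to the (unnormalized) measure `ν`. -/
def push [Fintype X] (K : X → X → ℝ) (ν : X → ℝ) : X → ℝ :=
  fun x' => ∑ x, ν x * K x x'

/-- Smallest distortion achievable with one reproduction symbol under the measure `ν`. -/
noncomputable def decMin [Fintype X] [Fintype Xhat] [Nonempty Xhat]
    (d : X → Xhat → ℝ) (ν : X → ℝ) : ℝ :=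
  Finset.univ.inf' Finset.univ_nonempty (fun xh : Xhat => ∑ x, ν x * d x xh)

/-- Cost of the measure `ν` left after a symbol has been received: the best distortion now plus
the discounted continuation value `V` after one source step. -/
noncomputable def stage [Fintype X] [Fintype Xhat] [Nonempty Xhat]
    (β : ℝ) (K : X → X → ℝ) (d : X → Xhat → ℝ) (V : (X → ℝ) → ℝ) (ν : X → ℝ) : ℝ :=
  decMin d ν + β * V (push K ν)

/-- The Bellman operator on functions of unnormalized measures, minimizing over quantizers. -/
noncomputable def bell (M : Type*) [Fintype X] [DecidableEq X] [Fintype M] [Nonempty M]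
    [DecidableEq M] [Fintype Xhat] [Nonempty Xhat]
    (β : ℝ) (K : X → X → ℝ) (d : X → Xhat → ℝ) (V : (X → ℝ) → ℝ) (μ : X → ℝ) : ℝ :=
  Finset.univ.inf' Finset.univ_nonempty
    (fun Q : X → M => ∑ q, stage β K d V (restr μ Q q))

/-- Value iteration started from zero: the optimal cost over a horizon of `n` stages. -/
noncomputable def vIter (M : Type*) [Fintype X] [DecidableEq X] [Fintype M] [Nonempty M]
    [DecidableEq M] [Fintype Xhat] [Nonempty Xhat]
    (β : ℝ) (K : X → X → ℝ) (d : X → Xhat → ℝ) : ℕ → (X → ℝ) → ℝ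
  | 0 => fun _ => 0
  | n + 1 => bell M β K d (vIter M β K d n)

/-- Superadditivity and positive homogeneity on the cone of nonnegative measures; together they
say that `V` is concave there. -/
structure Superlin (V : (X → ℝ) → ℝ) : Prop where
  add : ∀ μ ν, 0 ≤ μ → 0 ≤ ν → V μ + V ν ≤ V (μ + ν)
  smul : ∀ (c : ℝ) μ, 0 ≤ c → 0 ≤ μ → V (c • μ) = c * V μ

lemma restr_nonneg [DecidableEq M] {μ : X → ℝ} (h : 0 ≤ μ) (Q : X → M) (q : M) :
    0 ≤ restr μ Q q := by
  intro x
  have := h x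
  simp only [restr, Pi.zero_apply] at *
  split_ifs <;> simp [this]

lemma restr_add [DecidableEq M] (μ ν : X → ℝ) (Q : X → M) (q : M) :
    restr (μ + ν) Q q = restr μ Q q + restr ν Q q := by
  ext x
  simp only [restr, Pi.add_apply]
  split_ifs <;> simp

lemma restr_smul [DecidableEq M] (c : ℝ) (μ : X → ℝ) (Q : X → M) (q : M) :
    restr (c • μ) Q q = c • restr μ Q q := by
  ext x
  simp only [restr, Pi.smul_apply, smul_eq_mul]
  split_ifs <;> simp

lemma mass_restr [Fintype X] [Fintype M] [DecidableEq M] (μ : X → ℝ) (Q : X → M) :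
    ∑ q, ∑ x, restr μ Q q x = ∑ x, μ x := by
  rw [Finset.sum_comm]
  simp [restr]

variable [Fintype X] {K : X → X → ℝ}

lemma push_nonneg (hK : IsMarkovMatrix K) {ν : X → ℝ} (h : 0 ≤ ν) : 0 ≤ push K ν :=
  fun x' => Finset.sum_nonneg fun x _ => mul_nonneg (h x) ((hK x).1 x')

lemma push_add (μ ν : X → ℝ) : push K (μ + ν) = push K μ + push K ν := by
  ext x
  simp [push, add_mul, Finset.sum_add_distrib]

lemma push_smul (c : ℝ) (μ : X → ℝ) : push K (c • μ) = c • push K μ := by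
  ext x
  simp [push, Finset.mul_sum, mul_assoc]

lemma mass_push (hK : IsMarkovMatrix K) (ν : X → ℝ) : ∑ x, push K ν x = ∑ x, ν x := by
  simp only [push]
  rw [Finset.sum_comm]
  refine Finset.sum_congr rfl fun x _ => ?_
  rw [← Finset.mul_sum, (hK x).2, mul_one]

lemma nextPred_nonneg [DecidableEq M] (hK : IsMarkovMatrix K) {π : X → ℝ} (h : 0 ≤ π) (Q : X → M) (q : M) :
    0 ≤ nextPred K π Q q := fun x' =>
  div_nonneg (Finset.sum_nonneg fun x _ => mul_nonneg ((hK x).1 x') (h x))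
    (Finset.sum_nonneg fun x _ => h x)

/-- The Bayes update is the normalization of the unnormalized one; if the symbol has
probability zero, both sides vanish. -/
lemma push_restr [DecidableEq M] {π : X → ℝ} (h : 0 ≤ π) (Q : X → M) (q : M) :
    push K (restr π Q q) =
      (∑ x ∈ Finset.univ.filter (fun x => Q x = q), π x) • nextPred K π Q q := by
  ext x'
  have e : push K (restr π Q q) x' =
      ∑ x ∈ Finset.univ.filter (fun x => Q x = q), K x x' * π x := by
    rw [Finset.sum_filter]
    refine Finset.sum_congr rfl fun x _ => ?_
    simp only [restr]
    split_ifs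
    · ring
    · ring
  rw [e, Pi.smul_apply, smul_eq_mul, nextPred]
  by_cases h0 : ∑ x ∈ Finset.univ.filter (fun x => Q x = q), π x = 0
  · rw [h0, zero_mul]
    refine Finset.sum_eq_zero fun x hx => ?_
    rw [(Finset.sum_eq_zero_iff_of_nonneg fun x _ => h x).1 h0 x hx, mul_zero]
  · rw [mul_div_cancel₀ _ h0]

variable [Fintype Xhat] [Nonempty Xhat] {d : X → Xhat → ℝ} {β : ℝ}

lemma decMin_le (ν : X → ℝ) (xh : Xhat) : decMin d ν ≤ ∑ x, ν x * d x xh :=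
  Finset.inf'_le _ (Finset.mem_univ xh)

lemma exists_decMin (d : X → Xhat → ℝ) (ν : X → ℝ) :
    ∃ xh : Xhat, decMin d ν = ∑ x, ν x * d x xh := by
  obtain ⟨xh, -, h⟩ := Finset.exists_mem_eq_inf' Finset.univ_nonempty
    (fun xh : Xhat => ∑ x, ν x * d x xh)
  exact ⟨xh, h⟩

lemma decMin_nonneg (hd : ∀ x xh, 0 ≤ d x xh) {ν : X → ℝ} (h : 0 ≤ ν) : 0 ≤ decMin d ν :=
  Finset.le_inf' _ _ fun xh _ => Finset.sum_nonneg fun x _ => mul_nonneg (h x) (hd x xh)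

lemma decMin_superlin (d : X → Xhat → ℝ) : Superlin (decMin d) where
  add μ ν _ _ := by
    refine Finset.le_inf' _ _ fun xh _ => ?_
    simp only [Pi.add_apply, add_mul, Finset.sum_add_distrib]
    exact add_le_add (decMin_le μ xh) (decMin_le ν xh)
  smul c μ hc _ := by
    have e : ∀ xh, ∑ x, (c • μ) x * d x xh = c * ∑ x, μ x * d x xh := fun xh => by
      simp [Finset.mul_sum, mul_assoc]
    apply le_antisymm
    · obtain ⟨xh, h⟩ := exists_decMin d μ
      rw [h, ← e]
      exact decMin_le _ xh
    · obtain ⟨xh, h⟩ := exists_decMin d (c • μ)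
      rw [h, e]
      exact mul_le_mul_of_nonneg_left (decMin_le μ xh) hc

lemma stage_superlin (hβ : 0 ≤ β) (hK : IsMarkovMatrix K) {V : (X → ℝ) → ℝ} (hV : Superlin V) :
    Superlin (stage β K d V) where
  add μ ν hμ hν := by
    have h1 := (decMin_superlin d).add μ ν hμ hν
    have h2 := mul_le_mul_of_nonneg_left
      (hV.add _ _ (push_nonneg hK hμ) (push_nonneg hK hν)) hβ
    simp only [stage, push_add]
    linarith
  smul c μ hc hμ := by
    simp only [stage, push_smul, (decMin_superlin d).smul c μ hc hμ,
      hV.smul c _ hc (push_nonneg hK hμ)]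
    ring

variable [DecidableEq X] [Fintype M] [Nonempty M] [DecidableEq M]

lemma bell_le (V : (X → ℝ) → ℝ) (μ : X → ℝ) (Q : X → M) :
    bell M β K d V μ ≤ ∑ q, stage β K d V (restr μ Q q) :=
  Finset.inf'_le _ (Finset.mem_univ Q)

lemma exists_bell (M : Type*) [Fintype M] [Nonempty M] [DecidableEq M]
    (β : ℝ) (K : X → X → ℝ) (d : X → Xhat → ℝ) (V : (X → ℝ) → ℝ) (μ : X → ℝ) :
    ∃ Q : X → M, bell M β K d V μ = ∑ q, stage β K d V (restr μ Q q) := by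
  obtain ⟨Q, -, h⟩ := Finset.exists_mem_eq_inf' Finset.univ_nonempty
    (fun Q : X → M => ∑ q, stage β K d V (restr μ Q q))
  exact ⟨Q, h⟩

lemma bell_superlin (hβ : 0 ≤ β) (hK : IsMarkovMatrix K) {V : (X → ℝ) → ℝ} (hV : Superlin V) :
    Superlin (bell M β K d V) where
  add μ ν hμ hν := by
    obtain ⟨Q, h⟩ := exists_bell M β K d V (μ + ν)
    rw [h]
    refine (add_le_add (bell_le V μ Q) (bell_le V ν Q)).trans ?_
    rw [← Finset.sum_add_distrib]
    refine Finset.sum_le_sum fun q _ => ?_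
    rw [restr_add]
    exact (stage_superlin hβ hK hV).add _ _ (restr_nonneg hμ Q q) (restr_nonneg hν Q q)
  smul c μ hc hμ := by
    have e : ∀ Q : X → M, ∑ q, stage β K d V (restr (c • μ) Q q) =
        c * ∑ q, stage β K d V (restr μ Q q) := fun Q => by
      rw [Finset.mul_sum]
      refine Finset.sum_congr rfl fun q _ => ?_
      rw [restr_smul, (stage_superlin hβ hK hV).smul c _ hc (restr_nonneg hμ Q q)]
    apply le_antisymm
    · obtain ⟨Q, h⟩ := exists_bell M β K d V μ
      rw [h, ← e]
      exact bell_le V _ Q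
    · obtain ⟨Q, h⟩ := exists_bell M β K d V (c • μ)
      rw [h, e]
      exact mul_le_mul_of_nonneg_left (bell_le V μ Q) hc

lemma bell_mono (hβ : 0 ≤ β) (hK : IsMarkovMatrix K) {V V' : (X → ℝ) → ℝ}
    (h : ∀ μ, 0 ≤ μ → V μ ≤ V' μ) (μ : X → ℝ) (hμ : 0 ≤ μ) :
    bell M β K d V μ ≤ bell M β K d V' μ := by
  obtain ⟨Q, hQ⟩ := exists_bell M β K d V' μ
  rw [hQ]
  refine (bell_le V μ Q).trans (Finset.sum_le_sum fun q _ => ?_)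
  have := mul_le_mul_of_nonneg_left (h _ (push_nonneg hK (restr_nonneg hμ Q q))) hβ
  simp only [stage]
  linarith

/-- Multiples `B * mass` with `D + β B ≤ B`, `D` a bound on the distortion, are supersolutions
of the Bellman equation. -/
lemma bell_mass_le (hK : IsMarkovMatrix K) {D B : ℝ}
    (hD : ∀ x xh, d x xh ≤ D) (hB : D + β * B ≤ B) (μ : X → ℝ) (hμ : 0 ≤ μ) :
    bell M β K d (fun ν => B * ∑ x, ν x) μ ≤ B * ∑ x, μ x := by
  let q₀ : M := Classical.arbitrary M
  let xh : Xhat := Classical.arbitrary Xhat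
  refine (bell_le _ μ (fun _ => q₀)).trans ?_
  have h1 : ∀ q, stage β K d (fun ν => B * ∑ x, ν x) (restr μ (fun _ => q₀) q) ≤
      B * ∑ x, restr μ (fun _ => q₀) q x := fun q => by
    have hr := restr_nonneg hμ (fun _ => q₀) q
    have h2 : decMin d (restr μ (fun _ => q₀) q) ≤ D * ∑ x, restr μ (fun _ => q₀) q x := by
      refine (decMin_le _ xh).trans ?_
      rw [Finset.mul_sum]
      refine Finset.sum_le_sum fun x _ => ?_
      rw [mul_comm]
      exact mul_le_mul_of_nonneg_right (hD x xh) (hr x)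
    have h3 : 0 ≤ ∑ x, restr μ (fun _ => q₀) q x := Finset.sum_nonneg fun x _ => hr x
    simp only [stage, mass_push hK]
    nlinarith [mul_le_mul_of_nonneg_right hB h3]
  refine (Finset.sum_le_sum fun q _ => h1 q).trans ?_
  rw [← Finset.mul_sum, mass_restr]

lemma vIter_superlin (hβ : 0 ≤ β) (hK : IsMarkovMatrix K) (n : ℕ) :
    Superlin (vIter M β K d n) := by
  induction n with
  | zero => exact ⟨fun _ _ _ _ => by simp [vIter], fun _ _ _ _ => by simp [vIter]⟩
  | succ n ih => exact bell_superlin hβ hK ih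

lemma vIter_mono (hβ : 0 ≤ β) (hK : IsMarkovMatrix K) (hd : ∀ x xh, 0 ≤ d x xh)
    (μ : X → ℝ) (hμ : 0 ≤ μ) : Monotone fun n => vIter M β K d n μ := by
  refine monotone_nat_of_le_succ fun n => ?_
  induction n generalizing μ with
  | zero =>
    obtain ⟨Q, hQ⟩ := exists_bell M β K d (vIter M β K d 0) μ
    change 0 ≤ bell M β K d (vIter M β K d 0) μ
    rw [hQ]
    refine Finset.sum_nonneg fun q _ => ?_
    simpa [stage, vIter] using decMin_nonneg hd (restr_nonneg hμ Q q)
  | succ n ih => exact bell_mono hβ hK ih μ hμ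

lemma vIter_le (hβ : 0 ≤ β) (hK : IsMarkovMatrix K) {D B : ℝ} (hB0 : 0 ≤ B)
    (hD : ∀ x xh, d x xh ≤ D) (hB : D + β * B ≤ B) (n : ℕ) (μ : X → ℝ) (hμ : 0 ≤ μ) :
    vIter M β K d n μ ≤ B * ∑ x, μ x := by
  induction n generalizing μ with
  | zero => exact mul_nonneg hB0 (Finset.sum_nonneg fun x _ => hμ x)
  | succ n ih => exact (bell_mono hβ hK ih μ hμ).trans (bell_mass_le hK hD hB μ hμ)

/-- The discounted value function: a superlinear, bounded solution of the Bellman equation on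
nonnegative measures, obtained as the increasing limit of value iteration. -/
lemma exists_value (M : Type*) [Fintype M] [Nonempty M] [DecidableEq M]
    (hβ : β ∈ Set.Ioo (0 : ℝ) 1) (hK : IsMarkovMatrix K) (hd : ∀ x xh, 0 ≤ d x xh) :
    ∃ (V : (X → ℝ) → ℝ) (B : ℝ), Superlin V ∧
      (∀ μ, 0 ≤ μ → 0 ≤ V μ ∧ V μ ≤ B * ∑ x, μ x) ∧
      ∀ μ, 0 ≤ μ → V μ = bell M β K d V μ := by
  obtain ⟨hβ0, hβ1⟩ := hβ
  set D : ℝ := ∑ x, ∑ xh, d x xh with hDdef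
  have hD : ∀ x xh, d x xh ≤ D := fun x xh =>
    (Finset.single_le_sum (f := fun xh => d x xh) (fun y _ => hd x y) (Finset.mem_univ xh)).trans
      (Finset.single_le_sum (f := fun x => ∑ xh, d x xh)
        (fun y _ => Finset.sum_nonneg fun z _ => hd y z) (Finset.mem_univ x))
  have hD0 : 0 ≤ D := Finset.sum_nonneg fun x _ => Finset.sum_nonneg fun y _ => hd x y
  have h1β : 0 < 1 - β := by linarith
  set B := D / (1 - β) with hBdef
  have hB0 : 0 ≤ B := div_nonneg hD0 h1β.le
  have hB : D + β * B ≤ B := by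
    have : B * (1 - β) = D := div_mul_cancel₀ _ h1β.ne'
    nlinarith
  have hle := fun n => vIter_le (M := M) hβ0.le hK hB0 hD hB n
  set V : (X → ℝ) → ℝ := fun μ => ⨆ n, vIter M β K d n μ with hVdef
  have hbdd : ∀ μ : X → ℝ, 0 ≤ μ → BddAbove (Set.range fun n => vIter M β K d n μ) := by
    rintro μ hμ
    refine ⟨B * ∑ x, μ x, ?_⟩
    rintro _ ⟨n, rfl⟩
    exact hle n μ hμ
  have hlim : ∀ μ : X → ℝ, 0 ≤ μ →
      Tendsto (fun n => vIter M β K d n μ) atTop (𝓝 (V μ)) := fun μ hμ =>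
    tendsto_atTop_ciSup (vIter_mono hβ0.le hK hd μ hμ) (hbdd μ hμ)
  refine ⟨V, B, ⟨fun μ ν hμ hν => ?_, fun c μ hc hμ => ?_⟩, fun μ hμ => ⟨?_, ?_⟩, fun μ hμ => ?_⟩
  · exact le_of_tendsto_of_tendsto' ((hlim μ hμ).add (hlim ν hν)) (hlim _ (add_nonneg hμ hν))
      fun n => (vIter_superlin hβ0.le hK n).add μ ν hμ hν
  · refine tendsto_nhds_unique (hlim _ (smul_nonneg hc hμ)) ?_
    simp only [(vIter_superlin hβ0.le hK _).smul c μ hc hμ]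
    exact (hlim μ hμ).const_mul c
  · exact le_ciSup (hbdd μ hμ) 0
  · exact ciSup_le fun n => hle n μ hμ
  · refine tendsto_nhds_unique ((hlim μ hμ).comp (tendsto_add_atTop_nat 1)) ?_
    -- The minimum over the finitely many quantizers commutes with the limit.
    change Tendsto (fun n => Finset.univ.inf' Finset.univ_nonempty (fun Q : X → M =>
      ∑ q, stage β K d (vIter M β K d n) (restr μ Q q))) atTop (𝓝 _)
    refine Filter.Tendsto.finset_inf'_nhds_apply _ fun Q _ => tendsto_finsetSum _ fun q _ => ?_
    exact ((hlim _ (push_nonneg hK (restr_nonneg hμ Q q))).const_mul β).const_add _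

end Bellman

/-! ### Randomized quantizers -/

section Mixture

variable {X M Xhat : Type*}

lemma Superlin.sum_le {ι : Type*} {V : (X → ℝ) → ℝ} (hV : Superlin V) (s : Finset ι)
    (c : ι → ℝ) (f : ι → X → ℝ) (hc : ∀ i, 0 ≤ c i) (hf : ∀ i, 0 ≤ f i) :
    ∑ i ∈ s, c i * V (f i) ≤ V (∑ i ∈ s, c i • f i) := by
  classical
  induction s using Finset.induction_on with
  | empty => simpa using (hV.smul 0 0 le_rfl le_rfl).ge
  | insert i s hi ih =>
    rw [Finset.sum_insert hi, Finset.sum_insert hi, ← hV.smul _ _ (hc i) (hf i)]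
    refine (add_le_add_right ih _).trans (hV.add _ _ (smul_nonneg (hc i) (hf i)) ?_)
    exact Finset.sum_nonneg fun j _ => smul_nonneg (hc j) (hf j)

variable [Fintype X] [DecidableEq X] [Fintype M] [Nonempty M] [DecidableEq M]

/-- Every splitting `μ = ∑ q, ν q` is a mixture of the splittings of `μ` by deterministic
quantizers: the weight of `Q` is the product over `x` of the conditional probabilities of the
symbol `Q x` given `x`. -/
lemma exists_mixture (ν : M → X → ℝ) (hν : ∀ q, 0 ≤ ν q) :
    ∃ w : (X → M) → ℝ, (∀ Q, 0 ≤ w Q) ∧ ∑ Q, w Q = 1 ∧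
      ∀ q, ν q = ∑ Q, w Q • restr (∑ q, ν q) Q q := by
  set μ := ∑ q, ν q with hμ
  have hμ' : ∀ x, ∑ q, ν q x = μ x := fun x => by simp [hμ]
  let q₀ : M := Classical.arbitrary M
  -- The conditional law of the symbol given `x`; its value where `μ x = 0` is immaterial.
  let r : X → M → ℝ := fun x q => if μ x = 0 then (if q = q₀ then 1 else 0) else ν q x / μ x
  have hμ0 : ∀ x, 0 ≤ μ x := fun x => by
    rw [← hμ']; exact Finset.sum_nonneg fun q _ => hν q x
  have hr0 : ∀ x q, 0 ≤ r x q := fun x q => by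
    simp only [r]
    split_ifs
    · exact zero_le_one
    · exact le_rfl
    · exact div_nonneg (hν q x) (hμ0 x)
  have hr1 : ∀ x, ∑ q, r x q = 1 := fun x => by
    by_cases h : μ x = 0
    · simp [r, h]
    · simp only [r, h, if_false]
      rw [← Finset.sum_div, hμ', div_self h]
  have hrν : ∀ x q, r x q * μ x = ν q x := fun x q => by
    by_cases h : μ x = 0
    · have h0 : ∑ q, ν q x = 0 := by rw [hμ', h]
      rw [h, mul_zero, (Finset.sum_eq_zero_iff_of_nonneg fun q _ => hν q x).1 h0 q
        (Finset.mem_univ q)]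
    · simp [r, h]
  refine ⟨fun Q => ∏ x, r x (Q x), fun Q => Finset.prod_nonneg fun x _ => hr0 x _, ?_, ?_⟩
  · have := Finset.prod_univ_sum (fun _ : X => (Finset.univ : Finset M)) r
    rw [Fintype.piFinset_univ] at this
    rw [← this]
    simp [hr1]
  · intro q
    ext x
    -- Expanding the product with the factor at `x` restricted to the symbol `q`.
    have := Finset.prod_univ_sum (fun _ : X => (Finset.univ : Finset M))
      (fun y p => if y = x then (if p = q then r y p else 0) else r y p)
    rw [Fintype.piFinset_univ] at this
    have hL : ∏ y, ∑ p, (if y = x then (if p = q then r y p else 0) else r y p) = r x q := by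
      rw [Finset.prod_eq_single x]
      · simp
      · intro y _ hy
        simp [hy, hr1]
      · simp
    have hR : ∀ Q : X → M, ∏ y, (if y = x then (if Q y = q then r y (Q y) else 0) else r y (Q y)) =
        if Q x = q then ∏ y, r y (Q y) else 0 := fun Q => by
      split_ifs with h
      · refine Finset.prod_congr rfl fun y _ => ?_
        split_ifs with h1 h2
        · rfl
        · exact absurd (h1 ▸ h) h2
        · rfl
      · exact Finset.prod_eq_zero (Finset.mem_univ x) (by simp [h])
    rw [hL, Finset.sum_congr rfl fun Q _ => hR Q] at this
    rw [← hrν, this, Finset.sum_apply, Finset.sum_mul]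
    refine Finset.sum_congr rfl fun Q _ => ?_
    simp [restr]

variable [Fintype Xhat] [Nonempty Xhat] {K : X → X → ℝ} {d : X → Xhat → ℝ} {β : ℝ}

/-- Randomized quantization, hence quantization that also looks at past source samples, cannot
beat the Bellman minimum over deterministic quantizers of the current sample. -/
lemma bell_le_split (hβ : 0 ≤ β) (hK : IsMarkovMatrix K) {V : (X → ℝ) → ℝ} (hV : Superlin V)
    (ν : M → X → ℝ) (hν : ∀ q, 0 ≤ ν q) :
    bell M β K d V (∑ q, ν q) ≤ ∑ q, stage β K d V (ν q) := by
  obtain ⟨w, hw0, hw1, hw⟩ := exists_mixture ν hν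
  have hS := stage_superlin (d := d) hβ hK hV
  have hμ : 0 ≤ ∑ q, ν q := Finset.sum_nonneg fun q _ => hν q
  calc bell M β K d V (∑ q, ν q) = ∑ Q, w Q * bell M β K d V (∑ q, ν q) := by
        rw [← Finset.sum_mul, hw1, one_mul]
    _ ≤ ∑ Q, w Q * ∑ q, stage β K d V (restr (∑ q, ν q) Q q) :=
        Finset.sum_le_sum fun Q _ => mul_le_mul_of_nonneg_left (bell_le V _ Q) (hw0 Q)
    _ = ∑ q, ∑ Q, w Q * stage β K d V (restr (∑ q, ν q) Q q) := by
        simp only [Finset.mul_sum]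
        exact Finset.sum_comm
    _ ≤ ∑ q, stage β K d V (ν q) := Finset.sum_le_sum fun q _ => by
        conv_rhs => rw [hw q]
        exact hS.sum_le _ _ _ hw0 fun Q => restr_nonneg hμ Q q

end Mixture

/-! ### Joint laws of symbol histories and source samples -/

section Occupation

variable {X M Xhat : Type*}

lemma qSeq_eq (γ : EncPolicy X M) (x : ℕ → X) (t : ℕ) :
    qSeq γ x t = γ t (fun i => qSeq γ x i.val) (fun i => x i.val) := by
  rw [qSeq]

lemma qSeq_congr (γ : EncPolicy X M) (x y : ℕ → X) (t : ℕ) (h : ∀ s ≤ t, x s = y s) :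
    qSeq γ x t = qSeq γ y t := by
  induction t using Nat.strong_induction_on with
  | _ t ih =>
    rw [qSeq_eq, qSeq_eq γ y]
    congr 1
    · ext i
      exact ih i i.isLt fun s hs => h s (hs.trans i.isLt.le)
    · ext i
      exact h i (Nat.lt_succ_iff.1 i.isLt)

lemma sum_snoc {A : Type*} [Fintype A] (n : ℕ) (F : (Fin (n + 1) → A) → ℝ) :
    ∑ f, F f = ∑ g : Fin n → A, ∑ a, F (Fin.snoc g a) := by
  rw [← (Fin.snocEquiv fun _ : Fin (n + 1) => A).sum_comp, Fintype.sum_prod_type_right]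
  rfl

/-- The history of length `t + 1` consists of the one of length `t` and of the last symbol. -/
lemma hist_eq_snoc (γ : EncPolicy X M) (x : ℕ → X) (t : ℕ) (h : Fin t → M) (q : M) :
    ((fun i : Fin (t + 1) => qSeq γ x i.val) = Fin.snoc h q) ↔
      (fun i : Fin t => qSeq γ x i.val) = h ∧ qSeq γ x t = q := by
  constructor
  · intro e
    refine ⟨funext fun i => ?_, ?_⟩
    · simpa using congrFun e i.castSucc
    · simpa using congrFun e (Fin.last t)
  · rintro ⟨rfl, rfl⟩
    ext i
    refine Fin.lastCases ?_ (fun i => ?_) i <;> simp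

lemma extPath_snoc [Nonempty X] (t : ℕ) (y : Fin (t + 1) → X) (z : X) (s : ℕ) (hs : s ≤ t) :
    extPath (t + 1) (Fin.snoc y z) s = extPath t y s := by
  have h1 : s < t + 1 := by omega
  have h2 : s < t + 1 + 1 := by omega
  simp only [extPath, h1, h2, dif_pos]
  exact Fin.snoc_castSucc (α := fun _ => X) z y ⟨s, h1⟩

lemma pathProb_snoc [Fintype X] (K : X → X → ℝ) (π₀ : X → ℝ) (t : ℕ) (y : Fin (t + 1) → X) (z : X) :
    pathProb K π₀ (t + 1) (Fin.snoc y z) = pathProb K π₀ t y * K (y (Fin.last t)) z := by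
  have h0 : (Fin.snoc y z : Fin (t + 2) → X) 0 = y 0 :=
    Fin.snoc_castSucc (α := fun _ => X) z y 0
  have h1 : ∀ i : Fin (t + 1), (Fin.snoc y z : Fin (t + 2) → X) i.castSucc = y i := fun i =>
    Fin.snoc_castSucc (α := fun _ => X) z y i
  have h2 : ∀ i : Fin t, (Fin.snoc y z : Fin (t + 2) → X) i.castSucc.succ = y i.succ := fun i => by
    rw [Fin.succ_castSucc]; exact h1 _
  have h3 : (Fin.snoc y z : Fin (t + 2) → X) (Fin.last t).succ = z :=
    Fin.snoc_last (α := fun _ => X) z y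
  simp only [pathProb, Fin.prod_univ_castSucc (n := t), h0, h1, h2, h3, mul_assoc]

variable [Fintype X] [Nonempty X] [DecidableEq X] [DecidableEq M]

/-- The joint law of the channel symbols up to time `t` and the source sample at time `t`,
as an unnormalized measure on `X` for every symbol history `h`. -/
noncomputable def occ (K : X → X → ℝ) (π₀ : X → ℝ) (γ : EncPolicy X M) (t : ℕ)
    (h : Fin (t + 1) → M) : X → ℝ :=
  fun x' => ∑ x : Fin (t + 1) → X,
    if (fun i : Fin (t + 1) => qSeq γ (extPath t x) i.val) = h ∧ x (Fin.last t) = x'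
      then pathProb K π₀ t x else 0

variable {K : X → X → ℝ} {π₀ : X → ℝ}

lemma occ_nonneg (hK : IsMarkovMatrix K) (hπ : 0 ≤ π₀) (γ : EncPolicy X M) (t : ℕ)
    (h : Fin (t + 1) → M) : 0 ≤ occ K π₀ γ t h := by
  intro x'
  refine Finset.sum_nonneg fun x _ => ?_
  split_ifs
  · exact mul_nonneg (hπ _) (Finset.prod_nonneg fun i _ => (hK _).1 _)
  · exact le_rfl

lemma expDist_eq [Fintype M] (d : X → Xhat → ℝ) (γ : EncPolicy X M) (δ : DecPolicy M Xhat)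
    (t : ℕ) :
    expDist K π₀ d γ δ t = ∑ h, ∑ x', occ K π₀ γ t h x' * d x' (δ t h) := by
  simp only [expDist, occ, Finset.sum_mul]
  have : ∀ h : Fin (t + 1) → M, ∑ x' : X, ∑ x : Fin (t + 1) → X,
      (if (fun i : Fin (t + 1) => qSeq γ (extPath t x) i.val) = h ∧ x (Fin.last t) = x'
      then pathProb K π₀ t x else 0) * d x' (δ t h) = ∑ x : Fin (t + 1) → X,
      if (fun i : Fin (t + 1) => qSeq γ (extPath t x) i.val) = h then
        pathProb K π₀ t x * d (x (Fin.last t)) (δ t h) else 0 := fun h => by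
    rw [Finset.sum_comm]
    refine Finset.sum_congr rfl fun x _ => ?_
    rw [Finset.sum_eq_single (x (Fin.last t))]
    · simp [ite_mul]
    · intro y _ hy
      simp [hy.symm]
    · simp
  simp only [this]
  rw [Finset.sum_comm]
  refine Finset.sum_congr rfl fun x _ => ?_
  rw [Finset.sum_ite_eq]
  simp

/-- Summing out the last symbol. -/
lemma sum_occ_snoc [Fintype M] (γ : EncPolicy X M) (t : ℕ) (h : Fin t → M) (x' : X) :
    ∑ q, occ K π₀ γ t (Fin.snoc h q) x' = ∑ x : Fin (t + 1) → X,
      if (fun i : Fin t => qSeq γ (extPath t x) i.val) = h ∧ x (Fin.last t) = x'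
      then pathProb K π₀ t x else 0 := by
  simp only [occ, hist_eq_snoc]
  rw [Finset.sum_comm]
  refine Finset.sum_congr rfl fun x _ => ?_
  by_cases h1 : (fun i : Fin t => qSeq γ (extPath t x) i.val) = h <;>
    by_cases h2 : x (Fin.last t) = x' <;> simp [h1, h2]

/-- The predictor recursion for the unnormalized laws. -/
lemma sum_occ_succ [Fintype M] (γ : EncPolicy X M) (t : ℕ) (h : Fin (t + 1) → M) :
    ∑ q, occ K π₀ γ (t + 1) (Fin.snoc h q) = push K (occ K π₀ γ t h) := by
  ext x'
  rw [Finset.sum_apply, sum_occ_snoc, sum_snoc]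
  have hq : ∀ (y : Fin (t + 1) → X) (z : X),
      (fun i : Fin (t + 1) => qSeq γ (extPath (t + 1) (Fin.snoc y z)) i.val) =
      (fun i : Fin (t + 1) => qSeq γ (extPath t y) i.val) := fun y z => by
    ext i
    exact qSeq_congr _ _ _ _ fun s hs => extPath_snoc t y z s (by omega)
  simp only [hq, Fin.snoc_last, pathProb_snoc, push, occ, Finset.sum_mul]
  rw [Finset.sum_comm (s := (Finset.univ : Finset X))]
  refine Finset.sum_congr rfl fun y _ => ?_
  by_cases h1 : (fun i : Fin (t + 1) => qSeq γ (extPath t y) i.val) = h <;> simp [h1]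

lemma sum_occ_zero [Fintype M] (γ : EncPolicy X M) (h : Fin 0 → M) :
    ∑ q, occ K π₀ γ 0 (Fin.snoc h q) = π₀ := by
  ext x'
  rw [Finset.sum_apply, sum_occ_snoc, ← (Equiv.funUnique (Fin 1) X).symm.sum_comp]
  have : ∀ x, (fun i : Fin 0 => qSeq γ (extPath 0 ((Equiv.funUnique (Fin 1) X).symm x)) i.val) = h :=
    fun x => Subsingleton.elim _ _
  simp only [this, true_and]
  simp [pathProb]

lemma mass_occ [Fintype M] (hK : IsMarkovMatrix K) (γ : EncPolicy X M) (t : ℕ) :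
    ∑ h, ∑ x, occ K π₀ γ t h x = ∑ x, π₀ x := by
  have swap : ∀ (t : ℕ) (h : Fin t → M), ∑ q, ∑ x, occ K π₀ γ t (Fin.snoc h q) x =
      ∑ x, (∑ q, occ K π₀ γ t (Fin.snoc h q)) x := fun t h => by
    rw [Finset.sum_comm]
    simp
  induction t with
  | zero =>
    rw [sum_snoc]
    simp only [swap, sum_occ_zero]
    simp
  | succ t ih =>
    rw [sum_snoc]
    simp only [swap, sum_occ_succ, mass_push hK]
    exact ih

end Occupation

/-! ### Verification: lower bound and attainment -/

section Verification

variable {X M Xhat : Type*} [Fintype X] [Nonempty X] [DecidableEq X]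
  [Fintype M] [DecidableEq M]

/-- Expected value of `V` at the unnormalized predictor of time `t`. -/
noncomputable def predVal (K : X → X → ℝ) (π₀ : X → ℝ) (γ : EncPolicy X M)
    (V : (X → ℝ) → ℝ) (t : ℕ) : ℝ :=
  ∑ h : Fin t → M, V (∑ q, occ K π₀ γ t (Fin.snoc h q))

variable {K : X → X → ℝ} {π₀ : X → ℝ} {d : X → Xhat → ℝ} {β : ℝ} {V : (X → ℝ) → ℝ}

lemma predVal_zero (γ : EncPolicy X M) : predVal K π₀ γ V 0 = V π₀ := by
  simp [predVal, sum_occ_zero]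

lemma predVal_succ (γ : EncPolicy X M) (t : ℕ) :
    predVal K π₀ γ V (t + 1) = ∑ h, V (push K (occ K π₀ γ t h)) := by
  simp [predVal, sum_occ_succ]

lemma sum_stage_occ [Fintype Xhat] [Nonempty Xhat] (γ : EncPolicy X M) (t : ℕ) :
    ∑ h : Fin t → M, ∑ q, stage β K d V (occ K π₀ γ t (Fin.snoc h q)) =
      ∑ h, decMin d (occ K π₀ γ t h) + β * predVal K π₀ γ V (t + 1) := by
  rw [← sum_snoc t (fun h => stage β K d V (occ K π₀ γ t h)), predVal_succ, Finset.mul_sum,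
    ← Finset.sum_add_distrib]
  rfl

lemma predVal_bounds (hK : IsMarkovMatrix K) (hπ : π₀ ∈ stdSimplex ℝ X) {B : ℝ}
    (hV : ∀ μ, 0 ≤ μ → 0 ≤ V μ ∧ V μ ≤ B * ∑ x, μ x) (γ : EncPolicy X M) (t : ℕ) :
    0 ≤ predVal K π₀ γ V t ∧ predVal K π₀ γ V t ≤ B := by
  have h0 : ∀ h : Fin t → M, 0 ≤ ∑ q, occ K π₀ γ t (Fin.snoc h q) := fun h =>
    Finset.sum_nonneg fun q _ => occ_nonneg hK hπ.1 γ t _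
  refine ⟨Finset.sum_nonneg fun h _ => (hV _ (h0 h)).1, ?_⟩
  refine (Finset.sum_le_sum fun h _ => (hV _ (h0 h)).2).trans ?_
  rw [← Finset.mul_sum]
  have := mass_occ (π₀ := π₀) hK γ t
  rw [sum_snoc, hπ.2] at this
  simp only [Finset.sum_apply]
  rw [Finset.sum_congr rfl fun h _ => Finset.sum_comm, this, mul_one]

lemma expDist_bounds [Fintype Xhat] (hK : IsMarkovMatrix K) (hπ : π₀ ∈ stdSimplex ℝ X)
    (hd : ∀ x xh, 0 ≤ d x xh) (γ : EncPolicy X M) (δ : DecPolicy M Xhat) (t : ℕ) :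
    0 ≤ expDist K π₀ d γ δ t ∧ expDist K π₀ d γ δ t ≤ ∑ x, ∑ xh, d x xh := by
  have hD : ∀ x xh, d x xh ≤ ∑ x, ∑ xh, d x xh := fun x xh =>
    (Finset.single_le_sum (f := fun xh => d x xh) (fun y _ => hd x y) (Finset.mem_univ xh)).trans
      (Finset.single_le_sum (f := fun x => ∑ xh, d x xh)
        (fun y _ => Finset.sum_nonneg fun z _ => hd y z) (Finset.mem_univ x))
  rw [expDist_eq]
  have ho := occ_nonneg hK hπ.1 γ t
  refine ⟨Finset.sum_nonneg fun h _ => Finset.sum_nonneg fun x _ => mul_nonneg (ho h x) (hd _ _), ?_⟩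
  refine (Finset.sum_le_sum fun h _ => Finset.sum_le_sum fun x _ =>
    mul_le_mul_of_nonneg_left (hD x _) (ho h x)).trans ?_
  simp only [← Finset.sum_mul]
  rw [mass_occ hK, hπ.2, one_mul]

lemma summable_disc [Fintype Xhat] (hβ : β ∈ Set.Ioo (0 : ℝ) 1) (hK : IsMarkovMatrix K)
    (hπ : π₀ ∈ stdSimplex ℝ X) (hd : ∀ x xh, 0 ≤ d x xh) (γ : EncPolicy X M)
    (δ : DecPolicy M Xhat) : Summable fun t => β ^ t * expDist K π₀ d γ δ t := by
  refine Summable.of_nonneg_of_le (fun t => ?_) (fun t => ?_)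
    ((summable_geometric_of_lt_one hβ.1.le hβ.2).mul_right (∑ x, ∑ xh, d x xh))
  · exact mul_nonneg (pow_nonneg hβ.1.le t) (expDist_bounds hK hπ hd γ δ t).1
  · exact mul_le_mul_of_nonneg_left (expDist_bounds hK hπ hd γ δ t).2 (pow_nonneg hβ.1.le t)

/-- Under a Walrand–Varaiya policy the last symbol quantizes the predictor. -/
lemma occ_ws (γws : (X → ℝ) → X → M) (t : ℕ) (h : Fin t → M) (q : M) :
    occ K π₀ (wsEncoder K γws π₀) t (Fin.snoc h q) =
      restr (∑ q, occ K π₀ (wsEncoder K γws π₀) t (Fin.snoc h q))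
        (γws (predOfHist K γws π₀ t h)) q := by
  ext x'
  simp only [restr]
  rw [Finset.sum_apply, sum_occ_snoc]
  simp only [occ, hist_eq_snoc]
  have hlast : ∀ x : Fin (t + 1) → X, extPath t x t = x (Fin.last t) := fun x => by
    simp [extPath, Fin.last]
  have key : ∀ x : Fin (t + 1) → X,
      (fun i : Fin t => qSeq (wsEncoder K γws π₀) (extPath t x) i.val) = h →
      qSeq (wsEncoder K γws π₀) (extPath t x) t =
        γws (predOfHist K γws π₀ t h) (x (Fin.last t)) := fun x hx => by
    rw [qSeq_eq, hx]
    simp [wsEncoder, hlast]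
  have key2 : ∀ x : Fin (t + 1) → X,
      (if ((fun i : Fin t => qSeq (wsEncoder K γws π₀) (extPath t x) i.val) = h ∧
          qSeq (wsEncoder K γws π₀) (extPath t x) t = q) ∧ x (Fin.last t) = x'
        then pathProb K π₀ t x else 0) =
      if γws (predOfHist K γws π₀ t h) x' = q then
        (if (fun i : Fin t => qSeq (wsEncoder K γws π₀) (extPath t x) i.val) = h ∧
          x (Fin.last t) = x' then pathProb K π₀ t x else 0) else 0 := fun x => by
    by_cases h1 : (fun i : Fin t => qSeq (wsEncoder K γws π₀) (extPath t x) i.val) = h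
    · by_cases h2 : x (Fin.last t) = x'
      · simp [h1, h2, key x h1]
      · simp [h2]
    · simp [h1]
  rw [Finset.sum_congr rfl fun x _ => key2 x]
  split_ifs <;> simp

/-- Along every symbol history the unnormalized predictor is a multiple of the predictor. -/
lemma pred_prop (hK : IsMarkovMatrix K) (hπ : 0 ≤ π₀) (γws : (X → ℝ) → X → M) (t : ℕ)
    (h : Fin t → M) : 0 ≤ predOfHist K γws π₀ t h ∧ ∃ c : ℝ, 0 ≤ c ∧
      ∑ q, occ K π₀ (wsEncoder K γws π₀) t (Fin.snoc h q) = c • predOfHist K γws π₀ t h := by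
  induction t with
  | zero => exact ⟨hπ, 1, zero_le_one, by rw [sum_occ_zero, one_smul]; rfl⟩
  | succ t ih =>
    obtain ⟨hp, c, hc, hcp⟩ := ih fun i => h i.castSucc
    refine ⟨nextPred_nonneg hK hp _ _,
      c * ∑ x ∈ Finset.univ.filter (fun x => γws (predOfHist K γws π₀ t fun i => h i.castSucc) x =
        h (Fin.last t)), predOfHist K γws π₀ t (fun i => h i.castSucc) x,
      mul_nonneg hc (Finset.sum_nonneg fun x _ => hp x), ?_⟩
    have hh : h = Fin.snoc (fun i => h i.castSucc) (h (Fin.last t)) :=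
      (Fin.snoc_init_self h).symm
    have h1 := occ_ws (K := K) (π₀ := π₀) γws t (fun i => h i.castSucc) (h (Fin.last t))
    rw [hcp, restr_smul, ← hh] at h1
    rw [sum_occ_succ, h1, push_smul, push_restr hp, smul_smul]
    rfl

variable [Fintype Xhat] [Nonempty Xhat] [Nonempty M]

/-- The value function bounds the cost of every encoder and decoder from below. -/
lemma value_le_discCost (hβ : β ∈ Set.Ioo (0 : ℝ) 1) (hK : IsMarkovMatrix K)
    (hπ : π₀ ∈ stdSimplex ℝ X) (hd : ∀ x xh, 0 ≤ d x xh) {B : ℝ} (hS : Superlin V)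
    (hV : ∀ μ, 0 ≤ μ → 0 ≤ V μ ∧ V μ ≤ B * ∑ x, μ x)
    (hbell : ∀ μ, 0 ≤ μ → V μ = bell M β K d V μ) (γ : EncPolicy X M) (δ : DecPolicy M Xhat) :
    V π₀ ≤ discCost β K π₀ d γ δ := by
  have step : ∀ t, predVal K π₀ γ V t ≤
      expDist K π₀ d γ δ t + β * predVal K π₀ γ V (t + 1) := fun t => by
    have h1 : predVal K π₀ γ V t ≤
        ∑ h : Fin t → M, ∑ q, stage β K d V (occ K π₀ γ t (Fin.snoc h q)) := by
      refine Finset.sum_le_sum fun h _ => ?_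
      have ho := fun q => occ_nonneg hK hπ.1 γ t (Fin.snoc h q)
      rw [hbell _ (Finset.sum_nonneg fun q _ => ho q)]
      exact bell_le_split hβ.1.le hK hS _ ho
    rw [sum_stage_occ] at h1
    rw [expDist_eq]
    exact h1.trans (add_le_add_left (Finset.sum_le_sum fun h _ => decMin_le _ _) _)
  have hT : ∀ T, V π₀ ≤ ∑ t ∈ Finset.range T, β ^ t * expDist K π₀ d γ δ t +
      β ^ T * predVal K π₀ γ V T := fun T => by
    induction T with
    | zero => simp [predVal_zero]
    | succ T ih =>
      have := mul_le_mul_of_nonneg_left (step T) (pow_nonneg hβ.1.le T)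
      rw [Finset.sum_range_succ, pow_succ]
      linarith
  have h1 := (summable_disc hβ hK hπ hd γ δ).hasSum.tendsto_sum_nat
  have h2 := (tendsto_pow_atTop_nhds_zero_of_lt_one hβ.1.le hβ.2).mul_const B
  have h3 := h1.add h2
  rw [zero_mul, add_zero] at h3
  refine ge_of_tendsto' h3 fun T => (hT T).trans (add_le_add_right ?_ _)
  exact mul_le_mul_of_nonneg_left (predVal_bounds hK hπ hV γ T).2 (pow_nonneg hβ.1.le T)

/-- A stationary policy that picks Bellman minimizers attains the value function. -/
lemma exists_dec_discCost_le (hβ : β ∈ Set.Ioo (0 : ℝ) 1) (hK : IsMarkovMatrix K)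
    (hπ : π₀ ∈ stdSimplex ℝ X) (hd : ∀ x xh, 0 ≤ d x xh) {B : ℝ} (hS : Superlin V)
    (hV : ∀ μ, 0 ≤ μ → 0 ≤ V μ ∧ V μ ≤ B * ∑ x, μ x)
    (hbell : ∀ μ, 0 ≤ μ → V μ = bell M β K d V μ) (γws : (X → ℝ) → X → M)
    (hγ : ∀ μ, bell M β K d V μ = ∑ q, stage β K d V (restr μ (γws μ) q)) :
    ∃ δ : DecPolicy M Xhat, discCost β K π₀ d (wsEncoder K γws π₀) δ ≤ V π₀ := by
  set γ := wsEncoder K γws π₀ with hγdef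
  obtain ⟨δ, hδ⟩ : ∃ δ : DecPolicy M Xhat, ∀ t h,
      decMin d (occ K π₀ γ t h) = ∑ x, occ K π₀ γ t h x * d x (δ t h) :=
    ⟨fun t h => (exists_decMin d (occ K π₀ γ t h)).choose,
      fun t h => (exists_decMin d (occ K π₀ γ t h)).choose_spec⟩
  refine ⟨δ, ?_⟩
  have step : ∀ t, predVal K π₀ γ V t =
      expDist K π₀ d γ δ t + β * predVal K π₀ γ V (t + 1) := fun t => by
    have h1 : predVal K π₀ γ V t =
        ∑ h : Fin t → M, ∑ q, stage β K d V (occ K π₀ γ t (Fin.snoc h q)) := by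
      refine Finset.sum_congr rfl fun h _ => ?_
      obtain ⟨hp, c, hc, hcp⟩ := pred_prop hK hπ.1 γws t h
      -- By homogeneity the minimizer at the predictor also serves its multiple.
      rw [hcp, hS.smul c _ hc hp, hbell _ hp, hγ, Finset.mul_sum]
      refine Finset.sum_congr rfl fun q _ => ?_
      rw [hγdef, occ_ws, hcp, restr_smul,
        (stage_superlin hβ.1.le hK hS).smul c _ hc (restr_nonneg hp _ q)]
    rw [h1, sum_stage_occ, expDist_eq]
    simp only [hδ]
  have hT : ∀ T, V π₀ = ∑ t ∈ Finset.range T, β ^ t * expDist K π₀ d γ δ t +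
      β ^ T * predVal K π₀ γ V T := fun T => by
    induction T with
    | zero => simp [predVal_zero]
    | succ T ih =>
      rw [ih, Finset.sum_range_succ, pow_succ, step T]
      ring
  refine Real.tsum_le_of_sum_range_le
    (fun t => mul_nonneg (pow_nonneg hβ.1.le t) (expDist_bounds hK hπ hd γ δ t).1) fun T => ?_
  rw [hT T]
  exact le_add_of_nonneg_right
    (mul_nonneg (pow_nonneg hβ.1.le T) (predVal_bounds hK hπ hV γ T).1)

end Verification

/-- For every discount factor `β ∈ (0,1)` there exists a stationary
Walrand–Varaiya type encoder policy that is optimal for the discounted cost zero-delay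
coding problem, simultaneously for every initial distribution `π₀ ∈ P(𝕏)`. -/
theorem stmt1 {X M Xhat : Type*}
    [Fintype X] [Nonempty X] [DecidableEq X]
    [Fintype M] [Nonempty M] [DecidableEq M]
    [Fintype Xhat] [Nonempty Xhat]
    (K : X → X → ℝ) (hK : IsMarkovMatrix K) (hprim : IsPrimitiveMat K)
    (d : X → Xhat → ℝ) (hd : ∀ x xh, 0 ≤ d x xh) :
    ∀ β ∈ Set.Ioo (0 : ℝ) 1,
      ∃ γws : (X → ℝ) → X → M,
        ∀ π₀ ∈ stdSimplex ℝ X,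
          discJ β K π₀ d (wsEncoder K γws π₀) = discJstar M β K π₀ d := by
  intro β hβ
  obtain ⟨V, B, hS, hV, hbell⟩ := exists_value (d := d) M hβ hK hd
  choose γws hγ using exists_bell M β K d V
  refine ⟨γws, fun π₀ hπ => ?_⟩
  have hlow : ∀ (γ : EncPolicy X M) (δ : DecPolicy M Xhat), V π₀ ≤ discCost β K π₀ d γ δ :=
    value_le_discCost hβ hK hπ hd hS hV hbell
  have : Nonempty (EncPolicy X M) := ⟨fun _ _ _ => Classical.arbitrary M⟩
  have : Nonempty (DecPolicy M Xhat) := ⟨fun _ _ => Classical.arbitrary Xhat⟩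
  have hlowJ : ∀ γ : EncPolicy X M, V π₀ ≤ discJ β K π₀ d γ := fun γ => le_ciInf (hlow γ)
  obtain ⟨δ, hδ⟩ := exists_dec_discCost_le hβ hK hπ hd hS hV hbell γws hγ
  have hup : discJ β K π₀ d (wsEncoder K γws π₀) ≤ V π₀ :=
    (ciInf_le ⟨V π₀, by rintro _ ⟨δ', rfl⟩; exact hlow _ δ'⟩ δ).trans hδ
  refine le_antisymm (hup.trans (le_ciInf hlowJ)) ?_
  exact ciInf_le ⟨V π₀, by rintro _ ⟨γ, rfl⟩; exact hlowJ γ⟩ _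
end

section
/- The transition kernel P(dπ_{t+1} | π_t, Q_t) of the zero-delay coding MDP is weakly continuous: for every continuous and bounded function g : P(𝕏) → ℝ, the map (π, Q) ↦ ∫ g(π') P(dπ' | π, Q) is continuous on P(𝕏) × 𝒬 (where P(𝕏) carries the weak convergence topology and 𝒬 is discrete). -/
/-!
Since `𝒬` is finite and discrete, continuity need only be checked in `π` for a fixed quantizer `Q`,
and then separately for each symbol `q`. Where `π(Q⁻¹(q)) > 0`, the updated predictor is a quotient
of continuous functions with nonvanishing denominator and takes values in the simplex, so the
summand is continuous there. Where `π(Q⁻¹(q)) = 0`, the predictor may be discontinuous, but the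
summand is bounded by `C * π(Q⁻¹(q))`, with `C` a bound for `|g|`, and so tends to `0`, its value.
-/

open Filter MeasureTheory Finset Set Topology

lemma nextPred_mem_stdSimplex {X M : Type*} [Fintype X] [DecidableEq M]
    {K : X → X → ℝ} (hK : IsMarkovMatrix K) {π : X → ℝ} (hπ : π ∈ stdSimplex ℝ X)
    (Q : X → M) (q : M) (hm : ∑ x ∈ Finset.univ.filter (fun x => Q x = q), π x ≠ 0) :
    nextPred K π Q q ∈ stdSimplex ℝ X := by
  refine ⟨fun x' => ?_, ?_⟩
  · exact div_nonneg (Finset.sum_nonneg fun x _ => mul_nonneg ((hK x).1 x') (hπ.1 x))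
      (Finset.sum_nonneg fun x _ => hπ.1 x)
  · unfold nextPred
    rw [← Finset.sum_div, Finset.sum_comm, div_eq_one_iff_eq hm]
    refine Finset.sum_congr rfl fun x _ => ?_
    rw [← Finset.sum_mul, (hK x).2, one_mul]

/-- The bound that controls the summand near distributions giving the cell `Q⁻¹(q)` no mass; on such
distributions themselves `nextPred` is the junk value `0`, which the factor `0` cancels. -/
lemma abs_mass_mul_le {X M : Type*} [Fintype X] [DecidableEq M]
    {K : X → X → ℝ} (hK : IsMarkovMatrix K) {g : (X → ℝ) → ℝ} {C : ℝ}
    (hC : ∀ π ∈ stdSimplex ℝ X, |g π| ≤ C) {π : X → ℝ} (hπ : π ∈ stdSimplex ℝ X)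
    (Q : X → M) (q : M) :
    |(∑ x ∈ Finset.univ.filter (fun x => Q x = q), π x) * g (nextPred K π Q q)| ≤
      (∑ x ∈ Finset.univ.filter (fun x => Q x = q), π x) * C := by
  by_cases hm : ∑ x ∈ Finset.univ.filter (fun x => Q x = q), π x = 0
  · simp [hm]
  · have h0 : 0 ≤ ∑ x ∈ Finset.univ.filter (fun x => Q x = q), π x :=
      Finset.sum_nonneg fun x _ => hπ.1 x
    rw [abs_mul, abs_of_nonneg h0]
    exact mul_le_mul_of_nonneg_left (hC _ (nextPred_mem_stdSimplex hK hπ Q q hm)) h0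

/-- Continuity in `π` of the contribution of a single symbol, for a fixed quantizer. -/
lemma continuousOn_mass_mul {X M : Type*} [Fintype X] [DecidableEq M]
    {K : X → X → ℝ} (hK : IsMarkovMatrix K) {g : (X → ℝ) → ℝ}
    (hg : ContinuousOn g (stdSimplex ℝ X)) {C : ℝ}
    (hC : ∀ π ∈ stdSimplex ℝ X, |g π| ≤ C) (Q : X → M) (q : M) :
    ContinuousOn (fun π : X → ℝ =>
      (∑ x ∈ Finset.univ.filter (fun x => Q x = q), π x) * g (nextPred K π Q q))
      (stdSimplex ℝ X) := by
  have hmass : Continuous fun π : X → ℝ =>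
      ∑ x ∈ Finset.univ.filter (fun x => Q x = q), π x := by fun_prop
  intro π₀ hπ₀
  by_cases hm : ∑ x ∈ Finset.univ.filter (fun x => Q x = q), π₀ x = 0
  · unfold ContinuousWithinAt
    beta_reduce
    rw [hm, zero_mul]
    refine squeeze_zero_norm' (a := fun π : X → ℝ =>
      (∑ x ∈ Finset.univ.filter (fun x => Q x = q), π x) * C) ?_ ?_
    · filter_upwards [self_mem_nhdsWithin] with π hπ
      exact abs_mass_mul_le hK hC hπ Q q
    · have h := ((hmass.mul_const C).tendsto π₀).mono_left
        (nhdsWithin_le_nhds (s := stdSimplex ℝ X))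
      simpa only [hm, zero_mul] using h
  · refine hmass.continuousWithinAt.mul ?_
    have hpred : ContinuousAt (fun π : X → ℝ => nextPred K π Q q) π₀ := by
      refine continuousAt_pi.2 fun x' => ?_
      have hnum : Continuous fun π : X → ℝ =>
          ∑ x ∈ Finset.univ.filter (fun x => Q x = q), K x x' * π x := by fun_prop
      exact hnum.continuousAt.div hmass.continuousAt hm
    -- The mass stays nonzero near `π₀`, so the predictor remains in the simplex, where `g` is
    -- continuous.
    refine (hg _ (nextPred_mem_stdSimplex hK hπ₀ Q q hm)).tendsto.comp
      (tendsto_nhdsWithin_iff.2 ⟨hpred.continuousWithinAt, ?_⟩)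
    filter_upwards [self_mem_nhdsWithin,
      nhdsWithin_le_nhds (hmass.continuousAt.eventually_ne hm)] with π hπ hπm
    exact nextPred_mem_stdSimplex hK hπ Q q hπm

/-- The transition kernel of the zero-delay coding MDP is weakly
continuous: for every bounded continuous `g` on `P(𝕏)`, the map
`(π,Q) ↦ ∫ g(π') P(dπ'|π,Q) = ∑_q π(Q⁻¹(q)) g(π_{Q,q}')` is continuous on `P(𝕏) × 𝒬`
(with the weak convergence topology on `P(𝕏)`, which on a finite alphabet coincides with
the Euclidean one, and the discrete topology on the finite set `𝒬`). -/
theorem stmt3 {X M : Type*}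
    [Fintype X] [Nonempty X] [DecidableEq X]
    [Fintype M] [Nonempty M] [DecidableEq M] [TopologicalSpace M] [DiscreteTopology M]
    (K : X → X → ℝ) (hK : IsMarkovMatrix K) (hprim : IsPrimitiveMat K)
    (g : (X → ℝ) → ℝ) (hg : ContinuousOn g (stdSimplex ℝ X))
    (hgb : ∃ C, ∀ π ∈ stdSimplex ℝ X, |g π| ≤ C) :
    ContinuousOn
      (fun p : (X → ℝ) × (X → M) => ∑ q : M,
        (∑ x ∈ Finset.univ.filter (fun x => p.2 x = q), p.1 x) * g (nextPred K p.1 p.2 q))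
      (stdSimplex ℝ X ×ˢ (Set.univ : Set (X → M))) := by
  obtain ⟨C, hC⟩ := hgb
  refine continuousOn_prod_of_discrete_right.2 fun Q => ?_
  simp only [Set.mem_prod, Set.mem_univ, and_true, Set.ofPred_mem_eq]
  exact continuousOn_finsetSum _ fun q _ => continuousOn_mass_mul hK hg hC Q q
end

section
/- Under the uniform policy, the predictor process {π_t}_{t≥0}, viewed as a Markov chain on P(𝕏), admits a unique invariant probability measure. -/
/-!
Write `T` for the transition operator `Tker M K` on functions. The claim follows from asymptotic
stability: for every bounded Lipschitz `g`, the iterates `T^n g` become uniformly close to a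
constant on the simplex (`iterate_Tker_near_const`). Two facts give this.

* Equicontinuity. Extend `g` to the nonnegative cone by `G v = |v| g (v / |v|)`. Then `T g` is an
  average over `Q` of `∑_q G (A_{Q,q} v)`, where `A_{Q,q}` restricts to the cell `Q = q` and applies
  `K`. Since `∑_q |A_{Q,q} w|₁ ≤ |w|₁`, a Lipschitz constant of `G` for the `ℓ¹` norm on the cone
  is also one for the extension of `T g` (`ConeLip.Tker`), hence for that of every `T^n g`.
* Forgetting. Constant quantizers are among the choices, so with probability at least
  `e = |𝒬|^(-m)` the predictor moves deterministically from `π` to `π K^m` in `m` steps. By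
  primitivity of `K` the set of all `π K^m` has small diameter for large `m`
  (`exists_tvDist_iterate_lt`). A block of `m` steps therefore turns an oscillation `d` of `T^n g`
  into at most `e δ + (1 - e) d`, with `δ` as small as desired and independent of `n`.

Any invariant measure then integrates `g` to the limit constant, which gives uniqueness
(`invariant_unique`). For existence (`exists_invariant`), the laws of `π_n` started at a point live
on the compact simplex and have a weak limit point; since `T g` is continuous on the simplex and
`T^n g - T^(n+1) g` tends to zero there, this limit point is invariant.
-/

open Filter MeasureTheory Finset Set Topology

section KernelFun

/-- Transition operator (acting on bounded measurable functions) of the predictor process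
under the uniform exploration policy. -/
noncomputable def Tker (M : Type*) {X : Type*} [Fintype X] [DecidableEq X]
    [Fintype M] [DecidableEq M] (K : X → X → ℝ) (g : (X → ℝ) → ℝ) : (X → ℝ) → ℝ :=
  fun π => (Fintype.card (X → M) : ℝ)⁻¹ * ∑ Q : X → M, ∑ q : M,
    (∑ x ∈ Finset.univ.filter (fun x => Q x = q), π x) * g (nextPred K π Q q)

/-- `φ` is an invariant probability measure of the predictor process under the uniform
exploration policy, supported on the probability simplex. -/
def IsPredInvariant (M : Type*) {X : Type*} [Fintype X] [DecidableEq X]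
    [Fintype M] [DecidableEq M] (K : X → X → ℝ) (φ : Measure (X → ℝ)) : Prop :=
  IsProbabilityMeasure φ ∧ φ (stdSimplex ℝ X)ᶜ = 0 ∧
    ∀ g : (X → ℝ) → ℝ, Measurable g → (∃ C, ∀ π, |g π| ≤ C) →
      ∫ π, Tker M K g π ∂φ = ∫ π, g π ∂φ

/-- `t`-step transition operator of the predictor process under the stationary
Walrand–Varaiya policy `γws`, acting on functions; `iterWS K γws t g π` is the expectation
of `g(π_t)` when `π₀ = π`. -/
noncomputable def iterWS {X M : Type*} [Fintype X] [Fintype M] [DecidableEq M] (K : X → X → ℝ)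
    (γws : (X → ℝ) → X → M) : ℕ → ((X → ℝ) → ℝ) → (X → ℝ) → ℝ
  | 0, g => g
  | t + 1, g => fun π => ∑ q : M, (∑ x ∈ Finset.univ.filter (fun x => γws π x = q), π x) *
      iterWS K γws t g (nextPred K π (γws π) q)

end KernelFun

set_option linter.unusedSectionVars false

section PredictorChain

variable {X M : Type*} [Fintype X]

/-! ### Homogeneous extensions and unnormalised updates -/

/-- Degree-one homogeneous extension of a function on the simplex to the nonnegative cone. -/
noncomputable def homExt (g : (X → ℝ) → ℝ) (v : X → ℝ) : ℝ :=
  (∑ x, v x) * g (fun y => v y / ∑ x, v x)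

/-- The unnormalised predictor update: restrict `v` to the cell `Q = q`, then apply `K`. -/
def rawUpd [DecidableEq M] (K : X → X → ℝ) (Q : X → M) (q : M) (v : X → ℝ) : X → ℝ :=
  fun x' => ∑ x ∈ Finset.univ.filter (fun x => Q x = q), K x x' * v x

/-- One step `v ↦ vK` of the source dynamics on row vectors. -/
def srcStep (K : X → X → ℝ) (v : X → ℝ) : X → ℝ := fun y => ∑ x, v x * K x y

/-- The degree-one homogeneous extension of `g` is `C`-Lipschitz for the `ℓ¹` distance on the cone. -/
def ConeLip (C : ℝ) (g : (X → ℝ) → ℝ) : Prop :=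
  ∀ u v : X → ℝ, (∀ x, 0 ≤ u x) → (∀ x, 0 ≤ v x) → |homExt g u - homExt g v| ≤ C * tvDist u v

lemma homExt_div (g : (X → ℝ) → ℝ) (v : X → ℝ) {s : ℝ} (hs : s ≠ 0) :
    homExt g (fun x => v x / s) = homExt g v / s := by
  unfold homExt
  rw [← Finset.sum_div]
  have : (fun y => v y / s / ((∑ x, v x) / s)) = fun y => v y / ∑ x, v x := by
    funext y
    rw [div_div_div_cancel_right₀ hs]
  rw [this]; ring

lemma homExt_simplex (g : (X → ℝ) → ℝ) {v : X → ℝ} (hv : v ∈ stdSimplex ℝ X) :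
    homExt g v = g v := by
  simp [homExt, hv.2]

lemma sum_rawUpd [DecidableEq M] {K : X → X → ℝ} (hK : IsMarkovMatrix K) (Q : X → M) (q : M)
    (v : X → ℝ) :
    ∑ x', rawUpd K Q q v x' = ∑ x ∈ Finset.univ.filter (fun x => Q x = q), v x := by
  unfold rawUpd
  rw [Finset.sum_comm]
  refine Finset.sum_congr rfl fun x _ => ?_
  rw [← Finset.sum_mul, (hK x).2, one_mul]

lemma rawUpd_nonneg [DecidableEq M] {K : X → X → ℝ} (hK : IsMarkovMatrix K) (Q : X → M) (q : M)
    {v : X → ℝ} (hv : ∀ x, 0 ≤ v x) (y : X) : 0 ≤ rawUpd K Q q v y :=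
  Finset.sum_nonneg fun x _ => mul_nonneg ((hK x).1 y) (hv x)

/-- An update of positive probability stays in the simplex. -/
lemma nextPred_mem [DecidableEq M] {K : X → X → ℝ} (hK : IsMarkovMatrix K) (Q : X → M) (q : M)
    {v : X → ℝ} (hv : ∀ x, 0 ≤ v x)
    (h : (∑ x ∈ Finset.univ.filter (fun x => Q x = q), v x) ≠ 0) :
    nextPred K v Q q ∈ stdSimplex ℝ X := by
  refine ⟨fun y => div_nonneg (rawUpd_nonneg hK Q q hv y) (Finset.sum_nonneg fun x _ => hv x), ?_⟩
  have h2 := sum_rawUpd hK Q q v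
  unfold rawUpd at h2
  unfold nextPred
  rw [← Finset.sum_div, h2, div_self h]

lemma sum_cells [Fintype M] [DecidableEq M] (Q : X → M) (f : X → ℝ) :
    ∑ q : M, ∑ x ∈ Finset.univ.filter (fun x => Q x = q), f x = ∑ x, f x :=
  Finset.sum_fiberwise _ _ _

lemma card_inv_mul [DecidableEq X] [Fintype M] [DecidableEq M] [Nonempty M] (r : ℝ) :
    (Fintype.card (X → M) : ℝ)⁻¹ * ∑ _Q : X → M, r = r := by
  have : (Fintype.card (X → M) : ℝ) ≠ 0 := Nat.cast_ne_zero.2 Fintype.card_ne_zero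
  rw [Finset.sum_const, Finset.card_univ, nsmul_eq_mul, inv_mul_cancel_left₀ this]

/-! ### Equi-Lipschitz iterates -/

section Transition

variable [DecidableEq X] [Fintype M] [DecidableEq M] {K : X → X → ℝ}

lemma Tker_eq_homExt (hK : IsMarkovMatrix K) (g : (X → ℝ) → ℝ) (v : X → ℝ) :
    Tker M K g v =
      (Fintype.card (X → M) : ℝ)⁻¹ * ∑ Q : X → M, ∑ q : M, homExt g (rawUpd K Q q v) := by
  unfold Tker homExt
  congr 1
  refine Finset.sum_congr rfl fun Q _ => Finset.sum_congr rfl fun q _ => ?_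
  rw [sum_rawUpd hK]
  rfl

/-- `Tker M K g` is already homogeneous of degree one on the cone. -/
lemma homExt_Tker (hK : IsMarkovMatrix K) (g : (X → ℝ) → ℝ) {v : X → ℝ} (hv : ∀ x, 0 ≤ v x) :
    homExt (Tker M K g) v = Tker M K g v := by
  by_cases hs : ∑ x, v x = 0
  · have h0 : v = 0 := by
      funext x
      exact (Finset.sum_eq_zero_iff_of_nonneg fun x _ => hv x).1 hs x (Finset.mem_univ x)
    subst h0
    simp [homExt, Tker]
  · unfold homExt
    rw [Tker_eq_homExt hK, Tker_eq_homExt hK, mul_left_comm]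
    congr 1
    rw [Finset.mul_sum]
    refine Finset.sum_congr rfl fun Q _ => ?_
    rw [Finset.mul_sum]
    refine Finset.sum_congr rfl fun q _ => ?_
    have : rawUpd K Q q (fun y => v y / ∑ x, v x) = fun y => rawUpd K Q q v y / ∑ x, v x := by
      funext y
      unfold rawUpd
      rw [Finset.sum_div]
      exact Finset.sum_congr rfl fun x _ => by rw [mul_div_assoc]
    rw [this, homExt_div _ _ hs, mul_div_cancel₀ _ hs]

lemma sum_abs_rawUpd_sub_le (hK : IsMarkovMatrix K) (Q : X → M) (q : M) (u v : X → ℝ) :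
    tvDist (rawUpd K Q q u) (rawUpd K Q q v) ≤
      ∑ x ∈ Finset.univ.filter (fun x => Q x = q), |u x - v x| := by
  rw [← sum_rawUpd hK Q q fun x => |u x - v x|]
  refine Finset.sum_le_sum fun y _ => ?_
  unfold rawUpd
  rw [← Finset.sum_sub_distrib]
  refine (Finset.abs_sum_le_sum_abs _ _).trans (Finset.sum_le_sum fun x _ => ?_)
  rw [← mul_sub, abs_mul, abs_of_nonneg ((hK x).1 y)]

/-- The transition operator does not increase the cone Lipschitz constant; hence all iterates
of a function in the class are equi-Lipschitz. -/
lemma ConeLip.Tker [Nonempty M] (hK : IsMarkovMatrix K) {C : ℝ} (hC : 0 ≤ C)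
    {g : (X → ℝ) → ℝ} (hg : ConeLip C g) : ConeLip C (Tker M K g) := by
  intro u v hu hv
  rw [homExt_Tker hK g hu, homExt_Tker hK g hv, Tker_eq_homExt hK, Tker_eq_homExt hK,
    ← mul_sub, abs_mul, abs_of_nonneg (by positivity), ← card_inv_mul (X := X) (M := M)
      (C * tvDist u v), ← Finset.sum_sub_distrib]
  refine mul_le_mul_of_nonneg_left ?_ (by positivity)
  refine (Finset.abs_sum_le_sum_abs _ _).trans (Finset.sum_le_sum fun Q _ => ?_)
  rw [← Finset.sum_sub_distrib]
  refine (Finset.abs_sum_le_sum_abs _ _).trans ?_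
  unfold tvDist
  rw [← sum_cells Q, Finset.mul_sum]
  refine Finset.sum_le_sum fun q _ => ?_
  exact (hg _ _ (rawUpd_nonneg hK Q q hu) (rawUpd_nonneg hK Q q hv)).trans
    (mul_le_mul_of_nonneg_left (sum_abs_rawUpd_sub_le hK Q q u v) hC)

lemma ConeLip.iterate [Nonempty M] (hK : IsMarkovMatrix K) {C : ℝ} (hC : 0 ≤ C)
    {g : (X → ℝ) → ℝ} (hg : ConeLip C g) (n : ℕ) : ConeLip C ((_root_.Tker M K)^[n] g) := by
  induction n with
  | zero => exact hg
  | succ n ih => rw [Function.iterate_succ_apply']; exact ih.Tker hK hC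

lemma ConeLip.abs_sub_le {C : ℝ} {g : (X → ℝ) → ℝ} (hg : ConeLip C g) {u v : X → ℝ}
    (hu : u ∈ stdSimplex ℝ X) (hv : v ∈ stdSimplex ℝ X) : |g u - g v| ≤ C * tvDist u v := by
  have := hg u v hu.1 hv.1
  rwa [homExt_simplex g hu, homExt_simplex g hv] at this

/-- A bounded function that is `L`-Lipschitz for the `ℓ¹` distance is in the class. -/
lemma coneLip_of_bounded {L B : ℝ} (hL : 0 ≤ L) {g : (X → ℝ) → ℝ} (hB : ∀ v, |g v| ≤ B)
    (hg : ∀ u v, |g u - g v| ≤ L * tvDist u v) : ConeLip (2 * L + B) g := by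
  intro u v hu hv
  have hB0 : 0 ≤ B := (abs_nonneg _).trans (hB 0)
  have htv : 0 ≤ tvDist u v := Finset.sum_nonneg fun _ _ => abs_nonneg _
  set s := ∑ x, u x with hs
  set r := ∑ x, v x with hr
  have hs0 : 0 ≤ s := Finset.sum_nonneg fun x _ => hu x
  have hr0 : 0 ≤ r := Finset.sum_nonneg fun x _ => hv x
  have hsr : |s - r| ≤ tvDist u v := by
    rw [hs, hr, ← Finset.sum_sub_distrib]
    exact Finset.abs_sum_le_sum_abs _ _
  -- normalising loses at most a factor two: `s ‖u/s - v/r‖ ≤ 2 ‖u - v‖`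
  have key : s * |g (fun y => u y / s) - g (fun y => v y / r)| ≤ 2 * L * tvDist u v ∨ r = 0 := by
    by_cases hr1 : r = 0
    · exact Or.inr hr1
    left
    by_cases hs1 : s = 0
    · rw [hs1, zero_mul]; positivity
    have hrpos : 0 < r := lt_of_le_of_ne hr0 (Ne.symm hr1)
    have h1 : s * tvDist (fun y => u y / s) (fun y => v y / r) ≤ 2 * tvDist u v := by
      have h2 : s * tvDist (fun y => u y / s) (fun y => v y / r)
          ≤ tvDist u v + ∑ x, |r - s| * (v x / r) := by
        unfold tvDist
        rw [Finset.mul_sum, ← Finset.sum_add_distrib]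
        refine Finset.sum_le_sum fun x _ => ?_
        have e : s * |u x / s - v x / r| = |(u x - v x) + (r - s) * (v x / r)| := by
          rw [← abs_of_nonneg hs0, ← abs_mul, abs_of_nonneg hs0]
          congr 1
          field_simp
          ring
        rw [e]
        refine (abs_add_le _ _).trans ?_
        rw [abs_mul, abs_of_nonneg (div_nonneg (hv x) hr0)]
      rw [← Finset.mul_sum, ← Finset.sum_div, ← hr, div_self hr1, mul_one, abs_sub_comm] at h2
      linarith
    calc _ ≤ s * (L * tvDist (fun y => u y / s) (fun y => v y / r)) :=
          mul_le_mul_of_nonneg_left (hg _ _) hs0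
      _ = L * (s * tvDist (fun y => u y / s) (fun y => v y / r)) := by ring
      _ ≤ L * (2 * tvDist u v) := mul_le_mul_of_nonneg_left h1 hL
      _ = _ := by ring
  have e : homExt g u - homExt g v =
      s * (g (fun y => u y / s) - g (fun y => v y / r)) + (s - r) * g (fun y => v y / r) := by
    unfold homExt; ring
  have h3 : |(s - r) * g (fun y => v y / r)| ≤ B * tvDist u v := by
    rw [abs_mul, mul_comm]
    exact mul_le_mul (hB _) hsr (abs_nonneg _) hB0
  rcases key with key | hr1
  · rw [e]
    refine (abs_add_le _ _).trans ?_
    rw [abs_mul, abs_of_nonneg hs0]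
    linarith
  · have : homExt g u - homExt g v = (s - r) * g (fun y => u y / s) := by
      unfold homExt; rw [← hs, ← hr, hr1]; ring
    rw [this, abs_mul, mul_comm]
    have := mul_le_mul (hB fun y => u y / s) hsr (abs_nonneg _) hB0
    have h4 : 0 ≤ 2 * L * tvDist u v := by positivity
    linarith

/-! ### Oscillation bounds from constant quantizers -/

lemma Tker_neg (g : (X → ℝ) → ℝ) : Tker M K (-g) = -Tker M K g := by
  funext v
  simp [Tker]

/-- A given constant quantizer is chosen with probability `|𝒬|⁻¹` and gives the deterministic
move `π ↦ πK`; all other branches contribute at most the bound `b`. -/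
lemma Tker_le [Nonempty M] (hK : IsMarkovMatrix K) {g : (X → ℝ) → ℝ} {b : ℝ}
    (hb : ∀ v ∈ stdSimplex ℝ X, g v ≤ b) {v : X → ℝ} (hv : v ∈ stdSimplex ℝ X) :
    Tker M K g v ≤ (Fintype.card (X → M) : ℝ)⁻¹ * g (srcStep K v) +
      (1 - (Fintype.card (X → M) : ℝ)⁻¹) * b := by
  obtain ⟨q₀⟩ := ‹Nonempty M›
  have : Nonempty M := ⟨q₀⟩
  set w : (X → M) → M → ℝ := fun Q q => ∑ x ∈ Finset.univ.filter (fun x => Q x = q), v x with hw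
  have hsum : b - Tker M K g v = (Fintype.card (X → M) : ℝ)⁻¹ *
      ∑ Q : X → M, ∑ q : M, w Q q * (b - g (nextPred K v Q q)) := by
    have h1 : b = (Fintype.card (X → M) : ℝ)⁻¹ * ∑ Q : X → M, ∑ q : M, w Q q * b := by
      rw [← card_inv_mul (X := X) (M := M) b]
      congr 1
      refine Finset.sum_congr rfl fun Q _ => ?_
      rw [← Finset.sum_mul, hw, sum_cells, hv.2, one_mul, card_inv_mul]
    nth_rw 1 [h1]
    unfold Tker
    rw [← mul_sub, ← Finset.sum_sub_distrib]
    congr 1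
    refine Finset.sum_congr rfl fun Q _ => ?_
    rw [← Finset.sum_sub_distrib]
    exact Finset.sum_congr rfl fun q _ => by rw [mul_sub]
  have hterm : ∀ Q q, 0 ≤ w Q q * (b - g (nextPred K v Q q)) := by
    intro Q q
    by_cases h : w Q q = 0
    · rw [h, zero_mul]
    · exact mul_nonneg (Finset.sum_nonneg fun x _ => hv.1 x)
        (sub_nonneg.2 (hb _ (nextPred_mem hK Q q hv.1 h)))
  have hconst : w (fun _ => q₀) q₀ * (b - g (nextPred K v (fun _ => q₀) q₀)) =
      b - g (srcStep K v) := by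
    have h1 : w (fun _ => q₀) q₀ = 1 := by simp [hw, hv.2]
    have h2 : nextPred K v (fun _ => q₀) q₀ = srcStep K v := by
      funext y
      simp [nextPred, srcStep, hv.2, mul_comm]
    rw [h1, h2, one_mul]
  have hle : b - g (srcStep K v) ≤ ∑ Q : X → M, ∑ q : M, w Q q * (b - g (nextPred K v Q q)) := by
    rw [← hconst]
    refine (Finset.single_le_sum (f := fun q => w (fun _ => q₀) q *
      (b - g (nextPred K v (fun _ => q₀) q))) (fun q _ => hterm _ q) (Finset.mem_univ q₀)).trans ?_
    exact Finset.single_le_sum (f := fun Q => ∑ q : M, w Q q * (b - g (nextPred K v Q q)))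
      (fun Q _ => Finset.sum_nonneg fun q _ => hterm Q q) (Finset.mem_univ _)
  have := mul_le_mul_of_nonneg_left hle
    (inv_nonneg.2 (Nat.cast_nonneg (α := ℝ) (Fintype.card (X → M))))
  linarith

lemma srcStep_mem (hK : IsMarkovMatrix K) {v : X → ℝ} (hv : v ∈ stdSimplex ℝ X) :
    srcStep K v ∈ stdSimplex ℝ X := by
  refine ⟨fun y => Finset.sum_nonneg fun x _ => mul_nonneg (hv.1 x) ((hK x).1 y), ?_⟩
  unfold srcStep
  rw [Finset.sum_comm, ← hv.2]
  refine Finset.sum_congr rfl fun x _ => ?_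
  rw [← Finset.mul_sum, (hK x).2, mul_one]

lemma card_inv_mem [Nonempty M] : 0 < (Fintype.card (X → M) : ℝ)⁻¹ ∧
    (Fintype.card (X → M) : ℝ)⁻¹ ≤ 1 := by
  have h : (1 : ℝ) ≤ Fintype.card (X → M) := by exact_mod_cast Fintype.card_pos
  exact ⟨by positivity, inv_le_one_of_one_le₀ h⟩

lemma Tker_le_bound [Nonempty M] (hK : IsMarkovMatrix K) {g : (X → ℝ) → ℝ} {b : ℝ}
    (hb : ∀ v ∈ stdSimplex ℝ X, g v ≤ b) {v : X → ℝ} (hv : v ∈ stdSimplex ℝ X) :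
    Tker M K g v ≤ b := by
  have h1 := Tker_le (M := M) hK hb hv
  have h2 := mul_le_mul_of_nonneg_left (hb _ (srcStep_mem hK hv))
    (card_inv_mem (X := X) (M := M)).1.le
  linarith

lemma iterate_Tker_le_bound [Nonempty M] (hK : IsMarkovMatrix K) {g : (X → ℝ) → ℝ} {b : ℝ}
    (hb : ∀ v ∈ stdSimplex ℝ X, g v ≤ b) (n : ℕ) :
    ∀ v ∈ stdSimplex ℝ X, (Tker M K)^[n] g v ≤ b := by
  induction n with
  | zero => exact hb
  | succ n ih =>
    intro v hv
    rw [Function.iterate_succ_apply']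
    exact Tker_le_bound hK ih hv

lemma iterate_Tker_neg (g : (X → ℝ) → ℝ) (n : ℕ) :
    (Tker M K)^[n] (-g) = -(Tker M K)^[n] g := by
  induction n with
  | zero => rfl
  | succ n ih => rw [Function.iterate_succ_apply', Function.iterate_succ_apply', ih, Tker_neg]

lemma le_iterate_Tker_bound [Nonempty M] (hK : IsMarkovMatrix K) {g : (X → ℝ) → ℝ} {a : ℝ}
    (ha : ∀ v ∈ stdSimplex ℝ X, a ≤ g v) (n : ℕ) :
    ∀ v ∈ stdSimplex ℝ X, a ≤ (Tker M K)^[n] g v := by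
  intro v hv
  have := iterate_Tker_le_bound (M := M) hK (g := -g) (b := -a)
    (fun v hv => neg_le_neg (ha v hv)) n v hv
  rw [iterate_Tker_neg] at this
  exact neg_le_neg_iff.1 this

lemma iterate_Tker_le [Nonempty M] (hK : IsMarkovMatrix K) {g : (X → ℝ) → ℝ} {b : ℝ}
    (hb : ∀ v ∈ stdSimplex ℝ X, g v ≤ b) (m : ℕ) : ∀ v ∈ stdSimplex ℝ X,
    (Tker M K)^[m] g v ≤ ((Fintype.card (X → M) : ℝ)⁻¹) ^ m * g ((srcStep K)^[m] v) +
      (1 - ((Fintype.card (X → M) : ℝ)⁻¹) ^ m) * b := by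
  induction m with
  | zero => intro v _; simp
  | succ m ih =>
    intro v hv
    rw [Function.iterate_succ_apply', Function.iterate_succ_apply]
    have h1 := Tker_le (M := M) hK (iterate_Tker_le_bound (M := M) hK hb m) hv
    have h2 := mul_le_mul_of_nonneg_left (ih _ (srcStep_mem hK hv))
      (card_inv_mem (X := X) (M := M)).1.le
    rw [pow_succ]
    linarith

lemma le_iterate_Tker [Nonempty M] (hK : IsMarkovMatrix K) {g : (X → ℝ) → ℝ} {a : ℝ}
    (ha : ∀ v ∈ stdSimplex ℝ X, a ≤ g v) (m : ℕ) : ∀ v ∈ stdSimplex ℝ X,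
    ((Fintype.card (X → M) : ℝ)⁻¹) ^ m * g ((srcStep K)^[m] v) +
      (1 - ((Fintype.card (X → M) : ℝ)⁻¹) ^ m) * a ≤ (Tker M K)^[m] g v := by
  intro v hv
  have := iterate_Tker_le (M := M) hK (g := -g) (b := -a)
    (fun v hv => neg_le_neg (ha v hv)) m v hv
  rw [iterate_Tker_neg] at this
  simp only [Pi.neg_apply] at this
  linarith

/-! ### The source forgets its initial distribution -/

lemma iterate_srcStep_mem (hK : IsMarkovMatrix K) (m : ℕ) {v : X → ℝ}
    (hv : v ∈ stdSimplex ℝ X) : (srcStep K)^[m] v ∈ stdSimplex ℝ X := by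
  induction m with
  | zero => exact hv
  | succ m ih => rw [Function.iterate_succ_apply']; exact srcStep_mem hK ih

lemma iterate_srcStep_eq (m : ℕ) : ∀ (v : X → ℝ) (y : X),
    (srcStep K)^[m] v y = ∑ x, v x * Kpow K m x y := by
  induction m with
  | zero => intro v y; simp [Kpow]
  | succ m ih =>
    intro v y
    rw [Function.iterate_succ_apply, ih]
    simp only [srcStep, Kpow, Finset.sum_mul, Finset.mul_sum]
    rw [Finset.sum_comm]
    exact Finset.sum_congr rfl fun x _ => Finset.sum_congr rfl fun z _ => by ring

lemma sum_Kpow (hK : IsMarkovMatrix K) (m : ℕ) : ∀ x, ∑ y, Kpow K m x y = 1 := by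
  induction m with
  | zero => intro x; simp [Kpow]
  | succ m ih =>
    intro x
    simp only [Kpow]
    rw [Finset.sum_comm, ← (hK x).2]
    exact Finset.sum_congr rfl fun z _ => by rw [← Finset.mul_sum, ih, mul_one]

/-- Doeblin contraction: if all `t`-step transition probabilities are at least `α`, then `t`
steps contract the `ℓ¹` distance of two distributions by the factor `1 - α`. -/
lemma tvDist_iterate_le [Nonempty X] (hK : IsMarkovMatrix K) {t : ℕ} {α : ℝ} (hα : 0 ≤ α)
    (h : ∀ x y, α ≤ Kpow K t x y) {u v : X → ℝ} (hu : u ∈ stdSimplex ℝ X)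
    (hv : v ∈ stdSimplex ℝ X) :
    tvDist ((srcStep K)^[t] u) ((srcStep K)^[t] v) ≤ (1 - α) * tvDist u v := by
  have hd : ∑ x, (u x - v x) = 0 := by rw [Finset.sum_sub_distrib, hu.2, hv.2, sub_self]
  have h1 : ∀ y, |(srcStep K)^[t] u y - (srcStep K)^[t] v y| ≤
      ∑ x, |u x - v x| * (Kpow K t x y - α) := by
    intro y
    have : (srcStep K)^[t] u y - (srcStep K)^[t] v y =
        ∑ x, (u x - v x) * (Kpow K t x y - α) := by
      rw [iterate_srcStep_eq, iterate_srcStep_eq]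
      simp only [mul_sub, Finset.sum_sub_distrib, ← Finset.sum_mul, hd, zero_mul, sub_zero]
      rw [← Finset.sum_sub_distrib]
      exact Finset.sum_congr rfl fun x _ => by ring
    rw [this]
    refine (Finset.abs_sum_le_sum_abs _ _).trans (le_of_eq (Finset.sum_congr rfl fun x _ => ?_))
    rw [abs_mul, abs_of_nonneg (sub_nonneg.2 (h x y))]
  refine (Finset.sum_le_sum fun y _ => h1 y).trans ?_
  rw [Finset.sum_comm]
  unfold tvDist
  rw [Finset.mul_sum]
  refine Finset.sum_le_sum fun x _ => ?_
  rw [← Finset.mul_sum, Finset.sum_sub_distrib, sum_Kpow hK, Finset.sum_const, Finset.card_univ,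
    nsmul_eq_mul, mul_comm]
  refine mul_le_mul_of_nonneg_right ?_ (abs_nonneg _)
  have : (1 : ℝ) ≤ Fintype.card X := by exact_mod_cast Fintype.card_pos
  nlinarith

lemma tvDist_le_two {u v : X → ℝ} (hu : u ∈ stdSimplex ℝ X) (hv : v ∈ stdSimplex ℝ X) :
    tvDist u v ≤ 2 := by
  have : tvDist u v ≤ ∑ x, (u x + v x) := Finset.sum_le_sum fun x _ => by
    refine (abs_sub _ _).trans ?_
    rw [abs_of_nonneg (hu.1 x), abs_of_nonneg (hv.1 x)]
  rw [Finset.sum_add_distrib, hu.2, hv.2] at this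
  linarith

/-- The source forgets its initial distribution uniformly. -/
lemma exists_tvDist_iterate_lt [Nonempty X] (hK : IsMarkovMatrix K) (hp : IsPrimitiveMat K)
    {η : ℝ} (hη : 0 < η) : ∃ m : ℕ, ∀ u ∈ stdSimplex ℝ X, ∀ v ∈ stdSimplex ℝ X,
      tvDist ((srcStep K)^[m] u) ((srcStep K)^[m] v) ≤ η := by
  obtain ⟨t, ht⟩ := hp
  obtain ⟨z, hz⟩ := Finite.exists_min fun p : X × X => Kpow K t p.1 p.2
  set α := Kpow K t z.1 z.2 with hα
  have hα0 : 0 < α := ht _ _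
  have hmin : ∀ x y, α ≤ Kpow K t x y := fun x y => hz (x, y)
  have hα1 : α ≤ 1 := by
    rw [← sum_Kpow hK t z.1]
    exact Finset.single_le_sum (f := fun y => Kpow K t z.1 y) (fun y _ => (ht _ _).le)
      (Finset.mem_univ _)
  have hk : ∀ k : ℕ, ∀ u ∈ stdSimplex ℝ X, ∀ v ∈ stdSimplex ℝ X,
      tvDist ((srcStep K)^[t * k] u) ((srcStep K)^[t * k] v) ≤ (1 - α) ^ k * 2 := by
    intro k
    induction k with
    | zero => intro u hu v hv; simpa using tvDist_le_two hu hv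
    | succ k ih =>
      intro u hu v hv
      rw [Nat.mul_succ, Nat.add_comm, Function.iterate_add_apply, Function.iterate_add_apply]
      refine (tvDist_iterate_le hK hα0.le hmin (iterate_srcStep_mem hK _ hu)
        (iterate_srcStep_mem hK _ hv)).trans ?_
      rw [pow_succ]
      have := mul_le_mul_of_nonneg_left (ih u hu v hv) (sub_nonneg.2 hα1)
      linarith
  obtain ⟨k, hk1⟩ := exists_pow_lt_of_lt_one (half_pos hη) (show 1 - α < 1 by linarith)
  exact ⟨t * k, fun u hu v hv => (hk k u hu v hv).trans (by linarith)⟩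

/-! ### Asymptotic stability -/

/-- Asymptotic stability: on the simplex, the iterates of a function of the class become
uniformly close to a constant. -/
lemma iterate_Tker_near_const [Nonempty X] [Nonempty M] (hK : IsMarkovMatrix K)
    (hp : IsPrimitiveMat K) {C : ℝ} (hC : 0 ≤ C) {g : (X → ℝ) → ℝ} (hg : ConeLip C g) {B : ℝ}
    (hB : ∀ v ∈ stdSimplex ℝ X, |g v| ≤ B) {η : ℝ} (hη : 0 < η) :
    ∃ (N : ℕ) (a : ℝ), ∀ n ≥ N, ∀ v ∈ stdSimplex ℝ X,
      a ≤ (Tker M K)^[n] g v ∧ (Tker M K)^[n] g v ≤ a + η := by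
  obtain ⟨m, hm⟩ := exists_tvDist_iterate_lt hK hp (η := η / (4 * (C + 1))) (by positivity)
  set e := ((Fintype.card (X → M) : ℝ)⁻¹) ^ m with he
  have he0 : 0 < e := pow_pos (card_inv_mem (X := X) (M := M)).1 m
  have he1 : e ≤ 1 := pow_le_one₀ (card_inv_mem (X := X) (M := M)).1.le
    (card_inv_mem (X := X) (M := M)).2
  obtain ⟨v₀, hv₀⟩ : (stdSimplex ℝ X).Nonempty :=
    ⟨_, single_mem_stdSimplex ℝ (Classical.arbitrary X)⟩
  have hCη : C * (η / (4 * (C + 1))) ≤ η / 4 := by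
    rw [mul_div_assoc', div_le_div_iff₀ (by positivity) (by norm_num)]
    nlinarith
  -- A block of `m` steps shrinks the oscillation `d` to at most `e * (η / 2) + (1 - e) * d`
  have hk : ∀ k : ℕ, ∃ a : ℝ, ∀ v ∈ stdSimplex ℝ X, a ≤ (Tker M K)^[m * k] g v ∧
      (Tker M K)^[m * k] g v ≤ a + (η / 2 + (1 - e) ^ k * (2 * B)) := by
    intro k
    induction k with
    | zero =>
      refine ⟨-B, fun v hv => ⟨(abs_le.1 (hB v hv)).1, ?_⟩⟩
      have := (abs_le.1 (hB v hv)).2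
      simp only [Nat.mul_zero, Function.iterate_zero, id, pow_zero]
      linarith
    | succ k ih =>
      obtain ⟨a, ha⟩ := ih
      set h := (Tker M K)^[m * k] g with hh
      set d := η / 2 + (1 - e) ^ k * (2 * B) with hd
      have hlip : ConeLip C h := hg.iterate hK hC _
      have hosc : ∀ v ∈ stdSimplex ℝ X,
          |h ((srcStep K)^[m] v) - h ((srcStep K)^[m] v₀)| ≤ η / 4 := fun v hv =>
        (hlip.abs_sub_le (iterate_srcStep_mem hK m hv) (iterate_srcStep_mem hK m hv₀)).trans
          ((mul_le_mul_of_nonneg_left (hm v hv v₀ hv₀) hC).trans hCη)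
      refine ⟨e * (h ((srcStep K)^[m] v₀) - η / 4) + (1 - e) * a, fun v hv => ?_⟩
      have hu := iterate_Tker_le (M := M) hK (fun v hv => (ha v hv).2) m v hv
      have hl := le_iterate_Tker (M := M) hK (fun v hv => (ha v hv).1) m v hv
      rw [Nat.mul_succ, Nat.add_comm, Function.iterate_add_apply, ← hh]
      rw [← he] at hu hl
      obtain ⟨h1, h2⟩ := abs_le.1 (hosc v hv)
      have h3 := mul_le_mul_of_nonneg_left (sub_le_iff_le_add.1 h2) he0.le
      have h4 := mul_le_mul_of_nonneg_left h1 he0.le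
      have h5 : (1 - e) ^ (k + 1) * (2 * B) = (1 - e) * (d - η / 2) := by rw [hd, pow_succ]; ring
      rw [h5]
      constructor <;> linarith
  have hlim : Tendsto (fun k : ℕ => (1 - e) ^ k * (2 * B)) atTop (𝓝 0) := by
    simpa using (tendsto_pow_atTop_nhds_zero_of_lt_one (sub_nonneg.2 he1)
      (by linarith : 1 - e < 1)).mul_const (2 * B)
  obtain ⟨k, hk1⟩ := (hlim.eventually (gt_mem_nhds (half_pos hη))).exists
  obtain ⟨a, ha⟩ := hk k
  refine ⟨m * k, a, fun n hn v hv => ?_⟩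
  obtain ⟨j, rfl⟩ := Nat.exists_eq_add_of_le' hn
  rw [Function.iterate_add_apply]
  refine ⟨le_iterate_Tker_bound hK (fun v hv => (ha v hv).1) j v hv, ?_⟩
  exact iterate_Tker_le_bound hK (fun v hv => (ha v hv).2.trans (by linarith)) j v hv

end Transition

end PredictorChain

/-! ### The transition operator on measures -/

section Measures

variable {X M : Type*} [Fintype X] [DecidableEq X] [Fintype M] [DecidableEq M] {K : X → X → ℝ}

/-- The part of the next law of the predictor, starting from the law `φ`, carried by the event
that the quantizer `Q` is applied and the symbol `q` is observed (without the weight of `Q`). -/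
noncomputable def branchLaw (K : X → X → ℝ) (φ : Measure (X → ℝ)) (Q : X → M) (q : M) :
    Measure (X → ℝ) :=
  (φ.withDensity fun v => ENNReal.ofReal
    (∑ x ∈ Finset.univ.filter (fun x => Q x = q), v x)).map (fun v => nextPred K v Q q)

/-- The law of `π_{t+1}` when `π_t` has law `φ`. -/
noncomputable def nextLaw (M : Type*) [Fintype M] [DecidableEq M] (K : X → X → ℝ)
    (φ : Measure (X → ℝ)) : Measure (X → ℝ) :=
  ENNReal.ofReal (Fintype.card (X → M) : ℝ)⁻¹ • ∑ Q : X → M, ∑ q : M, branchLaw K φ Q q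

lemma measurable_cell (Q : X → M) (q : M) :
    Measurable fun v : X → ℝ => ∑ x ∈ Finset.univ.filter (fun x => Q x = q), v x :=
  Finset.measurable_sum _ fun x _ => measurable_pi_apply x

lemma measurable_nextPred (Q : X → M) (q : M) :
    Measurable fun v : X → ℝ => nextPred K v Q q := by
  refine measurable_pi_lambda _ fun y => ?_
  exact (Finset.measurable_sum _ fun x _ => (measurable_pi_apply x).const_mul _).div
    (measurable_cell Q q)

lemma measurable_Tker {g : (X → ℝ) → ℝ} (hg : Measurable g) : Measurable (Tker M K g) := by
  refine Measurable.const_mul (Finset.measurable_sum _ fun Q _ => Finset.measurable_sum _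
    fun q _ => ?_) _
  exact (measurable_cell Q q).mul (hg.comp (measurable_nextPred Q q))

lemma measurable_iterate_Tker {g : (X → ℝ) → ℝ} (hg : Measurable g) (n : ℕ) :
    Measurable ((Tker M K)^[n] g) := by
  induction n with
  | zero => exact hg
  | succ n ih => rw [Function.iterate_succ_apply']; exact measurable_Tker ih

lemma cell_le_one {v : X → ℝ} (hv : v ∈ stdSimplex ℝ X) (Q : X → M) (q : M) :
    ∑ x ∈ Finset.univ.filter (fun x => Q x = q), v x ≤ 1 := by
  rw [← hv.2]
  exact Finset.sum_le_sum_of_subset_of_nonneg (Finset.filter_subset _ _) fun x _ _ => hv.1 x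

lemma cell_nonneg {v : X → ℝ} (hv : v ∈ stdSimplex ℝ X) (Q : X → M) (q : M) :
    0 ≤ ∑ x ∈ Finset.univ.filter (fun x => Q x = q), v x :=
  Finset.sum_nonneg fun x _ => hv.1 x

lemma measurableSet_simplex : MeasurableSet (stdSimplex ℝ X) :=
  (isClosed_stdSimplex (𝕜 := ℝ) X).measurableSet

lemma isFiniteMeasure_branchLaw {φ : Measure (X → ℝ)} [IsFiniteMeasure φ]
    (hφ : ∀ᵐ v ∂φ, v ∈ stdSimplex ℝ X) (Q : X → M) (q : M) :
    IsFiniteMeasure (branchLaw K φ Q q) := by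
  have : IsFiniteMeasure (φ.withDensity fun v => ENNReal.ofReal
      (∑ x ∈ Finset.univ.filter (fun x => Q x = q), v x)) := by
    refine isFiniteMeasure_withDensity (ne_of_lt ?_)
    refine lt_of_le_of_lt (lintegral_mono_ae (g := fun _ => 1) ?_) ?_
    · filter_upwards [hφ] with v hv
      exact ENNReal.ofReal_le_one.2 (cell_le_one hv Q q)
    · simp
  unfold branchLaw
  infer_instance

lemma ae_mem_branchLaw (hK : IsMarkovMatrix K) {φ : Measure (X → ℝ)}
    (hφ : ∀ᵐ v ∂φ, v ∈ stdSimplex ℝ X) (Q : X → M) (q : M) :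
    ∀ᵐ v ∂(branchLaw K φ Q q), v ∈ stdSimplex ℝ X := by
  unfold branchLaw
  refine (ae_map_iff (measurable_nextPred Q q).aemeasurable measurableSet_simplex).2 ?_
  rw [ae_withDensity_iff (measurable_cell Q q).ennreal_ofReal]
  filter_upwards [hφ] with v hv h
  refine nextPred_mem hK Q q hv.1 fun h0 => h ?_
  rw [h0, ENNReal.ofReal_zero]

lemma ae_mem_nextLaw (hK : IsMarkovMatrix K) {φ : Measure (X → ℝ)}
    (hφ : ∀ᵐ v ∂φ, v ∈ stdSimplex ℝ X) : ∀ᵐ v ∂(nextLaw M K φ), v ∈ stdSimplex ℝ X := by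
  unfold nextLaw
  refine Measure.ae_smul_measure ?_ _
  rw [ae_iff, Measure.finsetSum_apply]
  refine Finset.sum_eq_zero fun Q _ => ?_
  rw [Measure.finsetSum_apply]
  exact Finset.sum_eq_zero fun q _ => ae_iff.1 (ae_mem_branchLaw hK hφ Q q)

lemma integral_branchLaw {φ : Measure (X → ℝ)} (hφ : ∀ᵐ v ∂φ, v ∈ stdSimplex ℝ X)
    {g : (X → ℝ) → ℝ} (hg : Measurable g) (Q : X → M) (q : M) :
    ∫ v, g v ∂(branchLaw K φ Q q) =
      ∫ v, (∑ x ∈ Finset.univ.filter (fun x => Q x = q), v x) * g (nextPred K v Q q) ∂φ := by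
  unfold branchLaw
  rw [integral_map (measurable_nextPred Q q).aemeasurable hg.aestronglyMeasurable,
    integral_withDensity_eq_integral_toReal_smul (measurable_cell Q q).ennreal_ofReal
      (Eventually.of_forall fun v => ENNReal.ofReal_lt_top)]
  refine integral_congr_ae ?_
  filter_upwards [hφ] with v hv
  rw [ENNReal.toReal_ofReal (cell_nonneg hv Q q), smul_eq_mul]

/-- Duality between the transition operator on functions and on measures. -/
lemma integral_nextLaw (hK : IsMarkovMatrix K) {φ : Measure (X → ℝ)} [IsFiniteMeasure φ]
    (hφ : ∀ᵐ v ∂φ, v ∈ stdSimplex ℝ X) {g : (X → ℝ) → ℝ} (hg : Measurable g) {B : ℝ}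
    (hB : ∀ v ∈ stdSimplex ℝ X, |g v| ≤ B) :
    ∫ v, g v ∂(nextLaw M K φ) = ∫ v, Tker M K g v ∂φ := by
  have hint : ∀ (Q : X → M) (q : M), Integrable g (branchLaw K φ Q q) := by
    intro Q q
    have := isFiniteMeasure_branchLaw (K := K) hφ Q q
    refine Integrable.of_bound hg.aestronglyMeasurable B ?_
    filter_upwards [ae_mem_branchLaw hK hφ Q q] with v hv using hB v hv
  have hint2 : ∀ (Q : X → M) (q : M), Integrable (fun v =>
      (∑ x ∈ Finset.univ.filter (fun x => Q x = q), v x) * g (nextPred K v Q q)) φ := by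
    intro Q q
    refine Integrable.of_bound
      ((measurable_cell Q q).mul (hg.comp (measurable_nextPred Q q))).aestronglyMeasurable B ?_
    filter_upwards [hφ] with v hv
    have hB0 : 0 ≤ B := (abs_nonneg _).trans (hB v hv)
    by_cases h : (∑ x ∈ Finset.univ.filter (fun x => Q x = q), v x) = 0
    · rw [h, zero_mul, norm_zero]; exact hB0
    · rw [norm_mul, Real.norm_of_nonneg (cell_nonneg hv Q q), Real.norm_eq_abs]
      calc _ ≤ 1 * B := mul_le_mul (cell_le_one hv Q q) (hB _ (nextPred_mem hK Q q hv.1 h))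
            (abs_nonneg _) zero_le_one
        _ = B := one_mul B
  unfold nextLaw Tker
  rw [integral_smul_measure, ENNReal.toReal_ofReal (by positivity), smul_eq_mul,
    integral_const_mul, integral_finsetSum_measure
      fun Q _ => integrable_finsetSum_measure.2 fun q _ => hint Q q,
    integral_finsetSum _ fun Q _ => integrable_finsetSum _ fun q _ => hint2 Q q]
  congr 1
  refine Finset.sum_congr rfl fun Q _ => ?_
  rw [integral_finsetSum_measure fun q _ => hint Q q,
    integral_finsetSum _ fun q _ => hint2 Q q]
  exact Finset.sum_congr rfl fun q _ => integral_branchLaw hφ hg Q q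

lemma isProbabilityMeasure_nextLaw [Nonempty M] (hK : IsMarkovMatrix K) {φ : Measure (X → ℝ)}
    [IsProbabilityMeasure φ] (hφ : ∀ᵐ v ∂φ, v ∈ stdSimplex ℝ X) :
    IsProbabilityMeasure (nextLaw M K φ) := by
  have h := integral_nextLaw (M := M) hK hφ (g := fun _ => 1) measurable_const (B := 1)
    (fun v _ => by simp)
  have h1 : ∫ v, Tker M K (fun _ => 1) v ∂φ = ∫ _v, (1 : ℝ) ∂φ := by
    refine integral_congr_ae ?_
    filter_upwards [hφ] with v hv
    simp only [Tker, mul_one, sum_cells, hv.2]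
    exact card_inv_mul 1
  rw [h1] at h
  rw [isProbabilityMeasure_iff_real]
  simpa using h

lemma iterate_nextLaw [Nonempty M] (hK : IsMarkovMatrix K) {φ : Measure (X → ℝ)}
    [IsProbabilityMeasure φ] (hφ : ∀ᵐ v ∂φ, v ∈ stdSimplex ℝ X) (n : ℕ) :
    IsProbabilityMeasure ((nextLaw M K)^[n] φ) ∧
      ∀ᵐ v ∂((nextLaw M K)^[n] φ), v ∈ stdSimplex ℝ X := by
  induction n with
  | zero => exact ⟨‹_›, hφ⟩
  | succ n ih =>
    rw [Function.iterate_succ_apply']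
    have := ih.1
    exact ⟨isProbabilityMeasure_nextLaw hK ih.2, ae_mem_nextLaw hK ih.2⟩

lemma abs_iterate_Tker_le [Nonempty M] (hK : IsMarkovMatrix K) {g : (X → ℝ) → ℝ} {B : ℝ}
    (hB : ∀ v ∈ stdSimplex ℝ X, |g v| ≤ B) (n : ℕ) :
    ∀ v ∈ stdSimplex ℝ X, |(Tker M K)^[n] g v| ≤ B := fun v hv =>
  abs_le.2 ⟨le_iterate_Tker_bound hK (fun v hv => (abs_le.1 (hB v hv)).1) n v hv,
    iterate_Tker_le_bound hK (fun v hv => (abs_le.1 (hB v hv)).2) n v hv⟩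

lemma integral_iterate_nextLaw [Nonempty M] (hK : IsMarkovMatrix K) (n : ℕ) :
    ∀ {φ : Measure (X → ℝ)} [IsProbabilityMeasure φ], (∀ᵐ v ∂φ, v ∈ stdSimplex ℝ X) →
    ∀ {g : (X → ℝ) → ℝ}, Measurable g → ∀ {B : ℝ}, (∀ v ∈ stdSimplex ℝ X, |g v| ≤ B) →
    ∫ v, g v ∂((nextLaw M K)^[n] φ) = ∫ v, (Tker M K)^[n] g v ∂φ := by
  induction n with
  | zero => intros; rfl
  | succ n ih =>
    intro φ _ hφ g hg B hB
    have := isProbabilityMeasure_nextLaw (M := M) hK hφ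
    rw [Function.iterate_succ_apply, ih (ae_mem_nextLaw hK hφ) hg hB,
      integral_nextLaw hK hφ (measurable_iterate_Tker hg n) (abs_iterate_Tker_le hK hB n),
      Function.iterate_succ_apply']

/-- Testing against bounded measurable functions amounts to the fixed-point equation on
measures. The latter can be iterated, whereas `Tker M K g` is in general unbounded off the
simplex and so is not itself an admissible test function. -/
lemma isPredInvariant_iff [Nonempty M] (hK : IsMarkovMatrix K) {φ : Measure (X → ℝ)} :
    IsPredInvariant M K φ ↔ IsProbabilityMeasure φ ∧ (∀ᵐ v ∂φ, v ∈ stdSimplex ℝ X) ∧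
      nextLaw M K φ = φ := by
  constructor
  · rintro ⟨hp, hs, h⟩
    refine ⟨hp, hs, ?_⟩
    have := isProbabilityMeasure_nextLaw (M := M) hK hs
    refine ext_of_forall_integral_eq_of_IsFiniteMeasure fun f => ?_
    have hb : ∀ v, |f v| ≤ ‖f‖ := fun v => f.norm_coe_le_norm v
    rw [integral_nextLaw hK hs f.continuous.measurable fun v _ => hb v]
    exact h f f.continuous.measurable ⟨_, hb⟩
  · rintro ⟨hp, hs, h⟩
    refine ⟨hp, hs, fun g hg ⟨C, hC⟩ => ?_⟩
    rw [← integral_nextLaw hK hs hg fun v _ => hC v, h]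

/-! ### Invariant measures -/

/-- Probability measures are determined by their integrals of bounded Lipschitz functions. -/
lemma measure_ext_of_lipschitz {μ ν : Measure (X → ℝ)} [hμ : IsProbabilityMeasure μ]
    [hν : IsProbabilityMeasure ν]
    (h : ∀ f : (X → ℝ) → ℝ, (∃ C : ℝ, ∀ x y, dist (f x) (f y) ≤ C) → (∃ L, LipschitzWith L f) →
      ∫ v, f v ∂μ = ∫ v, f v ∂ν) : μ = ν := by
  let μ' : ProbabilityMeasure (X → ℝ) := ⟨μ, hμ⟩
  let ν' : ProbabilityMeasure (X → ℝ) := ⟨ν, hν⟩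
  have h1 : Tendsto (fun _ : ℕ => μ') atTop (𝓝 ν') := by
    rw [tendsto_iff_forall_lipschitz_integral_tendsto]
    intro f hb hl
    have : ∫ v, f v ∂(μ' : Measure (X → ℝ)) = ∫ v, f v ∂(ν' : Measure (X → ℝ)) := h f hb hl
    rw [this]
    exact tendsto_const_nhds
  have h2 : μ' = ν' := tendsto_nhds_unique tendsto_const_nhds h1
  exact congrArg (fun ρ : ProbabilityMeasure (X → ℝ) => (ρ : Measure (X → ℝ))) h2

lemma coneLip_of_lipschitz {f : (X → ℝ) → ℝ} (hb : ∃ C : ℝ, ∀ x y, dist (f x) (f y) ≤ C)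
    (hl : ∃ L, LipschitzWith L f) :
    ∃ C B : ℝ, 0 ≤ C ∧ (∀ v, |f v| ≤ B) ∧ ConeLip C f := by
  obtain ⟨D, hD⟩ := hb
  obtain ⟨L, hL⟩ := hl
  have hB : ∀ v, |f v| ≤ |f 0| + D := by
    intro v
    have h1 := hD v 0
    rw [Real.dist_eq] at h1
    have h2 := abs_add_le (f v - f 0) (f 0)
    rw [sub_add_cancel] at h2
    linarith
  have hB0 : 0 ≤ |f 0| + D := (abs_nonneg _).trans (hB 0)
  refine ⟨2 * L + (|f 0| + D), |f 0| + D, by positivity, hB,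
    coneLip_of_bounded L.2 hB fun u v => ?_⟩
  have h1 := hL.dist_le_mul u v
  rw [Real.dist_eq] at h1
  refine h1.trans (mul_le_mul_of_nonneg_left ?_ L.2)
  refine (dist_pi_le_iff (Finset.sum_nonneg fun _ _ => abs_nonneg _)).2 fun x => ?_
  rw [Real.dist_eq]
  exact Finset.single_le_sum (f := fun x => |u x - v x|) (fun x _ => abs_nonneg _)
    (Finset.mem_univ x)

lemma ConeLip.continuousOn {C : ℝ} {g : (X → ℝ) → ℝ} (hg : ConeLip C g) :
    ContinuousOn g (stdSimplex ℝ X) := by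
  intro v hv
  rw [ContinuousWithinAt, tendsto_iff_dist_tendsto_zero]
  have h1 : Tendsto (fun u : X → ℝ => C * tvDist u v) (𝓝[stdSimplex ℝ X] v) (𝓝 0) := by
    have h2 : Continuous fun u : X → ℝ => C * tvDist u v := by
      unfold tvDist
      fun_prop
    have h3 := (h2.tendsto v).mono_left (nhdsWithin_le_nhds (s := stdSimplex ℝ X))
    simpa [tvDist] using h3
  refine squeeze_zero' (Eventually.of_forall fun _ => dist_nonneg) ?_ h1
  filter_upwards [self_mem_nhdsWithin] with u hu
  exact hg.abs_sub_le hu hv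

lemma integral_mem_Icc {φ : Measure (X → ℝ)} [IsProbabilityMeasure φ]
    (hφ : ∀ᵐ v ∂φ, v ∈ stdSimplex ℝ X) {g : (X → ℝ) → ℝ} (hg : Measurable g) {a b : ℝ}
    (h : ∀ v ∈ stdSimplex ℝ X, a ≤ g v ∧ g v ≤ b) :
    a ≤ ∫ v, g v ∂φ ∧ ∫ v, g v ∂φ ≤ b := by
  have hi : Integrable g φ := by
    refine Integrable.of_mem_Icc a b hg.aemeasurable ?_
    filter_upwards [hφ] with v hv using h v hv
  constructor
  · have := integral_mono_ae (integrable_const a) hi (μ := φ)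
      (by filter_upwards [hφ] with v hv using (h v hv).1)
    simpa using this
  · have := integral_mono_ae hi (integrable_const b) (μ := φ)
      (by filter_upwards [hφ] with v hv using (h v hv).2)
    simpa using this

/-- Two invariant laws give any bounded Lipschitz function the same integral, namely the
limit of its iterates. -/
lemma invariant_unique [Nonempty X] [Nonempty M] (hK : IsMarkovMatrix K)
    (hp : IsPrimitiveMat K) {φ ψ : Measure (X → ℝ)} (hφ : IsPredInvariant M K φ)
    (hψ : IsPredInvariant M K ψ) : φ = ψ := by
  rw [isPredInvariant_iff hK] at hφ hψ
  obtain ⟨_, hφs, hφi⟩ := hφ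
  obtain ⟨_, hψs, hψi⟩ := hψ
  refine measure_ext_of_lipschitz fun f hb hl => ?_
  have hm : Measurable f := hl.choose_spec.continuous.measurable
  obtain ⟨C, B, hC, hB, hf⟩ := coneLip_of_lipschitz hb hl
  refine eq_of_abs_sub_le_all fun η hη => ?_
  obtain ⟨N, a, hN⟩ := iterate_Tker_near_const (M := M) hK hp hC hf (fun v _ => hB v) hη
  have e1 := integral_iterate_nextLaw (M := M) hK N hφs hm fun v _ => hB v
  have e2 := integral_iterate_nextLaw (M := M) hK N hψs hm fun v _ => hB v
  rw [Function.iterate_fixed hφi] at e1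
  rw [Function.iterate_fixed hψi] at e2
  obtain ⟨h1, h2⟩ := integral_mem_Icc hφs (measurable_iterate_Tker hm N) (hN N le_rfl)
  obtain ⟨h3, h4⟩ := integral_mem_Icc hψs (measurable_iterate_Tker hm N) (hN N le_rfl)
  rw [e1, e2, abs_le]
  constructor <;> linarith

/-- Existence: a weak limit point of the laws of `π_n`, started from a point mass, is invariant,
because the integrals of `f` and of `Tker M K f` against these laws have the same limit. -/
lemma exists_invariant [Nonempty X] [Nonempty M] (hK : IsMarkovMatrix K)
    (hp : IsPrimitiveMat K) : ∃ φ : Measure (X → ℝ), IsPredInvariant M K φ := by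
  obtain ⟨v₀, hv₀⟩ : (stdSimplex ℝ X).Nonempty :=
    ⟨_, single_mem_stdSimplex ℝ (Classical.arbitrary X)⟩
  have hd : ∀ᵐ v ∂(Measure.dirac v₀), v ∈ stdSimplex ℝ X :=
    (ae_dirac_iff measurableSet_simplex).2 hv₀
  have hit := iterate_nextLaw (M := M) hK hd
  let μ : ℕ → ProbabilityMeasure (X → ℝ) := fun n => ⟨_, (hit n).1⟩
  have hμs : ∀ n, ∀ᵐ v ∂(μ n : Measure (X → ℝ)), v ∈ stdSimplex ℝ X := fun n => (hit n).2
  have hμ : ∀ {g : (X → ℝ) → ℝ}, Measurable g → ∀ {B : ℝ},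
      (∀ v ∈ stdSimplex ℝ X, |g v| ≤ B) → ∀ n, ∫ v, g v ∂(μ n : Measure (X → ℝ)) =
        (Tker M K)^[n] g v₀ := by
    intro g hg B hB n
    refine (integral_iterate_nextLaw hK n hd hg hB).trans ?_
    exact integral_dirac' _ _ (measurable_iterate_Tker hg n).stronglyMeasurable
  have hcomp := isCompact_setOfPred_probabilityMeasure_mass_eq_compl_isCompact_le
    (E := X → ℝ) (u := fun _ => 0) (K := fun _ => stdSimplex ℝ X) tendsto_const_nhds
    (fun _ => isCompact_stdSimplex ℝ X) (Or.inl inferInstance)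
  obtain ⟨φ, hφs, hφ⟩ := hcomp.ultrafilter_le_nhds ((hyperfilter ℕ).map μ) (by
    rw [le_principal_iff, Ultrafilter.mem_coe, Ultrafilter.mem_map]
    refine Filter.mem_of_superset Filter.univ_mem fun n _ _ => ?_
    exact (ProbabilityMeasure.null_iff_toMeasure_null _ _ |>.2 (hμs n)).le)
  have hφt : Tendsto μ (hyperfilter ℕ) (𝓝 φ) := hφ
  have hφs' : ∀ᵐ v ∂(φ : Measure (X → ℝ)), v ∈ stdSimplex ℝ X :=
    (ProbabilityMeasure.null_iff_toMeasure_null _ _).1 (le_antisymm (hφs 0) bot_le)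
  refine ⟨φ, (isPredInvariant_iff hK).2 ⟨inferInstance, hφs', ?_⟩⟩
  have := isProbabilityMeasure_nextLaw (M := M) hK hφs'
  refine measure_ext_of_lipschitz fun f hb hl => ?_
  have hm : Measurable f := hl.choose_spec.continuous.measurable
  obtain ⟨C, B, hC, hB, hf⟩ := coneLip_of_lipschitz hb hl
  rw [integral_nextLaw hK hφs' hm fun v _ => hB v]
  rw [ProbabilityMeasure.tendsto_iff_forall_integral_tendsto] at hφt
  -- weak convergence tests any function of the class, after a Tietze extension
  have htest : ∀ {g : (X → ℝ) → ℝ}, Measurable g → ConeLip C g →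
      (∀ v ∈ stdSimplex ℝ X, |g v| ≤ B) →
      Tendsto (fun n => (Tker M K)^[n] g v₀) (hyperfilter ℕ)
        (𝓝 (∫ v, g v ∂(φ : Measure (X → ℝ)))) := by
    intro g hgm hg hgB
    have : CompactSpace (stdSimplex ℝ X) := isCompact_iff_compactSpace.1 (isCompact_stdSimplex ℝ X)
    obtain ⟨G, -, hG⟩ := BoundedContinuousFunction.exists_norm_eq_domRestrict_eq_of_closed
      (BoundedContinuousFunction.mkOfCompact ⟨_, hg.continuousOn.domRestrict⟩)
      (isClosed_stdSimplex (𝕜 := ℝ) X)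
    have hGg : ∀ v ∈ stdSimplex ℝ X, G v = g v := fun v hv => DFunLike.congr_fun hG ⟨v, hv⟩
    have e : ∫ v, g v ∂(φ : Measure (X → ℝ)) = ∫ v, G v ∂(φ : Measure (X → ℝ)) :=
      integral_congr_ae (by filter_upwards [hφs'] with v hv using (hGg v hv).symm)
    rw [e]
    refine (hφt G).congr fun n => ?_
    rw [← hμ hgm hgB n]
    exact integral_congr_ae (by filter_upwards [hμs n] with v hv using hGg v hv)
  have h1 := htest hm hf fun v _ => hB v
  have h2 := htest (measurable_Tker (M := M) (K := K) hm) (hf.Tker hK hC)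
    (abs_iterate_Tker_le hK (fun v _ => hB v) 1)
  refine eq_of_abs_sub_le_all fun η hη => ?_
  obtain ⟨N, a, hN⟩ := iterate_Tker_near_const (M := M) hK hp hC hf (fun v _ => hB v) hη
  refine le_of_tendsto (h2.sub h1).abs ?_
  refine Filter.Eventually.filter_mono Nat.hyperfilter_le_atTop ?_
  filter_upwards [eventually_ge_atTop N] with n hn
  rw [← Function.iterate_succ_apply]
  obtain ⟨h3, h4⟩ := hN n hn v₀ hv₀
  obtain ⟨h5, h6⟩ := hN (n + 1) (by omega) v₀ hv₀
  rw [abs_le]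
  constructor <;> linarith

end Measures

/-- Under the uniform exploration policy, the predictor process, viewed
as a Markov chain on `P(𝕏)`, admits a unique invariant probability measure. -/
theorem stmt10 {X : Type*} (M : Type*)
    [Fintype X] [Nonempty X] [DecidableEq X]
    [Fintype M] [Nonempty M] [DecidableEq M]
    (K : X → X → ℝ) (hK : IsMarkovMatrix K) (hprim : IsPrimitiveMat K) :
    ∃! φ : Measure (X → ℝ), IsPredInvariant M K φ := by
  obtain ⟨φ, hφ⟩ := exists_invariant (M := M) hK hprim
  exact ⟨φ, hφ, fun ψ hψ => invariant_unique hK hprim hψ hφ⟩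
end
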